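/- Under the Viscous Setup, with additionally b > 2 and ρ̄ ≤ 1, let ω ∈ C_c^∞(ℝ) with ω(r) = 1 for r ∈ [0,1] and ω(r) = 0 for r ≥ 2. Then for any Δ ∈ (0,½) there exists a constant M > 0, depending only on n, γ, T, E₀ and ω but independent of Δ and ε, such that ε∫₀^T∫_a^b ρ_r² 𝟙_{{ρ<Δ}} ω(r)² r^{n−1} dr dt ≤ M(√ε(1 + Δ^{4−γ}) + Δ/a + Δ^{3/2}/√ε). -/

import Mathlib

open MeasureTheory Real Set

noncomputable section

/-- The internal energy function `h_δ(ρ) = κρ^γ/(γ-1) + δρ²`. -/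
def hDelta (γ κ δ ρ : ℝ) : ℝ := κ * ρ ^ γ / (γ - 1) + δ * ρ ^ (2 : ℕ)

/-- Its derivative `h_δ'(ρ̄) = κγρ̄^{γ-1}/(γ-1) + 2δρ̄`. -/
def hDelta' (γ κ δ ρbar : ℝ) : ℝ := κ * γ * ρbar ^ (γ - 1) / (γ - 1) + 2 * δ * ρbar

/-- Its second derivative `h_δ''(ρ) = κγρ^{γ-2} + 2δ`. -/
def hDelta'' (γ κ δ ρ : ℝ) : ℝ := κ * γ * ρ ^ (γ - 2) + 2 * δ

/-- The relative internal energy `h̄_δ(ρ,ρ̄) = h_δ(ρ) − h_δ(ρ̄) − h_δ'(ρ̄)(ρ−ρ̄)`. -/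
def hBarDelta (γ κ δ ρ ρbar : ℝ) : ℝ :=
  hDelta γ κ δ ρ - hDelta γ κ δ ρbar - hDelta' γ κ δ ρbar * (ρ - ρbar)

/-- The Viscous Setup: `n ≥ 2`, `γ > 1`, `κ = (γ−1)²/(4γ)`, `p_δ(ρ) = κρ^γ + δρ²`;
`T > 0`, `ε > 0`, `δ > 0`, `0 < a < 1 < b`, `ρ̄ > 0`; smooth functions `(ρ, m)` on
`[0,T]×[a,b]` with `ρ ≥ c_ε > 0` and `u = m/ρ`, satisfying the viscous system
`(r^{n−1}ρ)_t + (r^{n−1}m)_r = ε(r^{n−1}ρ_r)_r`,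
`(r^{n−1}m)_t + (r^{n−1}m²/ρ)_r + r^{n−1}(p_δ(ρ))_r
  = ε(r^{n−1}m)_{rr} − ε((n−1)/r)(r^{n−1}m)_r` on `(0,T)×(a,b)`,
the boundary conditions `ρ_r(t,a) = 0`, `m(t,a) = 0`, `ρ(t,b) = ρ̄`, `m(t,b) = 0`,
and the energy estimate with total energy bound `E₀`. -/
structure ViscousSetup (n : ℕ) (γ T E₀ : ℝ) where
  ε : ℝ
  δ : ℝ
  a : ℝ
  b : ℝ
  ρbar : ℝ
  cε : ℝ
  ρ : ℝ → ℝ → ℝ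
  m : ℝ → ℝ → ℝ
  hn : 2 ≤ n
  hγ : 1 < γ
  hT : 0 < T
  hε : 0 < ε
  hδ : 0 < δ
  ha0 : 0 < a
  ha1 : a < 1
  hb : 1 < b
  hρbar : 0 < ρbar
  hcε : 0 < cε
  smooth_ρ : ContDiff ℝ (⊤ : ℕ∞) (Function.uncurry ρ)
  smooth_m : ContDiff ℝ (⊤ : ℕ∞) (Function.uncurry m)
  pos : ∀ t ∈ Set.Icc 0 T, ∀ r ∈ Set.Icc a b, cε ≤ ρ t r
  continuity_eq : ∀ t ∈ Set.Ioo 0 T, ∀ r ∈ Set.Ioo a b,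
    r ^ (n - 1) * deriv (fun s => ρ s r) t + deriv (fun y => y ^ (n - 1) * m t y) r
      = ε * deriv (fun y => y ^ (n - 1) * deriv (fun z => ρ t z) y) r
  momentum_eq : ∀ t ∈ Set.Ioo 0 T, ∀ r ∈ Set.Ioo a b,
    r ^ (n - 1) * deriv (fun s => m s r) t
      + deriv (fun y => y ^ (n - 1) * (m t y) ^ (2:ℕ) / ρ t y) r
      + r ^ (n - 1) * deriv (fun y =>
          (γ - 1) ^ (2:ℕ) / (4 * γ) * (ρ t y) ^ γ + δ * (ρ t y) ^ (2:ℕ)) r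
      = ε * deriv (fun y => deriv (fun z => z ^ (n - 1) * m t z) y) r
        - ε * ((n - 1 : ℝ) / r) * deriv (fun y => y ^ (n - 1) * m t y) r
  bc_ρr : ∀ t ∈ Set.Icc 0 T, deriv (fun y => ρ t y) a = 0
  bc_ma : ∀ t ∈ Set.Icc 0 T, m t a = 0
  bc_ρb : ∀ t ∈ Set.Icc 0 T, ρ t b = ρbar
  bc_mb : ∀ t ∈ Set.Icc 0 T, m t b = 0
  energy : ∀ t ∈ Set.Icc 0 T,
    (∫ r in Set.Ioo a b,
      ((1/2) * ρ t r * (m t r / ρ t r) ^ (2:ℕ)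
        + hBarDelta γ ((γ - 1) ^ (2:ℕ) / (4 * γ)) δ (ρ t r) ρbar) * r ^ (n - 1))
    + ε * ∫ s in Set.Ioo 0 T, ∫ r in Set.Ioo a b,
        (hDelta'' γ ((γ - 1) ^ (2:ℕ) / (4 * γ)) δ (ρ s r) * (deriv (fun y => ρ s y) r) ^ (2:ℕ)
          + ρ s r * (deriv (fun y => m s y / ρ s y) r) ^ (2:ℕ)
          + (n - 1 : ℝ) * ρ s r * (m s r / ρ s r) ^ (2:ℕ) / r ^ (2:ℕ)) * r ^ (n - 1)
      ≤ E₀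

/-- The closed space-time rectangle `[0,T] × [a,b]`. -/
def rect (T a b : ℝ) : Set (ℝ × ℝ) := Icc 0 T ×ˢ Icc a b

lemma isCompact_rect (T a b : ℝ) : IsCompact (rect T a b) := isCompact_Icc.prod isCompact_Icc

lemma measurableSet_rect (T a b : ℝ) : MeasurableSet (rect T a b) :=
  measurableSet_Icc.prod measurableSet_Icc

lemma mem_rect {T a b t r : ℝ} (ht : t ∈ Icc 0 T) (hr : r ∈ Icc a b) : (t, r) ∈ rect T a b :=
  ⟨ht, hr⟩

lemma integrableOn_rect {T a b : ℝ} {f : ℝ × ℝ → ℝ} (hf : ContinuousOn f (rect T a b)) :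
    IntegrableOn f (rect T a b) := hf.integrableOn_compact (isCompact_rect T a b)

lemma continuousOn_slice_right {T a b t : ℝ} {f : ℝ × ℝ → ℝ} (hf : ContinuousOn f (rect T a b))
    (ht : t ∈ Icc 0 T) : ContinuousOn (fun r => f (t, r)) (Icc a b) :=
  hf.comp (by fun_prop) (fun _ hr => mem_rect ht hr)

lemma continuousOn_slice_left {T a b r : ℝ} {f : ℝ × ℝ → ℝ} (hf : ContinuousOn f (rect T a b))
    (hr : r ∈ Icc a b) : ContinuousOn (fun t => f (t, r)) (Icc 0 T) :=
  hf.comp (by fun_prop) (fun _ ht => mem_rect ht hr)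

lemma integral_rect {T a b : ℝ} {f : ℝ × ℝ → ℝ} (hf : ContinuousOn f (rect T a b))
    (hT : 0 ≤ T) (hab : a ≤ b) :
    ∫ x in rect T a b, f x = ∫ t in (0)..T, ∫ r in a..b, f (t, r) := by
  unfold rect
  rw [Measure.volume_eq_prod, setIntegral_prod f (integrableOn_rect hf),
    integral_Icc_eq_integral_Ioc, intervalIntegral.integral_of_le hT]
  refine setIntegral_congr_fun measurableSet_Ioc fun t _ => ?_
  simp only [intervalIntegral.integral_of_le hab, integral_Icc_eq_integral_Ioc]

lemma integral_rect_swap {T a b : ℝ} {f : ℝ × ℝ → ℝ} (hf : ContinuousOn f (rect T a b))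
    (hT : 0 ≤ T) (hab : a ≤ b) :
    ∫ x in rect T a b, f x = ∫ r in a..b, ∫ t in (0)..T, f (t, r) := by
  unfold rect
  have h2 : IntegrableOn (fun z : ℝ × ℝ => f z.swap) (Icc a b ×ˢ Icc 0 T)
      (volume.prod volume) := by
    rw [← Measure.volume_eq_prod]
    refine ContinuousOn.integrableOn_compact (isCompact_Icc.prod isCompact_Icc) ?_
    exact hf.comp (by fun_prop) (fun z hz => ⟨hz.2, hz.1⟩)
  rw [Measure.volume_eq_prod, ← setIntegral_prod_swap, setIntegral_prod _ h2,
    integral_Icc_eq_integral_Ioc, intervalIntegral.integral_of_le hab]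
  refine setIntegral_congr_fun measurableSet_Ioc fun t _ => ?_
  simp only [intervalIntegral.integral_of_le hT, integral_Icc_eq_integral_Ioc, Prod.swap_prod_mk]

lemma rect_mono {T a b : ℝ} {f g : ℝ × ℝ → ℝ} (hf : ContinuousOn f (rect T a b))
    (hg : ContinuousOn g (rect T a b)) (h : ∀ x ∈ rect T a b, f x ≤ g x) :
    ∫ x in rect T a b, f x ≤ ∫ x in rect T a b, g x :=
  setIntegral_mono_on (integrableOn_rect hf) (integrableOn_rect hg) (measurableSet_rect T a b) h

lemma rect_nonneg {T a b : ℝ} {f : ℝ × ℝ → ℝ} (h : ∀ x ∈ rect T a b, 0 ≤ f x) :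
    0 ≤ ∫ x in rect T a b, f x :=
  setIntegral_nonneg (measurableSet_rect T a b) h

lemma rect_add {T a b : ℝ} {f g : ℝ × ℝ → ℝ} (hf : ContinuousOn f (rect T a b))
    (hg : ContinuousOn g (rect T a b)) :
    ∫ x in rect T a b, (f x + g x) = (∫ x in rect T a b, f x) + ∫ x in rect T a b, g x :=
  integral_add (integrableOn_rect hf) (integrableOn_rect hg)

lemma rect_sub {T a b : ℝ} {f g : ℝ × ℝ → ℝ} (hf : ContinuousOn f (rect T a b))
    (hg : ContinuousOn g (rect T a b)) :
    ∫ x in rect T a b, (f x - g x) = (∫ x in rect T a b, f x) - ∫ x in rect T a b, g x :=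
  integral_sub (integrableOn_rect hf) (integrableOn_rect hg)

lemma rect_congr {T a b : ℝ} {f g : ℝ × ℝ → ℝ} (h : ∀ x ∈ rect T a b, f x = g x) :
    ∫ x in rect T a b, f x = ∫ x in rect T a b, g x :=
  setIntegral_congr_fun (measurableSet_rect T a b) h

lemma rect_subset_mono {T a b b' : ℝ} {f : ℝ × ℝ → ℝ} (hf : ContinuousOn f (rect T a b))
    (h : ∀ x ∈ rect T a b, 0 ≤ f x) (hb : b' ≤ b) :
    ∫ x in rect T a b', f x ≤ ∫ x in rect T a b, f x := by
  refine setIntegral_mono_set (integrableOn_rect hf) ?_ ?_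
  · exact (ae_restrict_iff' (measurableSet_rect T a b)).2 (Filter.Eventually.of_forall h)
  · exact (prod_mono_right (Icc_subset_Icc_right hb)).eventuallyLE

lemma intervalIntegrable_of_continuousOn_Icc {a b : ℝ} (hab : a ≤ b) {f : ℝ → ℝ}
    (hf : ContinuousOn f (Icc a b)) : IntervalIntegrable f volume a b :=
  ContinuousOn.intervalIntegrable (by rwa [uIcc_of_le hab])

/-- A bound for every time slice gives a bound for the space-time integral. -/
lemma rect_le_of_slice_le {T a b : ℝ} {C : ℝ → ℝ} {f : ℝ × ℝ → ℝ}
    (hf : ContinuousOn f (rect T a b)) (hT : 0 ≤ T) (hab : a ≤ b) (hC : Continuous C)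
    (h : ∀ t ∈ Icc 0 T, ∫ r in a..b, f (t, r) ≤ C t) :
    ∫ x in rect T a b, f x ≤ ∫ t in (0)..T, C t := by
  have hi := integrableOn_rect hf
  have h1 : IntervalIntegrable (fun t => ∫ r in a..b, f (t, r)) volume 0 T := by
    rw [intervalIntegrable_iff_integrableOn_Icc_of_le hT]
    unfold rect at hi
    rw [IntegrableOn, Measure.volume_eq_prod, ← Measure.prod_restrict] at hi
    refine (hi.integral_prod_left).congr (Filter.Eventually.of_forall fun t => ?_)
    simp only [intervalIntegral.integral_of_le hab, integral_Icc_eq_integral_Ioc]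
  rw [integral_rect hf hT hab]
  exact intervalIntegral.integral_mono_on hT h1 (hC.intervalIntegrable 0 T) h

lemma rect_le_of_slice {T a b C : ℝ} {f : ℝ × ℝ → ℝ} (hf : ContinuousOn f (rect T a b))
    (hT : 0 ≤ T) (hab : a ≤ b) (h : ∀ t ∈ Icc 0 T, ∫ r in a..b, f (t, r) ≤ C) :
    ∫ x in rect T a b, f x ≤ T * C := by
  simpa using rect_le_of_slice_le hf hT hab (C := fun _ => C) continuous_const h

lemma rect_dt {T a b : ℝ} {A At : ℝ × ℝ → ℝ} (hAt : ContinuousOn At (rect T a b))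
    (hT : 0 ≤ T) (hab : a ≤ b)
    (h : ∀ t ∈ Icc 0 T, ∀ r ∈ Icc a b, HasDerivAt (fun s => A (s, r)) (At (t, r)) t) :
    ∫ x in rect T a b, At x = ∫ r in a..b, (A (T, r) - A (0, r)) := by
  rw [integral_rect_swap hAt hT hab]
  refine intervalIntegral.integral_congr fun r hr => ?_
  rw [uIcc_of_le hab] at hr
  refine intervalIntegral.integral_eq_sub_of_hasDerivAt (f := fun s => A (s, r)) (fun t ht => ?_)
    (intervalIntegrable_of_continuousOn_Icc hT (continuousOn_slice_left hAt hr))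
  rw [uIcc_of_le hT] at ht
  exact h t ht r hr

lemma rect_dr {T a b : ℝ} {B Br : ℝ × ℝ → ℝ} (hBr : ContinuousOn Br (rect T a b))
    (hT : 0 ≤ T) (hab : a ≤ b)
    (h : ∀ t ∈ Icc 0 T, ∀ r ∈ Icc a b, HasDerivAt (fun s => B (t, s)) (Br (t, r)) r) :
    ∫ x in rect T a b, Br x = ∫ t in (0)..T, (B (t, b) - B (t, a)) := by
  rw [integral_rect hBr hT hab]
  refine intervalIntegral.integral_congr fun t ht => ?_
  rw [uIcc_of_le hT] at ht
  refine intervalIntegral.integral_eq_sub_of_hasDerivAt (f := fun s => B (t, s)) (fun r hr => ?_)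
    (intervalIntegrable_of_continuousOn_Icc hab (continuousOn_slice_right hBr ht))
  rw [uIcc_of_le hab] at hr
  exact h t ht r hr

/-- The divergence theorem on a space-time rectangle. -/
lemma rect_div {T a b : ℝ} {A At B Br f : ℝ × ℝ → ℝ} (hAt : ContinuousOn At (rect T a b))
    (hBr : ContinuousOn Br (rect T a b)) (hT : 0 ≤ T) (hab : a ≤ b)
    (hA : ∀ t ∈ Icc 0 T, ∀ r ∈ Icc a b, HasDerivAt (fun s => A (s, r)) (At (t, r)) t)
    (hB : ∀ t ∈ Icc 0 T, ∀ r ∈ Icc a b, HasDerivAt (fun s => B (t, s)) (Br (t, r)) r)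
    (hf : ∀ t ∈ Icc 0 T, ∀ r ∈ Icc a b, f (t, r) = At (t, r) + Br (t, r)) :
    ∫ x in rect T a b, f x
      = (∫ r in a..b, (A (T, r) - A (0, r))) + ∫ t in (0)..T, (B (t, b) - B (t, a)) := by
  rw [← rect_dt hAt hT hab hA, ← rect_dr hBr hT hab hB, ← rect_add hAt hBr]
  exact rect_congr fun x hx => hf x.1 hx.1 x.2 hx.2

/-- The causal exponential average `∫₀ᵗ e^{-K(t-s)} H(s,r) ds`. -/
def timeFilter (K : ℝ) (H : ℝ × ℝ → ℝ) (x : ℝ × ℝ) : ℝ :=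
  exp (-(K * x.1)) * ∫ s in (0)..x.1, exp (K * s) * H (s, x.2)

lemma continuous_timeFilter {K : ℝ} {H : ℝ × ℝ → ℝ} (hH : Continuous H) :
    Continuous (timeFilter K H) := by
  unfold timeFilter
  have : Continuous fun x : ℝ × ℝ => ∫ s in (0)..x.1, exp (K * s) * H (s, x.2) := by
    apply intervalIntegral.continuous_parametric_intervalIntegral_of_continuous
      (f := fun (x : ℝ × ℝ) s => exp (K * s) * H (s, x.2)) ?_ continuous_fst
    simp only [Function.uncurry_def]
    fun_prop
  fun_prop

lemma timeFilter_zero (K : ℝ) (H : ℝ × ℝ → ℝ) (r : ℝ) : timeFilter K H (0, r) = 0 := by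
  simp [timeFilter]

lemma hasDerivAt_timeFilter_time {K : ℝ} {H : ℝ × ℝ → ℝ} (hH : Continuous H) (t r : ℝ) :
    HasDerivAt (fun s => timeFilter K H (s, r)) (H (t, r) - K * timeFilter K H (t, r)) t := by
  have h1 : HasDerivAt (fun t => ∫ s in (0)..t, exp (K * s) * H (s, r))
      (exp (K * t) * H (t, r)) t := by
    apply intervalIntegral.integral_hasDerivAt_right
    · exact Continuous.intervalIntegrable (by fun_prop) _ _
    · exact Continuous.stronglyMeasurableAtFilter (by fun_prop) _ _
    · fun_prop
  have h2 : HasDerivAt (fun t => exp (-(K * t))) (exp (-(K * t)) * -(K * 1)) t :=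
    (((hasDerivAt_id t).const_mul K).neg).exp
  have h3 := h2.mul h1
  refine h3.congr_deriv ?_
  have : exp (-(K * t)) * exp (K * t) = 1 := by rw [← exp_add]; simp
  simp only [timeFilter]
  linear_combination H (t, r) * this

lemma hasDerivAt_timeFilter_space {K : ℝ} {H Hr : ℝ × ℝ → ℝ} (hH : Continuous H)
    (hHr : Continuous Hr) (h : ∀ t r, HasDerivAt (fun y => H (t, y)) (Hr (t, r)) r) (t r : ℝ) :
    HasDerivAt (fun y => timeFilter K H (t, y)) (timeFilter K Hr (t, r)) r := by
  unfold timeFilter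
  refine HasDerivAt.const_mul (exp (-(K * t))) ?_
  obtain ⟨C, hC⟩ := ((isCompact_uIcc (a := (0 : ℝ)) (b := t)).prod
    (isCompact_closedBall r 1)).exists_bound_of_continuousOn
      (f := fun x : ℝ × ℝ => exp (K * x.1) * Hr (x.1, x.2)) (by fun_prop)
  refine (intervalIntegral.hasDerivAt_integral_of_dominated_loc_of_deriv_le
    (F := fun y s => exp (K * s) * H (s, y)) (F' := fun y s => exp (K * s) * Hr (s, y))
    (bound := fun _ => C) (Metric.closedBall_mem_nhds r one_pos) ?_ ?_ ?_ ?_ ?_ ?_).2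
  · exact Filter.Eventually.of_forall fun y =>
      (Continuous.aestronglyMeasurable (by fun_prop))
  · exact Continuous.intervalIntegrable (by fun_prop) _ _
  · exact Continuous.aestronglyMeasurable (by fun_prop)
  · exact Filter.Eventually.of_forall fun s hs y hy => hC (s, y) ⟨uIoc_subset_uIcc hs, hy⟩
  · exact intervalIntegrable_const
  · exact Filter.Eventually.of_forall fun s _ y _ => (h s y).const_mul _

lemma timeFilter_deriv {K : ℝ} {W Wt : ℝ × ℝ → ℝ} (hW : Continuous W) (hWt : Continuous Wt)
    (h : ∀ t r, HasDerivAt (fun s => W (s, r)) (Wt (t, r)) t) (t r : ℝ) :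
    timeFilter K Wt (t, r)
      = W (t, r) - exp (-(K * t)) * W (0, r) - K * timeFilter K W (t, r) := by
  have h1 : ∀ s, HasDerivAt (fun s => exp (K * s) * W (s, r))
      (K * (exp (K * s) * W (s, r)) + exp (K * s) * Wt (s, r)) s := fun s => by
    refine ((((hasDerivAt_id s).const_mul K).exp).mul (h s r)).congr_deriv ?_
    simp only [id]
    ring
  have h2 := intervalIntegral.integral_eq_sub_of_hasDerivAt (fun s (_ : s ∈ uIcc 0 t) => h1 s)
    (Continuous.intervalIntegrable (by fun_prop) _ _)
  rw [intervalIntegral.integral_add (Continuous.intervalIntegrable (by fun_prop) _ _)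
    (Continuous.intervalIntegrable (by fun_prop) _ _), intervalIntegral.integral_const_mul] at h2
  have : exp (-(K * t)) * exp (K * t) = 1 := by rw [← exp_add]; simp
  simp only [mul_zero, exp_zero, one_mul] at h2
  simp only [timeFilter]
  linear_combination exp (-(K * t)) * h2 + W (t, r) * this

lemma timeFilter_congr {K : ℝ} {H H' : ℝ × ℝ → ℝ} {t r : ℝ} (ht : 0 ≤ t)
    (h : ∀ s ∈ Icc 0 t, H (s, r) = H' (s, r)) : timeFilter K H (t, r) = timeFilter K H' (t, r) := by
  simp only [timeFilter]
  congr 1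
  refine intervalIntegral.integral_congr fun s hs => ?_
  rw [uIcc_of_le ht] at hs
  simp only [h s hs]

lemma timeFilter_add {K : ℝ} {H H' : ℝ × ℝ → ℝ} (hH : Continuous H) (hH' : Continuous H')
    (x : ℝ × ℝ) : timeFilter K (fun x => H x + H' x) x = timeFilter K H x + timeFilter K H' x := by
  simp only [timeFilter, mul_add]
  rw [intervalIntegral.integral_add (Continuous.intervalIntegrable (by fun_prop) _ _)
    (Continuous.intervalIntegrable (by fun_prop) _ _), mul_add]

lemma timeFilter_coeff_mul (K : ℝ) (c : ℝ → ℝ) (H : ℝ × ℝ → ℝ) (x : ℝ × ℝ) :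
    timeFilter K (fun x => c x.2 * H x) x = c x.2 * timeFilter K H x := by
  simp only [timeFilter, mul_left_comm _ (c x.2), intervalIntegral.integral_const_mul]

lemma timeFilter_mono {K : ℝ} {H H' : ℝ × ℝ → ℝ} (hH : Continuous H) (hH' : Continuous H')
    {t r : ℝ} (ht : 0 ≤ t) (h : ∀ s ∈ Icc 0 t, H (s, r) ≤ H' (s, r)) :
    timeFilter K H (t, r) ≤ timeFilter K H' (t, r) := by
  simp only [timeFilter]
  refine mul_le_mul_of_nonneg_left ?_ (exp_pos _).le
  exact intervalIntegral.integral_mono_on ht (Continuous.intervalIntegrable (by fun_prop) _ _)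
    (Continuous.intervalIntegrable (by fun_prop) _ _)
    fun s hs => mul_le_mul_of_nonneg_left (h s hs) (exp_pos _).le

lemma timeFilter_neg (K : ℝ) (H : ℝ × ℝ → ℝ) (x : ℝ × ℝ) :
    timeFilter K (fun x => -H x) x = -timeFilter K H x := by
  simpa using timeFilter_coeff_mul K (fun _ => -1) H x

lemma timeFilter_nonneg {K : ℝ} {H : ℝ × ℝ → ℝ} {t r : ℝ} (ht : 0 ≤ t)
    (h : ∀ s ∈ Icc 0 t, 0 ≤ H (s, r)) : 0 ≤ timeFilter K H (t, r) :=
  mul_nonneg (exp_pos _).le (intervalIntegral.integral_nonneg ht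
    fun s hs => mul_nonneg (exp_pos _).le (h s hs))

lemma abs_timeFilter_le {K : ℝ} {H : ℝ × ℝ → ℝ} (hH : Continuous H) {t r : ℝ} (ht : 0 ≤ t) :
    |timeFilter K H (t, r)| ≤ timeFilter K (fun x => |H x|) (t, r) := by
  rw [abs_le, ← timeFilter_neg]
  exact ⟨timeFilter_mono (by fun_prop) hH ht fun s _ => neg_abs_le _,
    timeFilter_mono hH (by fun_prop) ht fun s _ => le_abs_self _⟩

lemma mul_timeFilter_const_le {K M : ℝ} (hM : 0 ≤ M) (t r : ℝ) :
    K * timeFilter K (fun _ => M) (t, r) ≤ M := by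
  have h := timeFilter_deriv (K := K) (W := fun _ => M) (Wt := fun _ => 0) continuous_const
    continuous_const (fun t _ => hasDerivAt_const t M) t r
  have h0 : timeFilter K (fun _ => 0) (t, r) = 0 := by simp [timeFilter]
  rw [h0] at h
  have := mul_nonneg (exp_pos (-(K * t))).le hM
  linarith

lemma mul_abs_timeFilter_le {K M : ℝ} (hK : 0 ≤ K) (hM : 0 ≤ M) {H : ℝ × ℝ → ℝ}
    (hH : Continuous H) {t r : ℝ} (ht : 0 ≤ t) (h : ∀ s ∈ Icc 0 t, |H (s, r)| ≤ M) :
    K * |timeFilter K H (t, r)| ≤ M := by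
  refine le_trans (mul_le_mul_of_nonneg_left ((abs_timeFilter_le hH ht).trans ?_) hK)
    (mul_timeFilter_const_le (K := K) hM t r)
  exact timeFilter_mono (by fun_prop) continuous_const ht h

/-- The `L¹` bound for the time filter. -/
lemma mul_rect_timeFilter_le {K T a b : ℝ} {H : ℝ × ℝ → ℝ} {k : ℝ → ℝ} (hT : 0 ≤ T) (hab : a ≤ b)
    (hH : Continuous H) (hk : Continuous k) (hk0 : ∀ r ∈ Icc a b, 0 ≤ k r)
    (hH0 : ∀ x, 0 ≤ H x) :
    K * ∫ x in rect T a b, k x.2 * timeFilter K H x ≤ ∫ x in rect T a b, k x.2 * H x := by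
  have hF := continuous_timeFilter (K := K) hH
  have h := rect_dt (T := T) (A := fun x => k x.2 * timeFilter K H x)
    (At := fun x => k x.2 * H x - K * (k x.2 * timeFilter K H x)) (by fun_prop) hT hab
    (fun t _ r _ => ((hasDerivAt_timeFilter_time hH t r).const_mul (k r)).congr_deriv (by ring))
  rw [rect_sub (by fun_prop) (by fun_prop), integral_const_mul] at h
  have : 0 ≤ ∫ r in a..b, (k r * timeFilter K H (T, r) - k r * timeFilter K H (0, r)) := by
    refine intervalIntegral.integral_nonneg hab fun r hr => ?_
    rw [timeFilter_zero, mul_zero, sub_zero]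
    exact mul_nonneg (hk0 r hr) (timeFilter_nonneg hT fun s _ => hH0 _)
  linarith

/-- The `L²` bound for the time filter. -/
lemma sq_mul_rect_timeFilter_sq_le {K T a b : ℝ} {H : ℝ × ℝ → ℝ} {k : ℝ → ℝ} (hK : 0 < K)
    (hT : 0 ≤ T) (hab : a ≤ b) (hH : Continuous H) (hk : Continuous k)
    (hk0 : ∀ r ∈ Icc a b, 0 ≤ k r) :
    K ^ 2 * ∫ x in rect T a b, k x.2 * timeFilter K H x ^ 2
      ≤ ∫ x in rect T a b, k x.2 * H x ^ 2 := by
  have hF := continuous_timeFilter (K := K) hH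
  have h := rect_dt (T := T) (A := fun x => k x.2 * timeFilter K H x ^ 2)
    (At := fun x => k x.2 * (2 * timeFilter K H x * (H x - K * timeFilter K H x)))
    (by fun_prop) hT hab
    (fun t _ r _ => (((hasDerivAt_timeFilter_time hH t r).pow 2).const_mul (k r)).congr_deriv
      (by ring))
  have h0 : 0 ≤ ∫ r in a..b, (k r * timeFilter K H (T, r) ^ 2 - k r * timeFilter K H (0, r) ^ 2) := by
    refine intervalIntegral.integral_nonneg hab fun r hr => ?_
    rw [timeFilter_zero]
    have := mul_nonneg (hk0 r hr) (sq_nonneg (timeFilter K H (T, r)))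
    linarith
  rw [← h] at h0
  have h1 : ∫ x in rect T a b, (k x.2 * (2 * timeFilter K H x * (H x - K * timeFilter K H x)))
      ≤ ∫ x in rect T a b, (K⁻¹ * (k x.2 * H x ^ 2) - K * (k x.2 * timeFilter K H x ^ 2)) := by
    refine rect_mono (by fun_prop) (by fun_prop) fun x hx => ?_
    have := mul_nonneg (mul_nonneg (hk0 x.2 hx.2) (inv_pos.2 hK).le)
      (sq_nonneg (H x - K * timeFilter K H x))
    have hKK : K⁻¹ * K = 1 := inv_mul_cancel₀ hK.ne'
    have e : k x.2 * K⁻¹ * (H x - K * timeFilter K H x) ^ 2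
      = K⁻¹ * (k x.2 * H x ^ 2) - K * (k x.2 * timeFilter K H x ^ 2)
        - (k x.2 * (2 * timeFilter K H x * (H x - K * timeFilter K H x))) := by
      linear_combination (k x.2 * (-2 * H x * timeFilter K H x + K * timeFilter K H x ^ 2)) * hKK
    linarith
  rw [rect_sub (by fun_prop) (by fun_prop), integral_const_mul, integral_const_mul] at h1
  have h2 : K * ∫ x in rect T a b, k x.2 * timeFilter K H x ^ 2
      ≤ K⁻¹ * ∫ x in rect T a b, k x.2 * H x ^ 2 := by linarith
  calc _ = K * (K * ∫ x in rect T a b, k x.2 * timeFilter K H x ^ 2) := by ring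
    _ ≤ K * (K⁻¹ * ∫ x in rect T a b, k x.2 * H x ^ 2) := mul_le_mul_of_nonneg_left h2 hK.le
    _ = _ := by field_simp

/-- The pointwise-in-time `L²` bound for the time filter. -/
lemma sq_mul_integral_timeFilter_sq_le {K T a b B : ℝ} {H : ℝ × ℝ → ℝ} {k : ℝ → ℝ} (hK : 0 < K)
    (hT : 0 ≤ T) (hab : a ≤ b) (hH : Continuous H) (hk : Continuous k)
    (hk0 : ∀ r ∈ Icc a b, 0 ≤ k r) (hB0 : 0 ≤ B)
    (hB : ∀ t ∈ Icc 0 T, ∫ r in a..b, k r * H (t, r) ^ 2 ≤ B) :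
    K ^ 2 * ∫ r in a..b, k r * timeFilter K H (T, r) ^ 2 ≤ B := by
  have hF := continuous_timeFilter (K := K) hH
  have h := rect_dt (T := T) (A := fun x => exp (K * x.1) * (k x.2 * timeFilter K H x ^ 2))
    (At := fun x => exp (K * x.1) * (k x.2 *
      (2 * timeFilter K H x * H x - K * timeFilter K H x ^ 2)))
    (by fun_prop) hT hab
    (fun t _ r _ => ((((hasDerivAt_id t).const_mul K).exp).mul
      (((hasDerivAt_timeFilter_time hH t r).pow 2).const_mul (k r))).congr_deriv
      (by simp only [id, Pi.pow_apply]; ring))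
  have h1 : ∫ x in rect T a b, exp (K * x.1) * (k x.2 *
      (2 * timeFilter K H x * H x - K * timeFilter K H x ^ 2))
      ≤ ∫ x in rect T a b, K⁻¹ * (exp (K * x.1) * (k x.2 * H x ^ 2)) := by
    refine rect_mono (by fun_prop) (by fun_prop) fun x hx => ?_
    have := mul_nonneg (mul_nonneg (exp_pos (K * x.1)).le (mul_nonneg (hk0 x.2 hx.2)
      (inv_pos.2 hK).le)) (sq_nonneg (H x - K * timeFilter K H x))
    have hKK : K⁻¹ * K = 1 := inv_mul_cancel₀ hK.ne'
    have e : exp (K * x.1) * (k x.2 * K⁻¹) * (H x - K * timeFilter K H x) ^ 2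
      = K⁻¹ * (exp (K * x.1) * (k x.2 * H x ^ 2)) - exp (K * x.1) * (k x.2 *
      (2 * timeFilter K H x * H x - K * timeFilter K H x ^ 2)) := by
      linear_combination (exp (K * x.1) * k x.2 *
        (-2 * H x * timeFilter K H x + K * timeFilter K H x ^ 2)) * hKK
    linarith
  have h2 : ∫ x in rect T a b, exp (K * x.1) * (k x.2 * H x ^ 2)
      ≤ ∫ t in (0)..T, exp (K * t) * B := by
    refine rect_le_of_slice_le (by fun_prop) hT hab (by fun_prop) fun t ht => ?_
    simp only
    rw [intervalIntegral.integral_const_mul]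
    exact mul_le_mul_of_nonneg_left (hB t ht) (exp_pos _).le
  have h3 : ∫ t in (0)..T, exp (K * t) * B = K⁻¹ * (exp (K * T) - 1) * B := by
    rw [intervalIntegral.integral_mul_const, intervalIntegral.integral_comp_mul_left _ hK.ne',
      integral_exp]
    simp
  have h4 : ∫ r in a..b, (exp (K * T) * (k r * timeFilter K H (T, r) ^ 2)
        - exp (K * 0) * (k r * timeFilter K H (0, r) ^ 2))
      = exp (K * T) * ∫ r in a..b, k r * timeFilter K H (T, r) ^ 2 := by
    rw [← intervalIntegral.integral_const_mul]
    refine intervalIntegral.integral_congr fun r _ => ?_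
    simp [timeFilter_zero]
  rw [integral_const_mul] at h1
  rw [h4] at h
  set J := ∫ r in a..b, k r * timeFilter K H (T, r) ^ 2
  have h5 : exp (K * T) * J ≤ K⁻¹ * (K⁻¹ * (exp (K * T) - 1) * B) := by
    rw [← h, ← h3]
    exact h1.trans (mul_le_mul_of_nonneg_left h2 (inv_pos.2 hK).le)
  have h6 : exp (K * T) * J ≤ exp (K * T) * (K⁻¹ * (K⁻¹ * B)) := by
    have : 0 ≤ K⁻¹ * (K⁻¹ * B) := by positivity
    nlinarith
  have h7 := le_of_mul_le_mul_left h6 (exp_pos _)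
  calc K ^ 2 * J ≤ K ^ 2 * (K⁻¹ * (K⁻¹ * B)) := by gcongr
    _ = B := by field_simp

/-- The spatial weight `(1+r²)^{-N/2} (1+λ²r²)^{-2}`. -/
def heatWeight (N : ℕ) (l r : ℝ) : ℝ :=
  (1 + r ^ 2) ^ (-(N / 2 : ℝ)) * ((1 + l ^ 2 * r ^ 2) ^ 2)⁻¹

/-- The negative logarithmic derivative of `heatWeight`. -/
def heatSlope (N : ℕ) (l r : ℝ) : ℝ :=
  N * r / (1 + r ^ 2) + 4 * l ^ 2 * r / (1 + l ^ 2 * r ^ 2)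

/-- The derivative of `heatSlope`. -/
def heatSlopeDeriv (N : ℕ) (l r : ℝ) : ℝ :=
  N * (1 - r ^ 2) / (1 + r ^ 2) ^ 2 + 4 * l ^ 2 * (1 - l ^ 2 * r ^ 2) / (1 + l ^ 2 * r ^ 2) ^ 2

lemma continuous_heatWeight (N : ℕ) (l : ℝ) : Continuous (heatWeight N l) := by
  unfold heatWeight
  refine Continuous.mul ?_ ?_
  · exact Continuous.rpow_const (by fun_prop) fun r => Or.inl (by positivity)
  · exact Continuous.inv₀ (by fun_prop) fun r => by positivity

lemma continuous_heatSlope (N : ℕ) (l : ℝ) : Continuous (heatSlope N l) := by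
  unfold heatSlope
  refine Continuous.add ?_ ?_ <;>
  exact Continuous.div (by fun_prop) (by fun_prop) fun r => by positivity

lemma continuous_heatSlopeDeriv (N : ℕ) (l : ℝ) : Continuous (heatSlopeDeriv N l) := by
  unfold heatSlopeDeriv
  refine Continuous.add ?_ ?_ <;>
  exact Continuous.div (by fun_prop) (by fun_prop) fun r => by positivity

lemma heatWeight_pos (N : ℕ) (l r : ℝ) : 0 < heatWeight N l r := by
  unfold heatWeight
  positivity

lemma heatSlope_nonneg (N : ℕ) (l : ℝ) {r : ℝ} (hr : 0 ≤ r) : 0 ≤ heatSlope N l r := by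
  unfold heatSlope
  positivity

lemma hasDerivAt_heatWeight (N : ℕ) (l r : ℝ) :
    HasDerivAt (heatWeight N l) (-(heatSlope N l r * heatWeight N l r)) r := by
  have h1 : HasDerivAt (fun r : ℝ => 1 + r ^ 2) (2 * r) r := by
    simpa using ((hasDerivAt_pow 2 r).const_add 1)
  have h2 : HasDerivAt (fun r : ℝ => 1 + l ^ 2 * r ^ 2) (l ^ 2 * (2 * r)) r := by
    simpa using (((hasDerivAt_pow 2 r).const_mul (l ^ 2)).const_add 1)
  have p1 : 0 < 1 + r ^ 2 := by positivity
  have p2 : 0 < 1 + l ^ 2 * r ^ 2 := by positivity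
  have h3 := h1.rpow_const (p := -(N / 2 : ℝ)) (Or.inl p1.ne')
  have h4 := (h2.pow 2).inv (by simpa using (by positivity : (1 + l ^ 2 * r ^ 2) ^ 2 ≠ 0))
  refine (h3.mul h4).congr_deriv ?_
  simp only [heatWeight, heatSlope, Pi.pow_apply, Pi.inv_apply]
  rw [rpow_sub_one p1.ne']
  field_simp
  ring

lemma hasDerivAt_heatSlope (N : ℕ) (l r : ℝ) :
    HasDerivAt (heatSlope N l) (heatSlopeDeriv N l r) r := by
  have h1 : HasDerivAt (fun r : ℝ => 1 + r ^ 2) (2 * r) r := by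
    simpa using ((hasDerivAt_pow 2 r).const_add 1)
  have h2 : HasDerivAt (fun r : ℝ => 1 + l ^ 2 * r ^ 2) (l ^ 2 * (2 * r)) r := by
    simpa using (((hasDerivAt_pow 2 r).const_mul (l ^ 2)).const_add 1)
  have p1 : 0 < 1 + r ^ 2 := by positivity
  have p2 : 0 < 1 + l ^ 2 * r ^ 2 := by positivity
  have h3 := ((hasDerivAt_id r).const_mul (N : ℝ)).div h1 p1.ne'
  have h4 := ((hasDerivAt_id r).const_mul (4 * l ^ 2)).div h2 p2.ne'
  refine (h3.add h4).congr_deriv ?_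
  simp only [heatSlopeDeriv, id]
  congr 1
  · field_simp
    ring
  · field_simp
    ring

lemma heatWeight_le_rpow (N : ℕ) (l r : ℝ) :
    heatWeight N l r ≤ (1 + r ^ 2) ^ (-(N / 2 : ℝ)) := by
  unfold heatWeight
  refine mul_le_of_le_one_right (by positivity) (inv_le_one_of_one_le₀ ?_)
  exact one_le_pow₀ (by nlinarith [mul_nonneg (sq_nonneg l) (sq_nonneg r)])

lemma heatWeight_le_one (N : ℕ) (l r : ℝ) : heatWeight N l r ≤ 1 :=
  (heatWeight_le_rpow N l r).trans
    (rpow_le_one_of_one_le_of_nonpos (by nlinarith [sq_nonneg r]) (by simp; positivity))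

lemma heatWeight_lower {N : ℕ} {l r : ℝ} (hl0 : 0 ≤ l) (hl : l ≤ 1) (hr0 : 0 ≤ r) (hr : r ≤ 2) :
    (5 : ℝ) ^ (-(N / 2 : ℝ)) / 25 ≤ heatWeight N l r := by
  unfold heatWeight
  rw [div_eq_mul_inv]
  have hr2 : r ^ 2 ≤ 4 := by nlinarith
  have hl2 : l ^ 2 ≤ 1 := by nlinarith
  gcongr ?_ * ?_
  · exact rpow_le_rpow_of_nonpos (by positivity) (by linarith) (by simp; positivity)
  · have : 1 + l ^ 2 * r ^ 2 ≤ 5 := by nlinarith [sq_nonneg l, sq_nonneg r]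
    refine inv_anti₀ (by positivity) ?_
    calc (1 + l ^ 2 * r ^ 2) ^ 2 ≤ 5 ^ 2 := by gcongr
      _ = 25 := by norm_num

lemma pow_mul_one_add_sq_rpow_le (N : ℕ) {r : ℝ} (hr : 0 ≤ r) :
    r ^ N * (1 + r ^ 2) ^ (-(N / 2 : ℝ)) ≤ 1 := by
  have h1 : r ^ N = (r ^ 2) ^ (N / 2 : ℝ) := by
    rw [← rpow_natCast r 2, ← rpow_mul hr, ← rpow_natCast]
    congr 1
    push_cast
    ring
  rw [rpow_neg (by positivity), h1, ← div_eq_mul_inv]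
  refine div_le_one_of_le₀ (rpow_le_rpow (by positivity) (by linarith) (by positivity))
    (by positivity)

lemma integral_pow_mul_heatWeight_le (N : ℕ) {l a b : ℝ} (hl : 0 < l) (ha : 0 ≤ a) (hab : a ≤ b) :
    ∫ r in a..b, r ^ (N + 1) * heatWeight N l r ≤ 1 / (2 * l ^ 2) := by
  have hd : ∀ r, HasDerivAt (fun r : ℝ => -(1 / (2 * l ^ 2)) * (1 + l ^ 2 * r ^ 2)⁻¹)
      (r * ((1 + l ^ 2 * r ^ 2) ^ 2)⁻¹) r := fun r => by
    have h2 : HasDerivAt (fun r : ℝ => 1 + l ^ 2 * r ^ 2) (l ^ 2 * (2 * r)) r := by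
      simpa using (((hasDerivAt_pow 2 r).const_mul (l ^ 2)).const_add 1)
    have p2 : 0 < 1 + l ^ 2 * r ^ 2 := by positivity
    refine ((h2.inv p2.ne').const_mul _).congr_deriv ?_
    field_simp
  have hc : Continuous fun r : ℝ => r * ((1 + l ^ 2 * r ^ 2) ^ 2)⁻¹ :=
    continuous_id.mul (Continuous.inv₀ (by fun_prop) fun r => by positivity)
  have hG := continuous_heatWeight N l
  calc _ ≤ ∫ r in a..b, r * ((1 + l ^ 2 * r ^ 2) ^ 2)⁻¹ := by
        refine intervalIntegral.integral_mono_on hab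
          (Continuous.intervalIntegrable (by fun_prop) _ _) (hc.intervalIntegrable _ _)
          fun r hr => ?_
        have hr0 : 0 ≤ r := ha.trans hr.1
        have := pow_mul_one_add_sq_rpow_le N hr0
        calc r ^ (N + 1) * heatWeight N l r
            = (r * ((1 + l ^ 2 * r ^ 2) ^ 2)⁻¹) * (r ^ N * (1 + r ^ 2) ^ (-(N / 2 : ℝ))) := by
              unfold heatWeight; ring
          _ ≤ _ := mul_le_of_le_one_right (by positivity) this
    _ = -(1 / (2 * l ^ 2)) * (1 + l ^ 2 * b ^ 2)⁻¹ - -(1 / (2 * l ^ 2)) * (1 + l ^ 2 * a ^ 2)⁻¹ :=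
        intervalIntegral.integral_eq_sub_of_hasDerivAt (fun r _ => hd r)
          (hc.intervalIntegrable _ _)
    _ ≤ 1 / (2 * l ^ 2) := by
        have h1 : 0 ≤ 1 / (2 * l ^ 2) * (1 + l ^ 2 * b ^ 2)⁻¹ := by positivity
        have h2 : 1 / (2 * l ^ 2) * (1 + l ^ 2 * a ^ 2)⁻¹ ≤ 1 / (2 * l ^ 2) :=
          mul_le_of_le_one_right (by positivity) (inv_le_one_of_one_le₀
            (by nlinarith [mul_nonneg (sq_nonneg l) (sq_nonneg a)]))
        linarith

lemma heatSlope_sq_mul_heatWeight_le (N : ℕ) {l r : ℝ} (hl0 : 0 ≤ l) (hl : l ≤ 1) (hr : 0 ≤ r) :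
    heatSlope N l r ^ 2 * heatWeight N l r
      ≤ (N + 4) ^ 2 * (1 + r ^ 2) ^ (-((N + 2) / 2 : ℝ)) := by
  have p1 : 0 < 1 + r ^ 2 := by positivity
  have hl2 : l ^ 2 ≤ 1 := by nlinarith
  have h1 : heatSlope N l r ≤ (N + 4) * r / (1 + r ^ 2) := by
    have : 4 * l ^ 2 * r / (1 + l ^ 2 * r ^ 2) ≤ 4 * r / (1 + r ^ 2) := by
      rw [div_le_div_iff₀ (by positivity) p1]
      nlinarith [mul_nonneg hr (sub_nonneg.2 hl2)]
    unfold heatSlope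
    calc _ ≤ N * r / (1 + r ^ 2) + 4 * r / (1 + r ^ 2) := by gcongr
      _ = _ := by ring
  have h2 : heatSlope N l r ^ 2 ≤ (N + 4) ^ 2 * (1 + r ^ 2)⁻¹ := by
    calc heatSlope N l r ^ 2 ≤ ((N + 4) * r / (1 + r ^ 2)) ^ 2 :=
          pow_le_pow_left₀ (heatSlope_nonneg N l hr) h1 2
      _ = (N + 4) ^ 2 * (r ^ 2 / (1 + r ^ 2) ^ 2) := by rw [div_pow, mul_pow, mul_div_assoc]
      _ ≤ (N + 4) ^ 2 * (1 + r ^ 2)⁻¹ := by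
          gcongr
          rw [inv_eq_one_div, div_le_div_iff₀ (by positivity) p1]
          nlinarith
  calc _ ≤ (N + 4) ^ 2 * (1 + r ^ 2)⁻¹ * (1 + r ^ 2) ^ (-(N / 2 : ℝ)) :=
        mul_le_mul h2 (heatWeight_le_rpow N l r) (heatWeight_pos N l r).le (by positivity)
    _ = _ := by
        rw [mul_assoc, ← rpow_neg_one, ← rpow_add p1]
        congr 2
        ring

/-- The weight is almost superharmonic with respect to the measure `r^{N+1} dr`. -/
lemma heatWeight_almost_superharmonic (N : ℕ) {l r : ℝ} (hr : 0 < r) :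
    -((N + 1) * r ^ N * heatSlope N l r)
      + r ^ (N + 1) * (heatSlope N l r ^ 2 - heatSlopeDeriv N l r)
      ≤ (8 * N + 20) * l ^ 2 * r ^ (N + 1) := by
  have p1 : 0 < 1 + r ^ 2 := by positivity
  have p2 : 0 < 1 + l ^ 2 * r ^ 2 := by positivity
  set x := l ^ 2 * r ^ 2 with hx
  have hx0 : 0 ≤ x := by positivity
  have key : -((N + 1) * (heatSlope N l r / r)) + (heatSlope N l r ^ 2 - heatSlopeDeriv N l r)
      ≤ (8 * N + 20) * l ^ 2 := by
    have e : -((N + 1) * (heatSlope N l r / r)) + (heatSlope N l r ^ 2 - heatSlopeDeriv N l r)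
      = -(N * (N + 2) / (1 + r ^ 2) ^ 2) + 8 * N * l ^ 2 * (r ^ 2 / ((1 + r ^ 2) * (1 + x)))
        + 4 * l ^ 2 * ((5 * x - 1) / (1 + x) ^ 2) - 4 * (N + 1) * l ^ 2 / (1 + x) := by
      unfold heatSlope heatSlopeDeriv
      rw [← hx]
      field_simp
      rw [hx]
      ring
    rw [e]
    have h1 : 0 ≤ (N : ℝ) * (N + 2) / (1 + r ^ 2) ^ 2 := by positivity
    have h2 : 8 * N * l ^ 2 * (r ^ 2 / ((1 + r ^ 2) * (1 + x))) ≤ 8 * N * l ^ 2 * 1 := by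
      gcongr
      refine div_le_one_of_le₀ ?_ (by positivity)
      nlinarith [mul_nonneg (sq_nonneg r) hx0]
    have h3 : 4 * l ^ 2 * ((5 * x - 1) / (1 + x) ^ 2) ≤ 4 * l ^ 2 * 5 := by
      gcongr
      rw [div_le_iff₀ (by positivity)]
      nlinarith
    have h4 : 0 ≤ 4 * ((N : ℝ) + 1) * l ^ 2 / (1 + x) := by positivity
    linarith
  have := mul_le_mul_of_nonneg_left key (by positivity : 0 ≤ r ^ (N + 1))
  calc _ = r ^ (N + 1) * (-((N + 1) * (heatSlope N l r / r))
        + (heatSlope N l r ^ 2 - heatSlopeDeriv N l r)) := by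
        field_simp
        ring
    _ ≤ _ := this
    _ = _ := by ring

/-- A bounded solution `W` of the radial heat equation with diffusivity `e⁴`, flux `F` and source
`σ` on `[0,T] × [a,b]`, together with the integral bounds on the data. -/
structure HeatData (N : ℕ) (T a b e CF Cs B : ℝ) where
  W : ℝ × ℝ → ℝ
  Wt : ℝ × ℝ → ℝ
  Wr : ℝ × ℝ → ℝ
  Wrr : ℝ × ℝ → ℝ
  F : ℝ × ℝ → ℝ
  Fr : ℝ × ℝ → ℝ
  σ : ℝ × ℝ → ℝ
  hT : 0 < T
  ha : 0 < a
  ha1 : a < 1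
  hb : 2 < b
  he : 1 ≤ e
  cW : Continuous W
  cWt : Continuous Wt
  cWr : Continuous Wr
  cWrr : Continuous Wrr
  cF : Continuous F
  cFr : Continuous Fr
  cσ : Continuous σ
  dWt : ∀ t r, HasDerivAt (fun s => W (s, r)) (Wt (t, r)) t
  dWr : ∀ t r, HasDerivAt (fun y => W (t, y)) (Wr (t, r)) r
  dWrr : ∀ t r, HasDerivAt (fun y => Wr (t, y)) (Wrr (t, r)) r
  dFr : ∀ t r, HasDerivAt (fun y => F (t, y)) (Fr (t, r)) r
  pde : ∀ t ∈ Icc 0 T, ∀ r ∈ Icc a b, r ^ (N + 1) * Wt (t, r)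
    = e ^ 4 * (r ^ (N + 1) * Wrr (t, r) + (N + 1) * r ^ N * Wr (t, r))
      - (r ^ (N + 1) * Fr (t, r) + (N + 1) * r ^ N * F (t, r)) + r ^ (N + 1) * σ (t, r)
  bW : ∀ t ∈ Icc 0 T, W (t, b) = 0
  bWr : ∀ t ∈ Icc 0 T, Wr (t, a) = 0
  bFa : ∀ t ∈ Icc 0 T, F (t, a) = 0
  bFb : ∀ t ∈ Icc 0 T, F (t, b) = 0
  bound_W : ∀ t ∈ Icc 0 T, ∀ r ∈ Icc a b, |W (t, r)| ≤ 4
  bound_F : ∫ x in rect T a b, x.2 ^ (N + 1) * F x ^ 2 ≤ CF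
  bound_σ : ∫ x in rect T a b, x.2 ^ (N + 1) * |σ x| ≤ Cs
  bound_slice : ∀ t ∈ Icc 0 T, ∫ r in a..b,
    r ^ (N + 1) * (1 + r ^ 2) ^ (-((N + 2) / 2 : ℝ)) * W (t, r) ^ 2 ≤ B

namespace HeatData

variable {N : ℕ} {T a b e CF Cs B : ℝ} (h : HeatData N T a b e CF Cs B)

/-- The low-frequency part of `W`, divided by `e³`. -/
def V : ℝ × ℝ → ℝ := timeFilter (e ^ 3) h.W
/-- The space derivative of `V`. -/
def Vr : ℝ × ℝ → ℝ := timeFilter (e ^ 3) h.Wr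
/-- The second space derivative of `V`. -/
def Vrr : ℝ × ℝ → ℝ := timeFilter (e ^ 3) h.Wrr
/-- The filtered flux. -/
def FK : ℝ × ℝ → ℝ := timeFilter (e ^ 3) h.F
/-- The space derivative of the filtered flux. -/
def FKr : ℝ × ℝ → ℝ := timeFilter (e ^ 3) h.Fr
/-- The filtered source. -/
def σK : ℝ × ℝ → ℝ := timeFilter (e ^ 3) h.σ
/-- The high-frequency part of `W`, which is the time derivative of `V`. -/
def v (x : ℝ × ℝ) : ℝ := h.W x - e ^ 3 * h.V x
/-- The space derivative of `v`. -/
def vr (x : ℝ × ℝ) : ℝ := h.Wr x - e ^ 3 * h.Vr x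
/-- The second space derivative of `v`. -/
def vrr (x : ℝ × ℝ) : ℝ := h.Wrr x - e ^ 3 * h.Vrr x
/-- The high-frequency part of the flux. -/
def FH (x : ℝ × ℝ) : ℝ := h.F x - e ^ 3 * h.FK x
/-- The space derivative of the high-frequency part of the flux. -/
def FHr (x : ℝ × ℝ) : ℝ := h.Fr x - e ^ 3 * h.FKr x
/-- The high-frequency part of the source. -/
def σH (x : ℝ × ℝ) : ℝ := h.σ x - e ^ 3 * h.σK x
/-- The contribution of the initial datum to the filtered equation. -/
def W0 (x : ℝ × ℝ) : ℝ := exp (-(e ^ 3 * x.1)) * h.W (0, x.2)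

attribute [fun_prop] cW cWt cWr cWrr cF cFr cσ

@[fun_prop] lemma continuous_V : Continuous h.V := continuous_timeFilter h.cW
@[fun_prop] lemma continuous_Vr : Continuous h.Vr := continuous_timeFilter h.cWr
@[fun_prop] lemma continuous_Vrr : Continuous h.Vrr := continuous_timeFilter h.cWrr
@[fun_prop] lemma continuous_FK : Continuous h.FK := continuous_timeFilter h.cF
@[fun_prop] lemma continuous_FKr : Continuous h.FKr := continuous_timeFilter h.cFr
@[fun_prop] lemma continuous_σK : Continuous h.σK := continuous_timeFilter h.cσ
@[fun_prop] lemma continuous_v : Continuous h.v := by unfold v; fun_prop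
@[fun_prop] lemma continuous_vr : Continuous h.vr := by unfold vr; fun_prop
@[fun_prop] lemma continuous_vrr : Continuous h.vrr := by unfold vrr; fun_prop
@[fun_prop] lemma continuous_FH : Continuous h.FH := by unfold FH; fun_prop
@[fun_prop] lemma continuous_FHr : Continuous h.FHr := by unfold FHr; fun_prop
@[fun_prop] lemma continuous_σH : Continuous h.σH := by unfold σH; fun_prop
@[fun_prop] lemma continuous_W0 : Continuous h.W0 := by
  unfold W0
  fun_prop

lemma e_pos (h : HeatData N T a b e CF Cs B) : 0 < e := one_pos.trans_le h.he
lemma hab (h : HeatData N T a b e CF Cs B) : a ≤ b := by linarith [h.ha1, h.hb]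

lemma hasDerivAt_V_time (t r : ℝ) : HasDerivAt (fun s => h.V (s, r)) (h.v (t, r)) t :=
  hasDerivAt_timeFilter_time h.cW t r
lemma hasDerivAt_Vr_time (t r : ℝ) : HasDerivAt (fun s => h.Vr (s, r)) (h.vr (t, r)) t :=
  hasDerivAt_timeFilter_time h.cWr t r
lemma hasDerivAt_V (t r : ℝ) : HasDerivAt (fun y => h.V (t, y)) (h.Vr (t, r)) r :=
  hasDerivAt_timeFilter_space h.cW h.cWr h.dWr t r
lemma hasDerivAt_Vr (t r : ℝ) : HasDerivAt (fun y => h.Vr (t, y)) (h.Vrr (t, r)) r :=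
  hasDerivAt_timeFilter_space h.cWr h.cWrr h.dWrr t r
lemma hasDerivAt_FK (t r : ℝ) : HasDerivAt (fun y => h.FK (t, y)) (h.FKr (t, r)) r :=
  hasDerivAt_timeFilter_space h.cF h.cFr h.dFr t r
lemma hasDerivAt_v_time (t r : ℝ) :
    HasDerivAt (fun s => h.v (s, r)) (h.Wt (t, r) - e ^ 3 * h.v (t, r)) t :=
  (h.dWt t r).sub ((h.hasDerivAt_V_time t r).const_mul _)
lemma hasDerivAt_v (t r : ℝ) : HasDerivAt (fun y => h.v (t, y)) (h.vr (t, r)) r :=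
  (h.dWr t r).sub ((h.hasDerivAt_V t r).const_mul _)
lemma hasDerivAt_vr (t r : ℝ) : HasDerivAt (fun y => h.vr (t, y)) (h.vrr (t, r)) r :=
  (h.dWrr t r).sub ((h.hasDerivAt_Vr t r).const_mul _)
lemma hasDerivAt_FH (t r : ℝ) : HasDerivAt (fun y => h.FH (t, y)) (h.FHr (t, r)) r :=
  (h.dFr t r).sub ((h.hasDerivAt_FK t r).const_mul _)

/-- The filtered equation. -/
lemma filtered_pde {t r : ℝ} (ht : t ∈ Icc 0 T) (hr : r ∈ Icc a b) :
    r ^ (N + 1) * h.v (t, r)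
      = e ^ 4 * (r ^ (N + 1) * h.Vrr (t, r) + (N + 1) * r ^ N * h.Vr (t, r))
        - (r ^ (N + 1) * h.FKr (t, r) + (N + 1) * r ^ N * h.FK (t, r))
        + r ^ (N + 1) * h.σK (t, r) + r ^ (N + 1) * h.W0 (t, r) := by
  have h1 := timeFilter_deriv (K := e ^ 3) h.cW h.cWt h.dWt t r
  have h2 : timeFilter (e ^ 3) (fun x => x.2 ^ (N + 1) * h.Wt x) (t, r)
      = timeFilter (e ^ 3) (fun x => ((e ^ 4 * x.2 ^ (N + 1)) * h.Wrr x
        + (e ^ 4 * ((N + 1) * x.2 ^ N)) * h.Wr x) + ((-x.2 ^ (N + 1)) * h.Fr x +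
          ((-((N + 1) * x.2 ^ N)) * h.F x + x.2 ^ (N + 1) * h.σ x))) (t, r) := by
    refine timeFilter_congr ht.1 fun s hs => ?_
    have := h.pde s ⟨hs.1, hs.2.trans ht.2⟩ r hr
    linear_combination this
  rw [timeFilter_add (by fun_prop) (by fun_prop), timeFilter_add (by fun_prop) (by fun_prop),
    timeFilter_add (by fun_prop) (by fun_prop), timeFilter_add (by fun_prop) (by fun_prop),
    timeFilter_coeff_mul _ (fun r => r ^ (N + 1)), timeFilter_coeff_mul _ (fun r => r ^ (N + 1)),
    timeFilter_coeff_mul _ (fun r => e ^ 4 * r ^ (N + 1)),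
    timeFilter_coeff_mul _ (fun r => e ^ 4 * ((N + 1) * r ^ N)),
    timeFilter_coeff_mul _ (fun r => -r ^ (N + 1)),
    timeFilter_coeff_mul _ (fun r => -((N + 1) * r ^ N))] at h2
  simp only at h2
  unfold v V Vr Vrr FK FKr σK W0
  simp only
  linear_combination h2 - r ^ (N + 1) * h1

/-- The equation for the high-frequency part. -/
lemma highFreq_pde {t r : ℝ} (ht : t ∈ Icc 0 T) (hr : r ∈ Icc a b) :
    r ^ (N + 1) * (h.Wt (t, r) - e ^ 3 * h.v (t, r))
      = e ^ 4 * (r ^ (N + 1) * h.vrr (t, r) + (N + 1) * r ^ N * h.vr (t, r))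
        - (r ^ (N + 1) * h.FHr (t, r) + (N + 1) * r ^ N * h.FH (t, r))
        + r ^ (N + 1) * h.σH (t, r) - e ^ 3 * (r ^ (N + 1) * h.W0 (t, r)) := by
  have h1 := h.filtered_pde ht hr
  have h2 := h.pde t ht r hr
  unfold vr vrr FH FHr σH
  linear_combination h2 - e ^ 3 * h1

lemma timeFilter_eq_zero {K : ℝ} {H : ℝ × ℝ → ℝ} {t r : ℝ} (ht : t ∈ Icc 0 T)
    (hH : ∀ s ∈ Icc 0 T, H (s, r) = 0) : timeFilter K H (t, r) = 0 := by
  rw [timeFilter_congr (H' := fun _ => 0) ht.1 fun s hs => hH s ⟨hs.1, hs.2.trans ht.2⟩]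
  simp [timeFilter]

lemma Vr_left {t : ℝ} (ht : t ∈ Icc 0 T) : h.Vr (t, a) = 0 := timeFilter_eq_zero ht h.bWr
lemma FK_left {t : ℝ} (ht : t ∈ Icc 0 T) : h.FK (t, a) = 0 := timeFilter_eq_zero ht h.bFa
lemma vr_left {t : ℝ} (ht : t ∈ Icc 0 T) : h.vr (t, a) = 0 := by
  simp [vr, h.Vr_left ht, h.bWr t ht]
lemma FH_left {t : ℝ} (ht : t ∈ Icc 0 T) : h.FH (t, a) = 0 := by
  simp [FH, h.FK_left ht, h.bFa t ht]
lemma v_right {t : ℝ} (ht : t ∈ Icc 0 T) : h.v (t, b) = 0 := by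
  have : h.V (t, b) = 0 := timeFilter_eq_zero ht h.bW
  simp [v, this, h.bW t ht]

lemma abs_V_le {t r : ℝ} (ht : t ∈ Icc 0 T) (hr : r ∈ Icc a b) : e ^ 3 * |h.V (t, r)| ≤ 4 :=
  mul_abs_timeFilter_le (pow_pos h.e_pos 3).le (by norm_num) h.cW ht.1
    fun s hs => h.bound_W s ⟨hs.1, hs.2.trans ht.2⟩ r hr

lemma abs_v_le {t r : ℝ} (ht : t ∈ Icc 0 T) (hr : r ∈ Icc a b) : |h.v (t, r)| ≤ 8 := by
  have h1 := h.abs_V_le ht hr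
  have h2 := h.bound_W t ht r hr
  have h3 := abs_sub (h.W (t, r)) (e ^ 3 * h.V (t, r))
  rw [abs_mul, abs_of_pos (pow_pos h.e_pos 3)] at h3
  unfold v
  linarith

lemma abs_W0_le {t r : ℝ} (hr : r ∈ Icc a b) :
    |h.W0 (t, r)| ≤ 4 * exp (-(e ^ 3 * t)) := by
  have h2 := h.bound_W 0 ⟨le_rfl, h.hT.le⟩ r hr
  unfold W0
  rw [abs_mul, abs_of_pos (exp_pos _), mul_comm]
  exact mul_le_mul_of_nonneg_right h2 (exp_pos _).le

end HeatData

attribute [fun_prop] continuous_heatWeight continuous_heatSlope continuous_heatSlopeDeriv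

/-- The radial density `r^{N+1}` times the weight at scale `e`. -/
def heatMass (N : ℕ) (e r : ℝ) : ℝ := r ^ (N + 1) * heatWeight N e⁻¹ r

@[fun_prop] lemma continuous_heatMass (N : ℕ) (e : ℝ) : Continuous (heatMass N e) := by
  unfold heatMass
  fun_prop

lemma hasDerivAt_heatMass (N : ℕ) (e r : ℝ) :
    HasDerivAt (heatMass N e) ((N + 1) * r ^ N * heatWeight N e⁻¹ r
      - heatSlope N e⁻¹ r * heatMass N e r) r := by
  refine ((hasDerivAt_pow (N + 1) r).mul (hasDerivAt_heatWeight N e⁻¹ r)).congr_deriv ?_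
  simp only [heatMass, Nat.add_sub_cancel]
  push_cast
  ring

lemma heatMass_nonneg (N : ℕ) (e : ℝ) {r : ℝ} (hr : 0 ≤ r) : 0 ≤ heatMass N e r :=
  mul_nonneg (pow_nonneg hr _) (heatWeight_pos _ _ _).le

lemma heatMass_le (N : ℕ) (e : ℝ) {r : ℝ} (hr : 0 ≤ r) : heatMass N e r ≤ r ^ (N + 1) :=
  mul_le_of_le_one_right (pow_nonneg hr _) (heatWeight_le_one _ _ _)

namespace HeatData

variable {N : ℕ} {T a b e CF Cs B : ℝ} (h : HeatData N T a b e CF Cs B)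

lemma pos_of_mem (h : HeatData N T a b e CF Cs B) {r : ℝ} (hr : r ∈ Icc a b) : 0 < r :=
  h.ha.trans_le hr.1

lemma integral_heatMass_le (h : HeatData N T a b e CF Cs B) :
    ∫ r in a..b, heatMass N e r ≤ e ^ 2 / 2 := by
  have := integral_pow_mul_heatWeight_le N (inv_pos.2 h.e_pos) h.ha.le h.hab
  have he := h.e_pos
  calc _ ≤ _ := this
    _ = e ^ 2 / 2 := by field_simp

lemma integral_FK_sq_le : e ^ 6 * ∫ x in rect T a b, x.2 ^ (N + 1) * h.FK x ^ 2 ≤ CF := by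
  have := (sq_mul_rect_timeFilter_sq_le (k := fun r => r ^ (N + 1)) (pow_pos h.e_pos 3) h.hT.le
    h.hab h.cF (by fun_prop) fun r hr => pow_nonneg (h.pos_of_mem hr).le _).trans h.bound_F
  rwa [← pow_mul] at this

lemma integral_σK_le : e ^ 3 * ∫ x in rect T a b, x.2 ^ (N + 1) * |h.σK x| ≤ Cs := by
  have hF := continuous_timeFilter (K := e ^ 3) h.cσ.abs
  have h1 := (mul_rect_timeFilter_le (K := e ^ 3) (k := fun r => r ^ (N + 1)) h.hT.le
    h.hab h.cσ.abs (by fun_prop) (fun r hr => pow_nonneg (h.pos_of_mem hr).le _)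
    fun x => abs_nonneg _).trans h.bound_σ
  refine le_trans (mul_le_mul_of_nonneg_left ?_ (pow_pos h.e_pos 3).le) h1
  refine rect_mono (by fun_prop) (by fun_prop) fun x hx => ?_
  exact mul_le_mul_of_nonneg_left (abs_timeFilter_le h.cσ hx.1.1)
    (pow_nonneg (h.pos_of_mem hx.2).le _)

lemma integral_exp_heatMass_le (h : HeatData N T a b e CF Cs B) :
    e ^ 3 * ∫ x in rect T a b, exp (-(e ^ 3 * x.1)) * heatMass N e x.2 ≤ e ^ 2 / 2 := by
  have hK := pow_pos h.e_pos 3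
  have h1 : ∫ x in rect T a b, exp (-(e ^ 3 * x.1)) * heatMass N e x.2
      ≤ ∫ t in (0)..T, exp (-(e ^ 3 * t)) * (e ^ 2 / 2) := by
    refine rect_le_of_slice_le (by fun_prop) h.hT.le h.hab (by fun_prop) fun t _ => ?_
    simp only
    rw [intervalIntegral.integral_const_mul]
    exact mul_le_mul_of_nonneg_left h.integral_heatMass_le (exp_pos _).le
  have h2 : ∫ t in (0)..T, exp (-(e ^ 3 * t)) = (e ^ 3)⁻¹ * (1 - exp (-(e ^ 3 * T))) := by
    have := intervalIntegral.integral_comp_mul_left (a := 0) (b := T) exp (neg_ne_zero.2 hK.ne')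
    simp only [neg_mul] at this
    rw [this, integral_exp]
    simp
    ring
  rw [intervalIntegral.integral_mul_const, h2] at h1
  calc _ ≤ e ^ 3 * ((e ^ 3)⁻¹ * (1 - exp (-(e ^ 3 * T))) * (e ^ 2 / 2)) := by gcongr
    _ = (1 - exp (-(e ^ 3 * T))) * (e ^ 2 / 2) := by
      rw [← mul_assoc, mul_inv_cancel_left₀ hK.ne']
    _ ≤ 1 * (e ^ 2 / 2) := by
      gcongr
      linarith [exp_pos (-(e ^ 3 * T))]
    _ = _ := one_mul _

lemma B_nonneg (h : HeatData N T a b e CF Cs B) : 0 ≤ B :=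
  le_trans (intervalIntegral.integral_nonneg h.hab fun r hr => by
    have := h.pos_of_mem hr
    positivity) (h.bound_slice 0 ⟨le_rfl, h.hT.le⟩)

lemma CF_nonneg (h : HeatData N T a b e CF Cs B) : 0 ≤ CF :=
  le_trans (rect_nonneg fun x hx => by
    have := h.pos_of_mem hx.2
    positivity) h.bound_F

lemma Cs_nonneg (h : HeatData N T a b e CF Cs B) : 0 ≤ Cs :=
  le_trans (rect_nonneg fun x hx => by
    have := h.pos_of_mem hx.2
    positivity) h.bound_σ

lemma inv_e_le_one (h : HeatData N T a b e CF Cs B) : e⁻¹ ≤ 1 := inv_le_one_of_one_le₀ h.he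

lemma slice_slope_le {t : ℝ} (ht : t ∈ Icc 0 T) :
    ∫ r in a..b, (heatSlope N e⁻¹ r ^ 2 * heatMass N e r) * h.W (t, r) ^ 2
      ≤ (N + 4) ^ 2 * B := by
  have hc : Continuous fun r : ℝ => (1 + r ^ 2) ^ (-((N + 2) / 2 : ℝ)) :=
    Continuous.rpow_const (by fun_prop) fun r => Or.inl (by positivity)
  refine le_trans ?_ (mul_le_mul_of_nonneg_left (h.bound_slice t ht) (by positivity))
  rw [← intervalIntegral.integral_const_mul]
  refine intervalIntegral.integral_mono_on h.hab (Continuous.intervalIntegrable (by fun_prop) _ _)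
    (Continuous.intervalIntegrable (by fun_prop) _ _) fun r hr => ?_
  have hr0 := h.pos_of_mem hr
  have h1 := heatSlope_sq_mul_heatWeight_le N (inv_pos.2 h.e_pos).le h.inv_e_le_one hr0.le
  calc _ = (r ^ (N + 1) * h.W (t, r) ^ 2) * (heatSlope N e⁻¹ r ^ 2 * heatWeight N e⁻¹ r) := by
        unfold heatMass; ring
    _ ≤ (r ^ (N + 1) * h.W (t, r) ^ 2) * ((N + 4) ^ 2 * (1 + r ^ 2) ^ (-((N + 2) / 2 : ℝ))) :=
        mul_le_mul_of_nonneg_left h1 (by positivity)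
    _ = _ := by ring

lemma slope_mass_nonneg (h : HeatData N T a b e CF Cs B) {r : ℝ} (hr : r ∈ Icc a b) :
    0 ≤ heatSlope N e⁻¹ r ^ 2 * heatMass N e r :=
  mul_nonneg (sq_nonneg _) (heatMass_nonneg N e (h.pos_of_mem hr).le)

lemma integral_slope_W_le :
    ∫ x in rect T a b, (heatSlope N e⁻¹ x.2 ^ 2 * heatMass N e x.2) * h.W x ^ 2
      ≤ T * ((N + 4) ^ 2 * B) :=
  rect_le_of_slice (by fun_prop) h.hT.le h.hab fun t ht => h.slice_slope_le ht

lemma integral_slope_V_le :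
    e ^ 6 * ∫ x in rect T a b, (heatSlope N e⁻¹ x.2 ^ 2 * heatMass N e x.2) * h.V x ^ 2
      ≤ T * ((N + 4) ^ 2 * B) := by
  have := (sq_mul_rect_timeFilter_sq_le (k := fun r => heatSlope N e⁻¹ r ^ 2 * heatMass N e r)
    (pow_pos h.e_pos 3) h.hT.le h.hab h.cW (by fun_prop)
    fun r hr => h.slope_mass_nonneg hr).trans h.integral_slope_W_le
  rwa [← pow_mul] at this

lemma integral_slope_v_le :
    ∫ x in rect T a b, (heatSlope N e⁻¹ x.2 ^ 2 * heatMass N e x.2) * h.v x ^ 2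
      ≤ 4 * (T * ((N + 4) ^ 2 * B)) := by
  have h1 : ∫ x in rect T a b, (heatSlope N e⁻¹ x.2 ^ 2 * heatMass N e x.2) * h.v x ^ 2
      ≤ ∫ x in rect T a b, (2 * ((heatSlope N e⁻¹ x.2 ^ 2 * heatMass N e x.2) * h.W x ^ 2)
        + 2 * (e ^ 6 * ((heatSlope N e⁻¹ x.2 ^ 2 * heatMass N e x.2) * h.V x ^ 2))) := by
    refine rect_mono (by fun_prop) (by fun_prop) fun x hx => ?_
    have := mul_nonneg (h.slope_mass_nonneg hx.2) (sq_nonneg (h.W x + e ^ 3 * h.V x))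
    unfold v
    linarith
  rw [rect_add (by fun_prop) (by fun_prop), integral_const_mul, integral_const_mul,
    integral_const_mul] at h1
  linarith [h.integral_slope_V_le, h.integral_slope_W_le]

lemma slice_slope_V_le :
    e ^ 6 * ∫ r in a..b, (heatSlope N e⁻¹ r ^ 2 * heatMass N e r) * h.V (T, r) ^ 2
      ≤ (N + 4) ^ 2 * B := by
  have := sq_mul_integral_timeFilter_sq_le
    (k := fun r => heatSlope N e⁻¹ r ^ 2 * heatMass N e r)
    (pow_pos h.e_pos 3) h.hT.le h.hab h.cW (by fun_prop)
    (fun r hr => h.slope_mass_nonneg hr) (mul_nonneg (by positivity) h.B_nonneg)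
    fun t ht => h.slice_slope_le ht
  rwa [← pow_mul] at this

lemma integral_FH_sq_le : ∫ x in rect T a b, x.2 ^ (N + 1) * h.FH x ^ 2 ≤ 4 * CF := by
  have h1 : ∫ x in rect T a b, x.2 ^ (N + 1) * h.FH x ^ 2
      ≤ ∫ x in rect T a b, (2 * (x.2 ^ (N + 1) * h.F x ^ 2)
        + 2 * (e ^ 6 * (x.2 ^ (N + 1) * h.FK x ^ 2))) := by
    refine rect_mono (by fun_prop) (by fun_prop) fun x hx => ?_
    have := mul_nonneg (pow_nonneg (h.pos_of_mem hx.2).le (N + 1))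
      (sq_nonneg (h.F x + e ^ 3 * h.FK x))
    unfold FH
    linarith
  rw [rect_add (by fun_prop) (by fun_prop), integral_const_mul, integral_const_mul,
    integral_const_mul] at h1
  linarith [h.integral_FK_sq_le, h.bound_F]

lemma integral_σH_le : ∫ x in rect T a b, x.2 ^ (N + 1) * |h.σH x| ≤ 2 * Cs := by
  have h1 : ∫ x in rect T a b, x.2 ^ (N + 1) * |h.σH x|
      ≤ ∫ x in rect T a b, (x.2 ^ (N + 1) * |h.σ x| + e ^ 3 * (x.2 ^ (N + 1) * |h.σK x|)) := by
    refine rect_mono (by fun_prop) (by fun_prop) fun x hx => ?_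
    have h3 := abs_sub (h.σ x) (e ^ 3 * h.σK x)
    rw [abs_mul, abs_of_pos (pow_pos h.e_pos 3)] at h3
    have := mul_le_mul_of_nonneg_left h3 (pow_nonneg (h.pos_of_mem hx.2).le (N + 1))
    unfold σH
    linarith
  rw [rect_add (by fun_prop) (by fun_prop), integral_const_mul] at h1
  linarith [h.integral_σK_le, h.bound_σ]

end HeatData

namespace HeatData

variable {N : ℕ} {T a b e CF Cs B : ℝ} (h : HeatData N T a b e CF Cs B)

lemma lowFreq_identity :
    ∫ x in rect T a b, (heatMass N e x.2 * h.v x ^ 2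
        + e ^ 4 * (heatSlope N e⁻¹ x.2 * heatMass N e x.2 * (h.vr x * h.V x))
        - heatMass N e x.2 * (h.vr x * h.FK x)
        + heatSlope N e⁻¹ x.2 * heatMass N e x.2 * (h.v x * h.FK x)
        - heatMass N e x.2 * (h.v x * h.σK x) - heatMass N e x.2 * (h.v x * h.W0 x))
      ≤ e ^ 4 / 2 * ∫ r in a..b, (heatSlope N e⁻¹ r ^ 2 * heatMass N e r) * h.V (T, r) ^ 2 := by
  set p := heatSlope N e⁻¹ with hp
  set g := heatMass N e with hg
  have cp : Continuous p := continuous_heatSlope _ _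
  have cg : Continuous g := continuous_heatMass _ _
  rw [rect_div (T := T) (a := a) (b := b)
    (A := fun x => -(e ^ 4 / 2) * (h.Vr x ^ 2 * g x.2)
      + e ^ 4 * (h.Vr x * h.V x * (p x.2 * g x.2)))
    (At := fun x => -(e ^ 4) * (h.Vr x * h.vr x * g x.2)
      + e ^ 4 * ((h.vr x * h.V x + h.Vr x * h.v x) * (p x.2 * g x.2)))
    (B := fun x => e ^ 4 * (h.v x * g x.2 * h.Vr x) - h.v x * g x.2 * h.FK x)
    (Br := fun x => e ^ 4 * ((h.vr x * g x.2 + h.v x *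
        ((N + 1) * x.2 ^ N * heatWeight N e⁻¹ x.2 - p x.2 * g x.2)) * h.Vr x
          + h.v x * g x.2 * h.Vrr x)
      - ((h.vr x * g x.2 + h.v x *
        ((N + 1) * x.2 ^ N * heatWeight N e⁻¹ x.2 - p x.2 * g x.2)) * h.FK x
          + h.v x * g x.2 * h.FKr x))
    (by fun_prop) (by fun_prop) h.hT.le h.hab ?_ ?_ ?_]
  · have h1 : ∫ t in (0)..T, ((e ^ 4 * (h.v (t, b) * g b * h.Vr (t, b)) - h.v (t, b) * g b
        * h.FK (t, b)) - (e ^ 4 * (h.v (t, a) * g a * h.Vr (t, a))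
          - h.v (t, a) * g a * h.FK (t, a))) = 0 := by
      refine (intervalIntegral.integral_congr (g := fun _ => (0 : ℝ)) fun t ht => ?_).trans
        (by simp)
      rw [uIcc_of_le h.hT.le] at ht
      simp only [h.v_right ht, h.Vr_left ht, h.FK_left ht]
      ring
    simp only at h1 ⊢
    rw [h1, add_zero, ← intervalIntegral.integral_const_mul]
    refine intervalIntegral.integral_mono_on h.hab (Continuous.intervalIntegrable (by fun_prop) _ _)
      (Continuous.intervalIntegrable (by fun_prop) _ _) fun r hr => ?_
    have e1 : h.Vr (0, r) = 0 := timeFilter_zero _ _ _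
    have hg0 : 0 ≤ g r := heatMass_nonneg N e (h.pos_of_mem hr).le
    have := mul_nonneg (mul_nonneg (pow_nonneg h.e_pos.le 4) hg0)
      (sq_nonneg (h.Vr (T, r) - p r * h.V (T, r)))
    rw [e1]
    linarith
  · intro t _ r _
    refine (((((h.hasDerivAt_Vr_time t r).pow 2).mul_const (g r)).const_mul (-(e ^ 4 / 2))).add
      ((((h.hasDerivAt_Vr_time t r).mul (h.hasDerivAt_V_time t r)).mul_const
        (p r * g r)).const_mul (e ^ 4))).congr_deriv ?_
    simp
    ring
  · intro t _ r _
    have dvg := (h.hasDerivAt_v t r).mul (hasDerivAt_heatMass N e r)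
    refine (((dvg.mul (h.hasDerivAt_Vr t r)).const_mul (e ^ 4)).sub
      (dvg.mul (h.hasDerivAt_FK t r))).congr_deriv ?_
    simp [hp, hg]
  · intro t ht r hr
    have h1 := h.filtered_pde ht hr
    have h2 : g r = r ^ (N + 1) * heatWeight N e⁻¹ r := rfl
    simp only
    rw [h2]
    linear_combination h.v (t, r) * heatWeight N e⁻¹ r * h1

lemma highFreq_identity :
    -(1 / 2 * ∫ r in a..b, heatMass N e r * h.W (0, r) ^ 2)
      ≤ ∫ x in rect T a b, (-(e ^ 4 * (heatMass N e x.2 * h.vr x ^ 2))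
        + heatMass N e x.2 * (h.vr x * h.FH x)
        - heatSlope N e⁻¹ x.2 * heatMass N e x.2 * (h.v x * h.FH x)
        + e ^ 4 / 2 * (h.v x ^ 2 * (heatWeight N e⁻¹ x.2 *
          (-((N + 1) * x.2 ^ N * heatSlope N e⁻¹ x.2)
            + x.2 ^ (N + 1) * (heatSlope N e⁻¹ x.2 ^ 2 - heatSlopeDeriv N e⁻¹ x.2))))
        + heatMass N e x.2 * (h.v x * h.σH x) - e ^ 3 * (heatMass N e x.2 * (h.v x * h.W0 x))) := by
  set p := heatSlope N e⁻¹ with hp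
  set p' := heatSlopeDeriv N e⁻¹ with hp'
  set g := heatMass N e with hg
  have cp : Continuous p := continuous_heatSlope _ _
  have cp' : Continuous p' := continuous_heatSlopeDeriv _ _
  have cg : Continuous g := continuous_heatMass _ _
  rw [rect_div (T := T) (a := a) (b := b)
    (A := fun x => 1 / 2 * (h.v x ^ 2 * g x.2))
    (At := fun x => h.v x * (h.Wt x - e ^ 3 * h.v x) * g x.2)
    (B := fun x => -(e ^ 4) * (h.v x * g x.2 * h.vr x) + h.v x * g x.2 * h.FH x
      - e ^ 4 / 2 * (h.v x ^ 2 * (p x.2 * g x.2)))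
    (Br := fun x => -(e ^ 4) * ((h.vr x * g x.2 + h.v x *
        ((N + 1) * x.2 ^ N * heatWeight N e⁻¹ x.2 - p x.2 * g x.2)) * h.vr x
          + h.v x * g x.2 * h.vrr x)
      + ((h.vr x * g x.2 + h.v x *
        ((N + 1) * x.2 ^ N * heatWeight N e⁻¹ x.2 - p x.2 * g x.2)) * h.FH x
          + h.v x * g x.2 * h.FHr x)
      - e ^ 4 / 2 * (2 * h.v x * h.vr x * (p x.2 * g x.2) + h.v x ^ 2 * (p' x.2 * g x.2
        + p x.2 * ((N + 1) * x.2 ^ N * heatWeight N e⁻¹ x.2 - p x.2 * g x.2))))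
    (by fun_prop) (by fun_prop) h.hT.le h.hab ?_ ?_ ?_]
  · have h1 : 0 ≤ ∫ t in (0)..T, ((-(e ^ 4) * (h.v (t, b) * g b * h.vr (t, b))
        + h.v (t, b) * g b * h.FH (t, b) - e ^ 4 / 2 * (h.v (t, b) ^ 2 * (p b * g b)))
        - (-(e ^ 4) * (h.v (t, a) * g a * h.vr (t, a)) + h.v (t, a) * g a * h.FH (t, a)
          - e ^ 4 / 2 * (h.v (t, a) ^ 2 * (p a * g a)))) := by
      refine intervalIntegral.integral_nonneg h.hT.le fun t ht => ?_
      have hp0 : 0 ≤ p a := heatSlope_nonneg _ _ h.ha.le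
      have hg0 : 0 ≤ g a := heatMass_nonneg N e h.ha.le
      have : 0 ≤ e ^ 4 / 2 * (h.v (t, a) ^ 2 * (p a * g a)) := by
        have := h.e_pos
        positivity
      rw [h.v_right ht, h.vr_left ht, h.FH_left ht]
      linarith
    have h2 : -(1 / 2 * ∫ r in a..b, g r * h.W (0, r) ^ 2)
        ≤ ∫ r in a..b, (1 / 2 * (h.v (T, r) ^ 2 * g r) - 1 / 2 * (h.v (0, r) ^ 2 * g r)) := by
      rw [← intervalIntegral.integral_const_mul, ← intervalIntegral.integral_neg]
      refine intervalIntegral.integral_mono_on h.hab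
        (Continuous.intervalIntegrable (by fun_prop) _ _)
        (Continuous.intervalIntegrable (by fun_prop) _ _) fun r hr => ?_
      have e1 : h.V (0, r) = 0 := timeFilter_zero _ _ _
      have hg0 : 0 ≤ g r := heatMass_nonneg N e (h.pos_of_mem hr).le
      have := mul_nonneg hg0 (sq_nonneg (h.v (T, r)))
      have e2 : h.v (0, r) = h.W (0, r) := by simp [v, e1]
      rw [e2]
      linarith
    simp only at h1 h2 ⊢
    linarith
  · intro t _ r _
    refine ((((h.hasDerivAt_v_time t r).pow 2).mul_const (g r)).const_mul (1 / 2)).congr_deriv ?_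
    simp
    ring
  · intro t _ r _
    have dvg := (h.hasDerivAt_v t r).mul (hasDerivAt_heatMass N e r)
    have dpg := (hasDerivAt_heatSlope N e⁻¹ r).mul (hasDerivAt_heatMass N e r)
    refine ((((dvg.mul (h.hasDerivAt_vr t r)).const_mul (-(e ^ 4))).add
      (dvg.mul (h.hasDerivAt_FH t r))).sub
      ((((h.hasDerivAt_v t r).pow 2).mul dpg).const_mul (e ^ 4 / 2))).congr_deriv ?_
    simp [hp, hg, hp']
  · intro t ht r hr
    have h1 := h.highFreq_pde ht hr
    have h2 : g r = r ^ (N + 1) * heatWeight N e⁻¹ r := rfl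
    simp only
    rw [h2]
    linear_combination -h.v (t, r) * heatWeight N e⁻¹ r * h1

end HeatData

lemma mul_le_young {c : ℝ} (hc : 0 < c) (x y : ℝ) : x * y ≤ c / 2 * x ^ 2 + 1 / (2 * c) * y ^ 2 := by
  have h1 : 0 ≤ 1 / (2 * c) * (c * x - y) ^ 2 := by positivity
  have h2 : 1 / (2 * c) * (c * x - y) ^ 2
      = c / 2 * x ^ 2 + 1 / (2 * c) * y ^ 2 - x * y := by
    field_simp
    ring
  linarith

lemma highFreq_arithmetic {e T CF Cs Bp C0 X D I0 ΦH ΦK SH SK Z Pv PV PT : ℝ} (he1 : 1 ≤ e)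
    (hCF : 0 ≤ CF) (hCs : 0 ≤ Cs) (hT : 0 < T) (hC0p : 20 ≤ C0) (hBp0 : 0 ≤ Bp)
    (hX : X ≤ 1 / (2 * C0 * e ^ 2) * (e ^ 4 * D) + e ^ 4 / (2 * (1 / (2 * C0 * e ^ 2))) * PV
      + (1 / (2 * (1 / (2 * C0 * e ^ 2) * e ^ 4)) + e ^ 3 / 2) * ΦK + 1 / (2 * e ^ 3) * Pv
      + 8 * SK + 32 * Z + e ^ 4 / 2 * PT)
    (hD : 3 / 4 * (e ^ 4 * D) ≤ 1 / 2 * I0 + (1 / e ^ 4 + 1 / 2) * ΦH + 1 / 2 * Pv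
      + C0 / 2 * e ^ 2 * X + 8 * SH + 32 * (e ^ 3 * Z))
    (a1 : I0 ≤ 8 * e ^ 2) (a2 : ΦH ≤ 4 * CF) (a3 : Pv ≤ 4 * (T * Bp)) (a4 : SH ≤ 2 * Cs)
    (a5 : e ^ 3 * Z ≤ e ^ 2 / 2) (a6 : e ^ 6 * PV ≤ T * Bp) (a7 : e ^ 6 * ΦK ≤ CF)
    (a8 : e ^ 3 * SK ≤ Cs) (a9 : e ^ 6 * PT ≤ Bp) (n2 : 0 ≤ ΦH) (n3 : 0 ≤ Pv) (n5 : 0 ≤ Z)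
    (n7 : 0 ≤ ΦK) (n8 : 0 ≤ SK) (n9 : 0 ≤ PT) :
    e ^ 4 * D ≤ 2 * (20 + 6 * CF + 2 * (T * Bp) + 16 * Cs + C0 / 2 *
      (C0 * (T * Bp) + C0 * CF + CF + 2 * (T * Bp) + 8 * Cs + 16 + Bp)) * e ^ 2 := by
  have he : 0 < e := one_pos.trans_le he1
  have hk : ∀ k : ℕ, 1 ≤ e ^ k := fun k => one_le_pow₀ he1
  have b1 : e ^ 4 / (2 * (1 / (2 * C0 * e ^ 2))) * PV ≤ C0 * (T * Bp) := by
    calc _ = C0 * (e ^ 6 * PV) := by field_simp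
      _ ≤ _ := by gcongr
  have b2 : (1 / (2 * (1 / (2 * C0 * e ^ 2) * e ^ 4)) + e ^ 3 / 2) * ΦK ≤ C0 * CF + CF := by
    have c1 : 1 / (2 * (1 / (2 * C0 * e ^ 2) * e ^ 4)) ≤ C0 * e ^ 6 := by
      calc 1 / (2 * (1 / (2 * C0 * e ^ 2) * e ^ 4)) = C0 / e ^ 2 := by field_simp
        _ ≤ C0 := div_le_self (by linarith) (hk 2)
        _ ≤ C0 * e ^ 6 := le_mul_of_one_le_right (by linarith) (hk 6)
    have c2 : e ^ 3 / 2 ≤ e ^ 6 := by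
      have := mul_le_mul_of_nonneg_left (hk 3) (pow_pos he 3).le
      calc e ^ 3 / 2 ≤ e ^ 3 * 1 := by linarith [pow_pos he 3]
        _ ≤ e ^ 3 * e ^ 3 := this
        _ = e ^ 6 := by ring
    calc _ ≤ (C0 * e ^ 6 + e ^ 6) * ΦK := by gcongr
      _ = C0 * (e ^ 6 * ΦK) + e ^ 6 * ΦK := by ring
      _ ≤ _ := by gcongr
  have b3 : 1 / (2 * e ^ 3) * Pv ≤ 2 * (T * Bp) := by
    have : 1 / (2 * e ^ 3) ≤ 1 / 2 := by
      apply one_div_le_one_div_of_le (by norm_num)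
      linarith [hk 3]
    calc 1 / (2 * e ^ 3) * Pv ≤ 1 / 2 * Pv := by gcongr
      _ ≤ 2 * (T * Bp) := by linarith
  have b4 : SK ≤ Cs := (le_mul_of_one_le_left n8 (hk 3)).trans a8
  have b5 : Z ≤ 1 / 2 := by
    have : e ^ 2 * (e * Z) ≤ e ^ 2 * (1 / 2) := by linarith
    have := le_of_mul_le_mul_left this (pow_pos he 2)
    exact (le_mul_of_one_le_left n5 he1).trans this
  have b6 : e ^ 4 / 2 * PT ≤ Bp := by
    have : e ^ 4 ≤ e ^ 6 := pow_le_pow_right₀ he1 (by norm_num)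
    calc e ^ 4 / 2 * PT ≤ e ^ 6 * PT := by gcongr; linarith [hk 4]
      _ ≤ Bp := a9
  have b7 : 1 / (2 * C0 * e ^ 2) * (e ^ 4 * D) = (e ^ 4 * D) / (2 * C0 * e ^ 2) := by ring
  have hX' : X ≤ (e ^ 4 * D) / (2 * C0 * e ^ 2) + (C0 * (T * Bp) + C0 * CF + CF
      + 2 * (T * Bp) + 8 * Cs + 16 + Bp) := by linarith
  have hX'' := mul_le_mul_of_nonneg_left hX' (by positivity : 0 ≤ C0 / 2 * e ^ 2)
  have b8 : C0 / 2 * e ^ 2 * ((e ^ 4 * D) / (2 * C0 * e ^ 2)) = (e ^ 4 * D) / 4 := by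
    field_simp
    ring
  rw [mul_add, b8] at hX''
  have b9 : (1 / e ^ 4 + 1 / 2) * ΦH ≤ 6 * CF := by
    have : 1 / e ^ 4 ≤ 1 := div_le_one_of_le₀ (hk 4) (by positivity)
    calc (1 / e ^ 4 + 1 / 2) * ΦH ≤ (1 + 1 / 2) * ΦH := by gcongr
      _ ≤ 6 * CF := by linarith
  have b10 : 6 * CF + 2 * (T * Bp) + 16 * Cs ≤ (6 * CF + 2 * (T * Bp) + 16 * Cs) * e ^ 2 :=
    le_mul_of_one_le_right (by positivity) (hk 2)
  linarith

namespace HeatData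

variable {N : ℕ} {T a b e CF Cs B : ℝ} (h : HeatData N T a b e CF Cs B)

/-- The weighted `L²` norm of the high-frequency part is controlled by a small multiple of its
weighted dissipation. -/
lemma integral_v_sq_le {η : ℝ} (hη : 0 < η) :
    ∫ x in rect T a b, heatMass N e x.2 * h.v x ^ 2
      ≤ η * (e ^ 4 * ∫ x in rect T a b, heatMass N e x.2 * h.vr x ^ 2)
        + e ^ 4 / (2 * η) * (∫ x in rect T a b,
          (heatSlope N e⁻¹ x.2 ^ 2 * heatMass N e x.2) * h.V x ^ 2)
        + (1 / (2 * (η * e ^ 4)) + e ^ 3 / 2) *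
          (∫ x in rect T a b, x.2 ^ (N + 1) * h.FK x ^ 2)
        + 1 / (2 * e ^ 3) * (∫ x in rect T a b,
          (heatSlope N e⁻¹ x.2 ^ 2 * heatMass N e x.2) * h.v x ^ 2)
        + 8 * (∫ x in rect T a b, x.2 ^ (N + 1) * |h.σK x|)
        + 32 * (∫ x in rect T a b, exp (-(e ^ 3 * x.1)) * heatMass N e x.2)
        + e ^ 4 / 2 * ∫ r in a..b, (heatSlope N e⁻¹ r ^ 2 * heatMass N e r) * h.V (T, r) ^ 2 := by
  have he := h.e_pos
  have h1 := h.lowFreq_identity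
  set fB : ℝ × ℝ → ℝ := fun x => heatMass N e x.2 * h.v x ^ 2
        + e ^ 4 * (heatSlope N e⁻¹ x.2 * heatMass N e x.2 * (h.vr x * h.V x))
        - heatMass N e x.2 * (h.vr x * h.FK x)
        + heatSlope N e⁻¹ x.2 * heatMass N e x.2 * (h.v x * h.FK x)
        - heatMass N e x.2 * (h.v x * h.σK x) - heatMass N e x.2 * (h.v x * h.W0 x) with hfB
  have cfB : Continuous fB := by fun_prop
  have key : ∫ x in rect T a b, heatMass N e x.2 * h.v x ^ 2
      ≤ ∫ x in rect T a b, (fB x + ((η * e ^ 4) * (heatMass N e x.2 * h.vr x ^ 2)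
        + ((e ^ 4 / (2 * η)) * ((heatSlope N e⁻¹ x.2 ^ 2 * heatMass N e x.2) * h.V x ^ 2)
        + ((1 / (2 * (η * e ^ 4)) + e ^ 3 / 2) * (x.2 ^ (N + 1) * h.FK x ^ 2)
        + ((1 / (2 * e ^ 3)) * ((heatSlope N e⁻¹ x.2 ^ 2 * heatMass N e x.2) * h.v x ^ 2)
        + (8 * (x.2 ^ (N + 1) * |h.σK x|)
        + 32 * (exp (-(e ^ 3 * x.1)) * heatMass N e x.2))))))) := by
    refine rect_mono (by fun_prop) (by fun_prop) fun x hx => ?_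
    have hr := h.pos_of_mem hx.2
    have hv : |h.v x| ≤ 8 := h.abs_v_le hx.1 hx.2
    have hW0 : |h.W0 x| ≤ 4 * exp (-(e ^ 3 * x.1)) := h.abs_W0_le hx.2
    have hg0 : 0 ≤ heatMass N e x.2 := heatMass_nonneg N e hr.le
    have hgw : heatMass N e x.2 ≤ x.2 ^ (N + 1) := heatMass_le N e hr.le
    simp only [hfB]
    generalize heatMass N e x.2 = g at *
    generalize heatSlope N e⁻¹ x.2 = p at *
    generalize h.v x = v at *
    generalize h.vr x = vr at *
    generalize h.V x = V at *
    generalize h.FK x = FK at *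
    generalize h.σK x = s at *
    generalize h.W0 x = W0 at *
    generalize x.2 ^ (N + 1) = w at *
    generalize exp (-(e ^ 3 * x.1)) = E at *
    have i1 := mul_le_mul_of_nonneg_left (mul_le_young hη vr (-(p * V)))
      (mul_nonneg (pow_nonneg he.le 4) hg0)
    have i2 := mul_le_mul_of_nonneg_left (mul_le_young (mul_pos hη (pow_pos he 4)) vr FK) hg0
    have i3 := mul_le_mul_of_nonneg_left (mul_le_young (pow_pos he 3) FK (-(p * v))) hg0
    have hw0 : 0 ≤ w := hg0.trans hgw
    have i4 : g * (v * s) ≤ 8 * (w * |s|) := by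
      calc g * (v * s) ≤ g * |v * s| := by gcongr; exact le_abs_self _
        _ = g * (|v| * |s|) := by rw [abs_mul]
        _ ≤ w * (8 * |s|) := by gcongr
        _ = _ := by ring
    have i5 : g * (v * W0) ≤ 32 * (E * g) := by
      calc g * (v * W0) ≤ g * |v * W0| := by gcongr; exact le_abs_self _
        _ = g * (|v| * |W0|) := by rw [abs_mul]
        _ ≤ g * (8 * (4 * E)) := by gcongr
        _ = _ := by ring
    have i6 : (1 / (2 * (η * e ^ 4)) + e ^ 3 / 2) * (g * FK ^ 2)
        ≤ (1 / (2 * (η * e ^ 4)) + e ^ 3 / 2) * (w * FK ^ 2) := by gcongr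
    have e1 : e ^ 4 * g * (1 / (2 * η) * (-(p * V)) ^ 2) = e ^ 4 / (2 * η) * (p ^ 2 * g * V ^ 2) := by
      ring
    linarith
  rw [rect_add (by fun_prop) (by fun_prop), rect_add (by fun_prop) (by fun_prop),
    rect_add (by fun_prop) (by fun_prop), rect_add (by fun_prop) (by fun_prop),
    rect_add (by fun_prop) (by fun_prop), rect_add (by fun_prop) (by fun_prop),
    integral_const_mul, integral_const_mul, integral_const_mul, integral_const_mul,
    integral_const_mul, integral_const_mul] at key
  linarith

/-- The weighted dissipation of the high-frequency part. -/
lemma integral_vr_sq_le :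
    3 / 4 * (e ^ 4 * ∫ x in rect T a b, heatMass N e x.2 * h.vr x ^ 2)
      ≤ 1 / 2 * (∫ r in a..b, heatMass N e r * h.W (0, r) ^ 2)
        + (1 / e ^ 4 + 1 / 2) * (∫ x in rect T a b, x.2 ^ (N + 1) * h.FH x ^ 2)
        + 1 / 2 * (∫ x in rect T a b,
          (heatSlope N e⁻¹ x.2 ^ 2 * heatMass N e x.2) * h.v x ^ 2)
        + (8 * N + 20) / 2 * e ^ 2 * (∫ x in rect T a b, heatMass N e x.2 * h.v x ^ 2)
        + 8 * (∫ x in rect T a b, x.2 ^ (N + 1) * |h.σH x|)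
        + 32 * (e ^ 3 * ∫ x in rect T a b, exp (-(e ^ 3 * x.1)) * heatMass N e x.2) := by
  have he := h.e_pos
  have key := h.highFreq_identity.trans (b := _) (c := ∫ x in rect T a b,
      ((-(3 / 4 * e ^ 4)) * (heatMass N e x.2 * h.vr x ^ 2)
        + ((1 / e ^ 4 + 1 / 2) * (x.2 ^ (N + 1) * h.FH x ^ 2)
        + ((1 / 2) * ((heatSlope N e⁻¹ x.2 ^ 2 * heatMass N e x.2) * h.v x ^ 2)
        + (((8 * N + 20) / 2 * e ^ 2) * (heatMass N e x.2 * h.v x ^ 2)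
        + (8 * (x.2 ^ (N + 1) * |h.σH x|)
        + (32 * e ^ 3) * (exp (-(e ^ 3 * x.1)) * heatMass N e x.2))))))) <| by
    refine rect_mono (by fun_prop) (by fun_prop) fun x hx => ?_
    have hr := h.pos_of_mem hx.2
    have hv : |h.v x| ≤ 8 := h.abs_v_le hx.1 hx.2
    have hW0 : |h.W0 x| ≤ 4 * exp (-(e ^ 3 * x.1)) := h.abs_W0_le hx.2
    have hg0 : 0 ≤ heatMass N e x.2 := heatMass_nonneg N e hr.le
    have hgw : heatMass N e x.2 ≤ x.2 ^ (N + 1) := heatMass_le N e hr.le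
    have hsup := mul_le_mul_of_nonneg_left (heatWeight_almost_superharmonic N (l := e⁻¹) hr)
      (mul_nonneg (mul_nonneg (half_pos (pow_pos he 4)).le (sq_nonneg (h.v x)))
        (heatWeight_pos N e⁻¹ x.2).le)
    have hee : e ^ 4 / 2 * h.v x ^ 2 * heatWeight N e⁻¹ x.2 * ((8 * N + 20) * e⁻¹ ^ 2 * x.2 ^ (N + 1))
        = ((8 * N + 20) / 2 * e ^ 2) * (heatMass N e x.2 * h.v x ^ 2) := by
      unfold heatMass
      field_simp
    rw [hee] at hsup
    generalize -((N + 1) * x.2 ^ N * heatSlope N e⁻¹ x.2) + x.2 ^ (N + 1) *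
      (heatSlope N e⁻¹ x.2 ^ 2 - heatSlopeDeriv N e⁻¹ x.2) = Y at *
    generalize heatMass N e x.2 = g at *
    generalize heatWeight N e⁻¹ x.2 = G at *
    generalize heatSlope N e⁻¹ x.2 = p at *
    generalize h.v x = v at *
    generalize h.vr x = vr at *
    generalize h.FH x = F at *
    generalize h.σH x = s at *
    generalize h.W0 x = W0 at *
    generalize x.2 ^ (N + 1) = w at *
    generalize exp (-(e ^ 3 * x.1)) = E at *
    have i1 := mul_le_mul_of_nonneg_left (mul_le_young (half_pos (pow_pos he 4)) vr F) hg0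
    have i2 := mul_le_mul_of_nonneg_left (mul_le_young one_pos (-(p * v)) F) hg0
    have hw0 : 0 ≤ w := hg0.trans hgw
    have i3 : g * (v * s) ≤ 8 * (w * |s|) := by
      calc g * (v * s) ≤ g * |v * s| := by gcongr; exact le_abs_self _
        _ = g * (|v| * |s|) := by rw [abs_mul]
        _ ≤ w * (8 * |s|) := by gcongr
        _ = _ := by ring
    have i4 : -(g * (v * W0)) ≤ 32 * (E * g) := by
      calc -(g * (v * W0)) = g * -(v * W0) := by ring
        _ ≤ g * |v * W0| := by gcongr; exact neg_le_abs _
        _ = g * (|v| * |W0|) := by rw [abs_mul]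
        _ ≤ g * (8 * (4 * E)) := by gcongr
        _ = _ := by ring
    have i4' := mul_le_mul_of_nonneg_left i4 (pow_pos he 3).le
    have i5 : (1 / e ^ 4 + 1 / 2) * (g * F ^ 2) ≤ (1 / e ^ 4 + 1 / 2) * (w * F ^ 2) := by gcongr
    have e1 : 1 / (2 * (e ^ 4 / 2)) = 1 / e ^ 4 := by congr 1; ring
    rw [e1] at i1
    linarith
  rw [rect_add (by fun_prop) (by fun_prop), rect_add (by fun_prop) (by fun_prop),
    rect_add (by fun_prop) (by fun_prop), rect_add (by fun_prop) (by fun_prop),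
    rect_add (by fun_prop) (by fun_prop),
    integral_const_mul, integral_const_mul, integral_const_mul, integral_const_mul,
    integral_const_mul, integral_const_mul] at key
  linarith

lemma integral_initial_le :
    ∫ r in a..b, heatMass N e r * h.W (0, r) ^ 2 ≤ 8 * e ^ 2 := by
  have h1 : ∫ r in a..b, heatMass N e r * h.W (0, r) ^ 2 ≤ ∫ r in a..b, heatMass N e r * 16 := by
    refine intervalIntegral.integral_mono_on h.hab
        (Continuous.intervalIntegrable (by fun_prop) _ _)
        (Continuous.intervalIntegrable (by fun_prop) _ _) fun r hr => ?_
    have h2 := h.bound_W 0 ⟨le_rfl, h.hT.le⟩ r hr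
    have h3 : h.W (0, r) ^ 2 ≤ 16 := by
      rw [← sq_abs]
      nlinarith [abs_nonneg (h.W (0, r))]
    exact mul_le_mul_of_nonneg_left h3 (heatMass_nonneg N e (h.pos_of_mem hr).le)
  rw [intervalIntegral.integral_mul_const] at h1
  linarith [h.integral_heatMass_le]

/-- The constant in the bound for the weighted dissipation of the high-frequency part. -/
def highFreqConst (N : ℕ) (T CF Cs B : ℝ) : ℝ :=
  2 * (20 + 6 * CF + 2 * (T * ((N + 4) ^ 2 * B)) + 16 * Cs + (8 * N + 20) / 2 *
    ((8 * N + 20) * (T * ((N + 4) ^ 2 * B)) + (8 * N + 20) * CF + CF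
      + 2 * (T * ((N + 4) ^ 2 * B)) + 8 * Cs + 16 + (N + 4) ^ 2 * B))

lemma highFreq_dissipation_le :
    e ^ 4 * ∫ x in rect T a b, heatMass N e x.2 * h.vr x ^ 2
      ≤ highFreqConst N T CF Cs B * e ^ 2 := by
  have he := h.e_pos
  have he1 := h.he
  have hCF := h.CF_nonneg
  have hCs := h.Cs_nonneg
  have hB := h.B_nonneg
  have hT := h.hT
  set C0 : ℝ := 8 * N + 20 with hC0
  have hC0p : 20 ≤ C0 := by rw [hC0]; linarith [Nat.cast_nonneg (α := ℝ) N]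
  have hη : 0 < 1 / (2 * C0 * e ^ 2) := by positivity
  have hX := h.integral_v_sq_le hη
  have hD := h.integral_vr_sq_le
  have a1 := h.integral_initial_le
  have a2 := h.integral_FH_sq_le
  have a3 := h.integral_slope_v_le
  have a4 := h.integral_σH_le
  have a5 := h.integral_exp_heatMass_le
  have a6 := h.integral_slope_V_le
  have a7 := h.integral_FK_sq_le
  have a8 := h.integral_σK_le
  have a9 := h.slice_slope_V_le
  have n2 : 0 ≤ ∫ x in rect T a b, x.2 ^ (N + 1) * h.FH x ^ 2 := rect_nonneg fun x hx =>
    mul_nonneg (pow_nonneg (h.pos_of_mem hx.2).le _) (sq_nonneg _)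
  have n3 : 0 ≤ ∫ x in rect T a b, (heatSlope N e⁻¹ x.2 ^ 2 * heatMass N e x.2) * h.v x ^ 2 :=
    rect_nonneg fun x hx => mul_nonneg (h.slope_mass_nonneg hx.2) (sq_nonneg _)
  have n7 : 0 ≤ ∫ x in rect T a b, x.2 ^ (N + 1) * h.FK x ^ 2 := rect_nonneg fun x hx =>
    mul_nonneg (pow_nonneg (h.pos_of_mem hx.2).le _) (sq_nonneg _)
  have n8 : 0 ≤ ∫ x in rect T a b, x.2 ^ (N + 1) * |h.σK x| := rect_nonneg fun x hx =>
    mul_nonneg (pow_nonneg (h.pos_of_mem hx.2).le _) (abs_nonneg _)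
  have n5 : 0 ≤ ∫ x in rect T a b, exp (-(e ^ 3 * x.1)) * heatMass N e x.2 := rect_nonneg
    fun x hx => mul_nonneg (exp_pos _).le (heatMass_nonneg N e (h.pos_of_mem hx.2).le)
  have n9 : 0 ≤ ∫ r in a..b, (heatSlope N e⁻¹ r ^ 2 * heatMass N e r) * h.V (T, r) ^ 2 :=
    intervalIntegral.integral_nonneg h.hab
      fun r hr => mul_nonneg (h.slope_mass_nonneg hr) (sq_nonneg _)
  unfold highFreqConst
  rw [← hC0]
  set Bp : ℝ := (N + 4) ^ 2 * B with hBp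
  have hBp0 : 0 ≤ Bp := by positivity
  exact highFreq_arithmetic he1 hCF hCs hT hC0p hBp0 hX hD a1 a2 a3 a4 a5 a6 a7 a8 a9 n2 n3 n5 n7 n8 n9

end HeatData

namespace HeatData

variable {N : ℕ} {T a b e CF Cs B : ℝ} (h : HeatData N T a b e CF Cs B)

/-- The accumulated filtered source. -/
def sourceMass (x : ℝ × ℝ) : ℝ := ∫ s in a..x.2, s ^ (N + 1) * h.σK (x.1, s)

@[fun_prop] lemma continuous_sourceMass : Continuous h.sourceMass := by
  unfold sourceMass
  refine intervalIntegral.continuous_parametric_intervalIntegral_of_continuous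
    (f := fun x : ℝ × ℝ => fun s => s ^ (N + 1) * h.σK (x.1, s)) ?_ continuous_snd
  simp only [Function.uncurry_def]
  fun_prop

lemma hasDerivAt_sourceMass (t r : ℝ) :
    HasDerivAt (fun y => h.sourceMass (t, y)) (r ^ (N + 1) * h.σK (t, r)) r := by
  
  have hc : Continuous fun s => s ^ (N + 1) * h.σK (t, s) := by fun_prop
  exact intervalIntegral.integral_hasDerivAt_right (hc.intervalIntegrable a r)
    (hc.stronglyMeasurableAtFilter _ _) hc.continuousAt

lemma abs_flux_le {t r : ℝ} (ht : t ∈ Icc 0 T) (hr : r ∈ Icc a 2) :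
    |e ^ 4 * (r ^ (N + 1) * h.Vr (t, r)) - r ^ (N + 1) * h.FK (t, r) + h.sourceMass (t, r)|
      ≤ 24 * r ^ (N + 1) := by
  have hd : ∀ y : ℝ, HasDerivAt (fun r => e ^ 4 * (r ^ (N + 1) * h.Vr (t, r))
      - r ^ (N + 1) * h.FK (t, r) + h.sourceMass (t, r))
      (e ^ 4 * (y ^ (N + 1) * h.Vrr (t, y) + (N + 1) * y ^ N * h.Vr (t, y))
        - (y ^ (N + 1) * h.FKr (t, y) + (N + 1) * y ^ N * h.FK (t, y))
        + y ^ (N + 1) * h.σK (t, y)) y := fun y => by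
    have hw : HasDerivAt (fun r : ℝ => r ^ (N + 1)) ((N + 1) * y ^ N) y := by
      simpa using hasDerivAt_pow (N + 1) y
    refine ((((hw.mul (h.hasDerivAt_Vr t y)).const_mul (e ^ 4)).sub
      (hw.mul (h.hasDerivAt_FK t y))).add (h.hasDerivAt_sourceMass t y)).congr_deriv ?_
    ring
  have ha := h.ha
  have hr0 : 0 < r := ha.trans_le hr.1
  have key := norm_image_sub_le_of_norm_deriv_le_segment' (a := a) (b := r)
    (C := 12 * r ^ (N + 1)) (fun y _ => (hd y).hasDerivWithinAt) (fun y hy => ?_) r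
    ⟨hr.1, le_rfl⟩
  · have h0 : h.sourceMass (t, a) = 0 := by simp [sourceMass]
    simp only [h.Vr_left ht, h.FK_left ht, h0, mul_zero, sub_zero, add_zero, norm_eq_abs] at key
    calc _ ≤ _ := key
      _ ≤ 12 * r ^ (N + 1) * 2 := by
        gcongr
        linarith [hr.2]
      _ = _ := by ring
  · have hyb : y ∈ Icc a b := ⟨hy.1, by linarith [hy.2, hr.2, h.hb]⟩
    have hy0 : 0 < y := ha.trans_le hy.1
    have e1 : e ^ 4 * (y ^ (N + 1) * h.Vrr (t, y) + (N + 1) * y ^ N * h.Vr (t, y))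
        - (y ^ (N + 1) * h.FKr (t, y) + (N + 1) * y ^ N * h.FK (t, y))
        + y ^ (N + 1) * h.σK (t, y) = y ^ (N + 1) * (h.v (t, y) - h.W0 (t, y)) := by
      linear_combination -h.filtered_pde ht hyb
    rw [e1, norm_eq_abs, abs_mul, abs_of_pos (pow_pos hy0 _), mul_comm]
    have h1 : |h.W0 (t, y)| ≤ 4 := (h.abs_W0_le hyb).trans (by
      have : exp (-(e ^ 3 * t)) ≤ 1 := exp_le_one_iff.2 (by
        have := mul_nonneg (pow_pos h.e_pos 3).le ht.1
        linarith)
      linarith)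
    have h2 := abs_sub (h.v (t, y)) (h.W0 (t, y))
    have h3 := h.abs_v_le ht hyb
    have h4 : y ^ (N + 1) ≤ r ^ (N + 1) := by gcongr; exact hy.2.le
    gcongr
    linarith

lemma rect_two_le {f : ℝ × ℝ → ℝ} (h : HeatData N T a b e CF Cs B)
    (hf : ContinuousOn f (rect T a b)) (h0 : ∀ x ∈ rect T a b, 0 ≤ f x) :
    ∫ x in rect T a 2, f x ≤ ∫ x in rect T a b, f x := rect_subset_mono hf h0 h.hb.le

lemma neg_integral_Vr_sourceMass_le :
    e ^ 6 * -∫ x in rect T a 2, h.Vr x * h.sourceMass x ≤ 8 * Cs := by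
  have he := h.e_pos
  have ha2 : a ≤ 2 := by linarith [h.ha1]
  set SK := ∫ x in rect T a 2, x.2 ^ (N + 1) * |h.σK x| with hSK
  have hV : ∀ t ∈ Icc 0 T, ∀ r ∈ Icc a 2, e ^ 3 * |h.V (t, r)| ≤ 4 := fun t ht r hr =>
    h.abs_V_le ht ⟨hr.1, hr.2.trans h.hb.le⟩
  have h1 := rect_dr (B := fun x => h.V x * h.sourceMass x)
    (Br := fun x => h.Vr x * h.sourceMass x + h.V x * (x.2 ^ (N + 1) * h.σK x))
    (T := T) (a := a) (b := 2) (by fun_prop) h.hT.le ha2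
    fun t _ r _ => (h.hasDerivAt_V t r).mul (h.hasDerivAt_sourceMass t r)
  rw [rect_add (by fun_prop) (by fun_prop)] at h1
  have h2 : e ^ 3 * ∫ x in rect T a 2, h.V x * (x.2 ^ (N + 1) * h.σK x) ≤ 4 * SK := by
    rw [hSK, ← integral_const_mul, ← integral_const_mul]
    refine rect_mono (by fun_prop) (by fun_prop) fun x hx => ?_
    have hr : 0 < x.2 := h.ha.trans_le hx.2.1
    calc e ^ 3 * (h.V x * (x.2 ^ (N + 1) * h.σK x))
        ≤ |e ^ 3 * (h.V x * (x.2 ^ (N + 1) * h.σK x))| := le_abs_self _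
      _ = (e ^ 3 * |h.V x|) * (x.2 ^ (N + 1) * |h.σK x|) := by
        rw [abs_mul, abs_mul, abs_mul, abs_of_pos (pow_pos he 3), abs_of_pos (pow_pos hr _)]
        ring
      _ ≤ _ := by
        gcongr
        exact hV x.1 hx.1 x.2 hx.2
  have h3 : e ^ 3 * -∫ t in (0)..T, (h.V (t, 2) * h.sourceMass (t, 2)
      - h.V (t, a) * h.sourceMass (t, a)) ≤ 4 * SK := by
    rw [hSK, integral_rect (by fun_prop) h.hT.le ha2, ← intervalIntegral.integral_neg,
      ← intervalIntegral.integral_const_mul, ← intervalIntegral.integral_const_mul]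
    refine intervalIntegral.integral_mono_on h.hT.le
      (Continuous.intervalIntegrable (by fun_prop) _ _)
      (Continuous.intervalIntegrable ?_ _ _) fun t ht => ?_
    · have : Continuous fun t => ∫ r in a..2, r ^ (N + 1) * |h.σK (t, r)| :=
        intervalIntegral.continuous_parametric_intervalIntegral_of_continuous'
          (f := fun t r => r ^ (N + 1) * |h.σK (t, r)|)
          (by simp only [Function.uncurry_def]; fun_prop) _ _
      exact this.const_mul _
    · have h0 : h.sourceMass (t, a) = 0 := by simp [sourceMass]
      have h5 : |h.sourceMass (t, 2)| ≤ ∫ r in a..2, r ^ (N + 1) * |h.σK (t, r)| := by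
        have h6 := intervalIntegral.abs_integral_le_integral_abs (μ := volume)
          (f := fun s => s ^ (N + 1) * h.σK (t, s)) ha2
        refine h6.trans_eq (intervalIntegral.integral_congr fun r hr => ?_)
        rw [uIcc_of_le ha2] at hr
        simp only [abs_mul, abs_of_pos (pow_pos (h.ha.trans_le hr.1) (N + 1))]
      calc e ^ 3 * -(h.V (t, 2) * h.sourceMass (t, 2) - h.V (t, a) * h.sourceMass (t, a))
          ≤ e ^ 3 * |h.V (t, 2) * h.sourceMass (t, 2)| := by
            rw [h0, mul_zero, sub_zero]
            gcongr
            exact neg_le_abs _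
        _ = (e ^ 3 * |h.V (t, 2)|) * |h.sourceMass (t, 2)| := by rw [abs_mul]; ring
        _ ≤ 4 * _ := by
            gcongr
            exact hV t ht 2 ⟨ha2, le_rfl⟩
  have h4 : e ^ 3 * SK ≤ Cs := le_trans (by
    gcongr
    exact h.rect_two_le (by fun_prop) fun x hx =>
      mul_nonneg (pow_nonneg (h.pos_of_mem hx.2).le _) (abs_nonneg _)) h.integral_σK_le
  have h7 : e ^ 3 * -∫ x in rect T a 2, h.Vr x * h.sourceMass x ≤ 8 * SK := by
    linear_combination h2 + h3 - e ^ 3 * h1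
  calc e ^ 6 * -∫ x in rect T a 2, h.Vr x * h.sourceMass x
      = e ^ 3 * (e ^ 3 * -∫ x in rect T a 2, h.Vr x * h.sourceMass x) := by ring
    _ ≤ e ^ 3 * (8 * SK) := by gcongr
    _ = 8 * (e ^ 3 * SK) := by ring
    _ ≤ _ := by gcongr

lemma integral_pow_two_le (h : HeatData N T a b e CF Cs B) :
    ∫ x in rect T a 2, x.2 ^ (N + 1) ≤ T * 2 ^ (N + 2) := by
  have ha2 : a ≤ 2 := by linarith [h.ha1]
  have ha := h.ha
  refine rect_le_of_slice (by fun_prop) h.hT.le ha2 fun t _ => ?_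
  have h1 : ∫ r in a..2, r ^ (N + 1) ≤ ∫ r in a..2, (2 : ℝ) ^ (N + 1) :=
    intervalIntegral.integral_mono_on ha2 (Continuous.intervalIntegrable (by fun_prop) _ _)
      (Continuous.intervalIntegrable (by fun_prop) _ _) fun r hr =>
        pow_le_pow_left₀ (ha.le.trans hr.1) hr.2 _
  rw [intervalIntegral.integral_const, smul_eq_mul] at h1
  calc _ ≤ _ := h1
    _ ≤ 2 * 2 ^ (N + 1) := by gcongr; linarith
    _ = _ := by ring

lemma lowFreq_dissipation_le :
    e ^ 10 * ∫ x in rect T a 2, x.2 ^ (N + 1) * h.Vr x ^ 2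
      ≤ 2 * (576 * (T * 2 ^ (N + 2)) + CF + 8 * Cs) * e ^ 2 := by
  have he := h.e_pos
  have he1 := h.he
  have hCs := h.Cs_nonneg
  have key : ∫ x in rect T a 2, (e ^ 4 / 2) * (x.2 ^ (N + 1) * h.Vr x ^ 2)
      ≤ ∫ x in rect T a 2, ((576 / e ^ 4) * x.2 ^ (N + 1)
        + ((1 / e ^ 4) * (x.2 ^ (N + 1) * h.FK x ^ 2) + (-1) * (h.Vr x * h.sourceMass x))) := by
    refine rect_mono (by fun_prop) (by fun_prop) fun x hx => ?_
    have hw : 0 < x.2 ^ (N + 1) := pow_pos (h.ha.trans_le hx.2.1) _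
    have hY := h.abs_flux_le hx.1 hx.2
    simp only [Prod.mk.eta] at hY
    generalize h.sourceMass x = S at *
    generalize h.Vr x = Vr at *
    generalize h.FK x = F at *
    generalize x.2 ^ (N + 1) = w at *
    have i1 := mul_le_mul_of_nonneg_left (mul_le_young (half_pos (pow_pos he 4)) Vr F) hw.le
    have i2 := mul_le_mul_of_nonneg_left (mul_le_young (half_pos (pow_pos he 4)) |Vr| 24) hw.le
    have i3 : Vr * (e ^ 4 * (w * Vr) - w * F + S) ≤ |Vr| * (24 * w) := by
      calc _ ≤ |Vr * (e ^ 4 * (w * Vr) - w * F + S)| := le_abs_self _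
        _ = |Vr| * |e ^ 4 * (w * Vr) - w * F + S| := abs_mul _ _
        _ ≤ _ := by gcongr
    have e1 : 1 / (2 * (e ^ 4 / 2)) = 1 / e ^ 4 := by congr 1; ring
    have e2 : 576 / e ^ 4 * w = w * (1 / e ^ 4 * 24 ^ 2) := by ring
    rw [e1] at i1 i2
    rw [sq_abs] at i2
    rw [e2]
    linarith
  rw [rect_add (by fun_prop) (by fun_prop), rect_add (by fun_prop) (by fun_prop),
    integral_const_mul, integral_const_mul, integral_const_mul, integral_const_mul] at key
  have h1 := h.integral_pow_two_le
  have h2 := h.neg_integral_Vr_sourceMass_le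
  have h3 : e ^ 6 * ∫ x in rect T a 2, x.2 ^ (N + 1) * h.FK x ^ 2 ≤ CF :=
    (mul_le_mul_of_nonneg_left (h.rect_two_le (f := fun x => x.2 ^ (N + 1) * h.FK x ^ 2)
      (by fun_prop) fun x hx => mul_nonneg (pow_nonneg (h.pos_of_mem hx.2).le _) (sq_nonneg _))
      (pow_pos he 6).le).trans h.integral_FK_sq_le
  have n3 : 0 ≤ ∫ x in rect T a 2, x.2 ^ (N + 1) * h.FK x ^ 2 := rect_nonneg fun x hx =>
    mul_nonneg (pow_nonneg (h.ha.trans_le hx.2.1).le _) (sq_nonneg _)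
  generalize (∫ x in rect T a 2, x.2 ^ (N + 1) * h.FK x ^ 2) = Φ at *
  generalize (∫ x in rect T a 2, x.2 ^ (N + 1) * h.Vr x ^ 2) = D at *
  generalize (∫ x in rect T a 2, h.Vr x * h.sourceMass x) = Q at *
  generalize (∫ x in rect T a 2, x.2 ^ (N + 1)) = P at *
  have k1 := mul_le_mul_of_nonneg_left key (by positivity : 0 ≤ 2 * e ^ 6)
  have k2 : 2 * e ^ 6 * (e ^ 4 / 2 * D) = e ^ 10 * D := by ring
  have k3 : 2 * e ^ 6 * (576 / e ^ 4 * P + (1 / e ^ 4 * Φ + -1 * Q))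
      = 2 * (576 * P * e ^ 2 + e ^ 2 * Φ + e ^ 6 * -Q) := by
    field_simp
    ring
  rw [k2, k3] at k1
  have k4 : e ^ 2 * Φ ≤ CF * e ^ 2 := by
    have : Φ ≤ CF := (le_mul_of_one_le_left n3 (one_le_pow₀ he1)).trans h3
    rw [mul_comm]
    gcongr
  have k5 : 8 * Cs ≤ 8 * Cs * e ^ 2 := le_mul_of_one_le_right (by positivity) (one_le_pow₀ he1)
  have k6 : 576 * P * e ^ 2 ≤ 576 * (T * 2 ^ (N + 2)) * e ^ 2 := by gcongr
  linarith

/-- The constant in the final dissipation bound. -/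
def dissipationConst (N : ℕ) (T CF Cs B : ℝ) : ℝ :=
  2 * (25 * 5 ^ (N / 2 : ℝ)) * highFreqConst N T CF Cs B
    + 4 * (576 * (T * 2 ^ (N + 2)) + CF + 8 * Cs)

lemma dissipation_le :
    e ^ 4 * ∫ x in rect T a 2, x.2 ^ (N + 1) * h.Wr x ^ 2
      ≤ dissipationConst N T CF Cs B * e ^ 2 := by
  have he := h.e_pos
  have h1 := h.lowFreq_dissipation_le
  have h2 : e ^ 4 * ∫ x in rect T a 2, heatMass N e x.2 * h.vr x ^ 2
      ≤ highFreqConst N T CF Cs B * e ^ 2 :=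
    (mul_le_mul_of_nonneg_left (h.rect_two_le (f := fun x => heatMass N e x.2 * h.vr x ^ 2)
      (by fun_prop) fun x hx =>
        mul_nonneg (heatMass_nonneg N e (h.pos_of_mem hx.2).le) (sq_nonneg _))
      (pow_pos he 4).le).trans h.highFreq_dissipation_le
  have h3 : ∫ x in rect T a 2, x.2 ^ (N + 1) * h.Wr x ^ 2
      ≤ ∫ x in rect T a 2, ((2 * (25 * 5 ^ (N / 2 : ℝ))) * (heatMass N e x.2 * h.vr x ^ 2)
        + (2 * e ^ 6) * (x.2 ^ (N + 1) * h.Vr x ^ 2)) := by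
    refine rect_mono (by fun_prop) (by fun_prop) fun x hx => ?_
    have hr : 0 < x.2 := h.ha.trans_le hx.2.1
    have hG := heatWeight_lower (N := N) (inv_pos.2 he).le h.inv_e_le_one hr.le hx.2.2
    have hm : x.2 ^ (N + 1) ≤ 25 * 5 ^ (N / 2 : ℝ) * heatMass N e x.2 := by
      unfold heatMass
      have hc : (25 * 5 ^ (N / 2 : ℝ)) * ((5 : ℝ) ^ (-(N / 2 : ℝ)) / 25) = 1 := by
        rw [rpow_neg (by norm_num)]
        field_simp
      have := mul_le_mul_of_nonneg_left hG (by positivity : (0:ℝ) ≤ 25 * 5 ^ (N / 2 : ℝ))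
      rw [hc] at this
      calc x.2 ^ (N + 1) ≤ x.2 ^ (N + 1) * (25 * 5 ^ (N / 2 : ℝ) * heatWeight N e⁻¹ x.2) :=
            le_mul_of_one_le_right (by positivity) this
        _ = _ := by ring
    have hW : h.Wr x = h.vr x + e ^ 3 * h.Vr x := by simp [vr]
    have h4 := mul_le_mul_of_nonneg_right hm (sq_nonneg (h.vr x))
    have h5 : 0 ≤ x.2 ^ (N + 1) * (h.vr x - e ^ 3 * h.Vr x) ^ 2 := by positivity
    rw [hW]
    linarith
  rw [rect_add (by fun_prop) (by fun_prop), integral_const_mul, integral_const_mul] at h3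
  have h4 := mul_le_mul_of_nonneg_left h3 (pow_pos he 4).le
  have h5 := mul_le_mul_of_nonneg_left h2 (by positivity : (0:ℝ) ≤ 2 * (25 * 5 ^ (N / 2 : ℝ)))
  unfold dissipationConst
  linarith

end HeatData

lemma rpow_tangent_le {γ x y : ℝ} (hγ : 1 ≤ γ) (hx : 0 < x) (hy : 0 < y) :
    y ^ γ + γ * y ^ (γ - 1) * (x - y) ≤ x ^ γ := by
  have h1 := one_add_mul_self_le_rpow_one_add (s := x / y - 1)
    (by have := (div_pos hx hy).le; linarith) hγ
  have h2 := mul_le_mul_of_nonneg_left h1 (rpow_pos_of_pos hy γ).le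
  have h3 : y ^ γ * (1 + (x / y - 1)) ^ γ = x ^ γ := by
    rw [← mul_rpow hy.le (by have := (div_pos hx hy).le; linarith)]
    congr 1
    field_simp
    ring
  rw [h3] at h2
  refine le_trans (le_of_eq ?_) h2
  rw [rpow_sub_one hy.ne']
  field_simp

/-- Lower bound for the relative internal energy through an intermediate density. -/
lemma le_hBarDelta {γ δ ρ ρbar μ : ℝ} (hγ : 1 < γ) (hδ : 0 < δ) (hρ : 0 < ρ) (hρbar : 0 < ρbar)
    (hμ : 0 < μ) : (γ - 1) / 4 * ((μ ^ (γ - 1) - ρbar ^ (γ - 1)) * (ρ - μ))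
      ≤ hBarDelta γ ((γ - 1) ^ (2:ℕ) / (4 * γ)) δ ρ ρbar := by
  have h1 := rpow_tangent_le hγ.le hρ hμ
  have h2 := rpow_tangent_le hγ.le hμ hρbar
  have hγ0 : 0 < γ := by linarith
  have hγ1 : 0 < γ - 1 := by linarith
  have h3 : 0 ≤ (γ - 1) / (4 * γ) * (ρ ^ γ - ρbar ^ γ - γ * ρbar ^ (γ - 1) * (ρ - ρbar)
      - γ * ((μ ^ (γ - 1) - ρbar ^ (γ - 1)) * (ρ - μ))) :=
    mul_nonneg (by positivity) (by linarith)
  have h4 : hBarDelta γ ((γ - 1) ^ (2:ℕ) / (4 * γ)) δ ρ ρbar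
      = (γ - 1) / (4 * γ) * (ρ ^ γ - ρbar ^ γ - γ * ρbar ^ (γ - 1) * (ρ - ρbar))
        + δ * (ρ - ρbar) ^ 2 := by
    unfold hBarDelta hDelta hDelta'
    field_simp
    ring
  have h5 : (γ - 1) / (4 * γ) * (γ * ((μ ^ (γ - 1) - ρbar ^ (γ - 1)) * (ρ - μ)))
      = (γ - 1) / 4 * ((μ ^ (γ - 1) - ρbar ^ (γ - 1)) * (ρ - μ)) := by
    field_simp
  have h6 : 0 ≤ δ * (ρ - ρbar) ^ 2 := by positivity
  rw [h4]
  linarith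

lemma hBarDelta_nonneg {γ δ ρ ρbar : ℝ} (hγ : 1 < γ) (hδ : 0 < δ) (hρ : 0 < ρ)
    (hρbar : 0 < ρbar) : 0 ≤ hBarDelta γ ((γ - 1) ^ (2:ℕ) / (4 * γ)) δ ρ ρbar := by
  simpa using le_hBarDelta hγ hδ hρ hρbar hρbar

lemma le_rpow_sub_rpow {θ x y : ℝ} {k : ℕ} (hθ : 0 < θ) (hk : θ ≤ k) (hk1 : 1 ≤ k) (hy : 0 < y)
    (hxy : y ≤ x) (hx : x ≤ 2) (hd : x - y ≤ 1) :
    min 1 (θ / 2) * (x - y) ^ k ≤ x ^ θ - y ^ θ := by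
  have hx0 : 0 < x := hy.trans_le hxy
  have hd0 : 0 ≤ x - y := sub_nonneg.2 hxy
  rcases le_total 1 θ with h1 | h1
  · have h2 : y ^ θ + (x - y) ^ θ ≤ x ^ θ := by
      simpa using add_rpow_le_rpow_add hy.le hd0 h1
    have h3 : (x - y) ^ k ≤ (x - y) ^ θ := by
      rw [← rpow_natCast]
      exact rpow_le_rpow_of_exponent_ge_of_imp hd0 hd hk fun _ h =>
        absurd (Nat.cast_eq_zero.1 h) (by omega)
    calc min 1 (θ / 2) * (x - y) ^ k ≤ 1 * (x - y) ^ k := by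
          gcongr
          exact min_le_left _ _
      _ ≤ _ := by linarith
  · have h2 := rpow_one_add_le_one_add_mul_self (s := y / x - 1)
      (by have := (div_pos hy hx0).le; linarith) hθ.le h1
    have h3 := mul_le_mul_of_nonneg_left h2 (rpow_pos_of_pos hx0 θ).le
    have h4 : x ^ θ * (1 + (y / x - 1)) ^ θ = y ^ θ := by
      rw [← mul_rpow hx0.le (by have := (div_pos hy hx0).le; linarith)]
      congr 1
      field_simp
      ring
    rw [h4] at h3
    have h5 : x ^ θ * (1 + θ * (y / x - 1)) = x ^ θ - θ * x ^ (θ - 1) * (x - y) := by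
      rw [rpow_sub_one hx0.ne']
      field_simp
      ring
    have h6 : 1 / 2 ≤ x ^ (θ - 1) := by
      calc (1 / 2 : ℝ) = 2 ^ (-1 : ℝ) := by rw [rpow_neg_one]; norm_num
        _ ≤ 2 ^ (θ - 1) := rpow_le_rpow_of_exponent_le (by norm_num) (by linarith)
        _ ≤ x ^ (θ - 1) := rpow_le_rpow_of_nonpos hx0 hx (by linarith)
    calc min 1 (θ / 2) * (x - y) ^ k ≤ θ / 2 * (x - y) ^ k := by
          gcongr
          exact min_le_right _ _
      _ ≤ θ / 2 * (x - y) := by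
          gcongr
          exact pow_le_of_le_one hd0 hd (by omega)
      _ = θ * (1 / 2) * (x - y) := by ring
      _ ≤ θ * x ^ (θ - 1) * (x - y) := by gcongr
      _ ≤ _ := by linarith

/-- The constant in the coercivity estimate for the relative internal energy. -/
def coerciveConst (γ : ℝ) (k : ℕ) : ℝ := 2 ^ (k + 1) * (4 / ((γ - 1) * min 1 ((γ - 1) / 2)))

lemma coerciveConst_nonneg {γ : ℝ} (hγ : 1 < γ) (k : ℕ) : 0 ≤ coerciveConst γ k := by
  have hγ1 : 0 < γ - 1 := by linarith
  unfold coerciveConst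
  positivity

lemma min_pow_le_hBarDelta {γ δ ρ ρbar : ℝ} {k : ℕ} (hγ : 1 < γ) (hδ : 0 < δ) (hρ : 0 < ρ)
    (hρbar : 0 < ρbar) (hρbar1 : ρbar ≤ 1) (hk : γ - 1 ≤ k) (hk1 : 1 ≤ k) :
    (min |ρ - ρbar| 1) ^ (k + 1)
      ≤ coerciveConst γ k * hBarDelta γ ((γ - 1) ^ (2:ℕ) / (4 * γ)) δ ρ ρbar := by
  have hγ1 : 0 < γ - 1 := by linarith
  set d := min |ρ - ρbar| 1 with hd
  have hd0 : 0 ≤ d := le_min (abs_nonneg _) zero_le_one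
  have hd1 : d ≤ 1 := min_le_right _ _
  have hda : d ≤ |ρ - ρbar| := min_le_left _ _
  have hc : 0 < min 1 ((γ - 1) / 2) := lt_min one_pos (by linarith)
  set c := min 1 ((γ - 1) / 2) with hcdef
  suffices h : (γ - 1) / 4 * (c * (d / 2) ^ k * (d / 2))
      ≤ hBarDelta γ ((γ - 1) ^ (2:ℕ) / (4 * γ)) δ ρ ρbar by
    have h1 := mul_le_mul_of_nonneg_left h (coerciveConst_nonneg hγ k)
    refine le_trans (le_of_eq ?_) h1
    unfold coerciveConst
    rw [← hcdef, div_pow]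
    field_simp
    ring
  rcases le_total ρbar ρ with h1 | h1
  · rw [abs_of_nonneg (sub_nonneg.2 h1)] at hda
    refine le_trans ?_ (le_hBarDelta (μ := ρbar + d / 2) hγ hδ hρ hρbar (by linarith))
    have h2 := le_rpow_sub_rpow hγ1 hk hk1 hρbar (x := ρbar + d / 2) (by linarith) (by linarith)
      (by linarith)
    rw [add_sub_cancel_left] at h2
    have h3 : d / 2 ≤ ρ - (ρbar + d / 2) := by linarith
    gcongr
    exact le_trans (by positivity) h2
  · rw [abs_of_nonpos (sub_nonpos.2 h1)] at hda
    refine le_trans ?_ (le_hBarDelta (μ := ρbar - d / 2) hγ hδ hρ hρbar (by linarith))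
    have h2 := le_rpow_sub_rpow hγ1 hk hk1 (y := ρbar - d / 2) (x := ρbar) (by linarith)
      (by linarith) (by linarith) (by linarith)
    rw [sub_sub_cancel] at h2
    have h3 : d / 2 ≤ ρbar - d / 2 - ρ := by linarith
    have e1 : ((ρbar - d / 2) ^ (γ - 1) - ρbar ^ (γ - 1)) * (ρ - (ρbar - d / 2))
      = (ρbar ^ (γ - 1) - (ρbar - d / 2) ^ (γ - 1)) * (ρbar - d / 2 - ρ) := by ring
    rw [e1]
    gcongr
    exact le_trans (by positivity) h2

/-- The constant in the linear growth estimate for the relative internal energy. -/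
def growthConst (γ : ℝ) : ℝ := 4 / ((γ - 1) * ((3 / 2 : ℝ) ^ (γ - 1) - 1))

lemma growthConst_nonneg {γ : ℝ} (hγ : 1 < γ) : 0 ≤ growthConst γ := by
  have hγ1 : 0 < γ - 1 := by linarith
  have h1 : 1 < (3 / 2 : ℝ) ^ (γ - 1) := one_lt_rpow (by norm_num) hγ1
  exact div_nonneg (by norm_num) (mul_nonneg hγ1.le (by linarith))

lemma density_le_hBarDelta {γ δ ρ ρbar : ℝ} (hγ : 1 < γ) (hδ : 0 < δ) (hρ : 0 < ρ)
    (hρbar : 0 < ρbar) (hρbar1 : ρbar ≤ 1) :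
    ρ ≤ 3 / 2 + growthConst γ * hBarDelta γ ((γ - 1) ^ (2:ℕ) / (4 * γ)) δ ρ ρbar := by
  have hγ1 : 0 < γ - 1 := by linarith
  have h1 : 1 < (3 / 2 : ℝ) ^ (γ - 1) := one_lt_rpow (by norm_num) hγ1
  have h0 := mul_nonneg (growthConst_nonneg hγ) (hBarDelta_nonneg hγ hδ hρ hρbar)
  rcases le_total ρ (3 / 2) with h2 | h2
  · linarith
  have h3 := le_hBarDelta hγ hδ hρ hρbar (μ := 3 / 2) (by norm_num)
  have h4 : ρbar ^ (γ - 1) ≤ 1 := rpow_le_one hρbar.le hρbar1 hγ1.le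
  have h5 : (γ - 1) / 4 * (((3 / 2 : ℝ) ^ (γ - 1) - 1) * (ρ - 3 / 2))
      ≤ hBarDelta γ ((γ - 1) ^ (2:ℕ) / (4 * γ)) δ ρ ρbar := le_trans (by gcongr) h3
  have h6 := mul_le_mul_of_nonneg_left h5 (growthConst_nonneg hγ)
  have h7 : growthConst γ * ((γ - 1) / 4 * (((3 / 2 : ℝ) ^ (γ - 1) - 1) * (ρ - 3 / 2)))
      = ρ - 3 / 2 := by
    have : (3 / 2 : ℝ) ^ (γ - 1) - 1 ≠ 0 := by linarith
    unfold growthConst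
    field_simp
  linarith

/-- The partial derivative with respect to the first variable. -/
def partialFst (f : ℝ × ℝ → ℝ) (x : ℝ × ℝ) : ℝ := deriv (fun s => f (s, x.2)) x.1

/-- The partial derivative with respect to the second variable. -/
def partialSnd (f : ℝ × ℝ → ℝ) (x : ℝ × ℝ) : ℝ := deriv (fun y => f (x.1, y)) x.2

section partials

variable {f : ℝ × ℝ → ℝ}

lemma hasDerivAt_slice_fst (hf : ContDiff ℝ (⊤ : ℕ∞) f) (x : ℝ × ℝ) :
    HasDerivAt (fun s => f (s, x.2)) (fderiv ℝ f x (1, 0)) x.1 := by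
  have h1 : HasFDerivAt f (fderiv ℝ f x) (x.1, x.2) :=
    (hf.differentiable (by simp) x).hasFDerivAt
  exact h1.comp_hasDerivAt x.1 ((hasDerivAt_id x.1).prodMk (hasDerivAt_const x.1 x.2))

lemma hasDerivAt_slice_snd (hf : ContDiff ℝ (⊤ : ℕ∞) f) (x : ℝ × ℝ) :
    HasDerivAt (fun s => f (x.1, s)) (fderiv ℝ f x (0, 1)) x.2 := by
  have h1 : HasFDerivAt f (fderiv ℝ f x) (x.1, x.2) :=
    (hf.differentiable (by simp) x).hasFDerivAt
  exact h1.comp_hasDerivAt x.2 ((hasDerivAt_const x.2 x.1).prodMk (hasDerivAt_id x.2))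

lemma hasDerivAt_partialFst (hf : ContDiff ℝ (⊤ : ℕ∞) f) (t r : ℝ) :
    HasDerivAt (fun s => f (s, r)) (partialFst f (t, r)) t :=
  (hasDerivAt_slice_fst hf (t, r)).differentiableAt.hasDerivAt

lemma hasDerivAt_partialSnd (hf : ContDiff ℝ (⊤ : ℕ∞) f) (t r : ℝ) :
    HasDerivAt (fun y => f (t, y)) (partialSnd f (t, r)) r :=
  (hasDerivAt_slice_snd hf (t, r)).differentiableAt.hasDerivAt

lemma contDiff_partialFst (hf : ContDiff ℝ (⊤ : ℕ∞) f) : ContDiff ℝ (⊤ : ℕ∞) (partialFst f) := by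
  have h1 : partialFst f = fun x => fderiv ℝ f x (1, 0) :=
    funext fun x => (hasDerivAt_slice_fst hf x).deriv
  rw [h1]
  exact (hf.fderiv_right (m := (⊤ : ℕ∞)) (by simp)).clm_apply contDiff_const

lemma contDiff_partialSnd (hf : ContDiff ℝ (⊤ : ℕ∞) f) : ContDiff ℝ (⊤ : ℕ∞) (partialSnd f) := by
  have h1 : partialSnd f = fun x => fderiv ℝ f x (0, 1) :=
    funext fun x => (hasDerivAt_slice_snd hf x).deriv
  rw [h1]
  exact (hf.fderiv_right (m := (⊤ : ℕ∞)) (by simp)).clm_apply contDiff_const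

end partials

lemma setIntegral_Ioo_eq {a b : ℝ} (hab : a ≤ b) (f : ℝ → ℝ) :
    ∫ r in Ioo a b, f r = ∫ r in a..b, f r := by
  rw [intervalIntegral.integral_of_le hab, integral_Ioc_eq_integral_Ioo]

namespace ViscousSetup

variable {N : ℕ} {γ T E₀ : ℝ} (S : ViscousSetup (N + 2) γ T E₀)

/-- The density as a function of the point `(t, r)`. -/
def dens (x : ℝ × ℝ) : ℝ := S.ρ x.1 x.2
/-- The momentum as a function of the point `(t, r)`. -/
def mom (x : ℝ × ℝ) : ℝ := S.m x.1 x.2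
/-- The time derivative of the density. -/
def densT : ℝ × ℝ → ℝ := partialFst S.dens
/-- The radial derivative of the density. -/
def densR : ℝ × ℝ → ℝ := partialSnd S.dens
/-- The second radial derivative of the density. -/
def densRR : ℝ × ℝ → ℝ := partialSnd S.densR
/-- The radial derivative of the momentum. -/
def momR : ℝ × ℝ → ℝ := partialSnd S.mom
/-- The radial derivative of the velocity. -/
def velR (x : ℝ × ℝ) : ℝ := (S.momR x * S.dens x - S.mom x * S.densR x) / S.dens x ^ 2

lemma contDiff_dens : ContDiff ℝ (⊤ : ℕ∞) S.dens := S.smooth_ρ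
lemma contDiff_mom : ContDiff ℝ (⊤ : ℕ∞) S.mom := S.smooth_m
lemma contDiff_densR : ContDiff ℝ (⊤ : ℕ∞) S.densR := contDiff_partialSnd S.contDiff_dens

@[fun_prop] lemma continuous_dens : Continuous S.dens := S.contDiff_dens.continuous
@[fun_prop] lemma continuous_mom : Continuous S.mom := S.contDiff_mom.continuous
@[fun_prop] lemma continuous_densT : Continuous S.densT :=
  (contDiff_partialFst S.contDiff_dens).continuous
@[fun_prop] lemma continuous_densR : Continuous S.densR := S.contDiff_densR.continuous
@[fun_prop] lemma continuous_densRR : Continuous S.densRR :=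
  (contDiff_partialSnd S.contDiff_densR).continuous
@[fun_prop] lemma continuous_momR : Continuous S.momR :=
  (contDiff_partialSnd S.contDiff_mom).continuous

lemma hasDerivAt_dens_time (t r : ℝ) : HasDerivAt (fun s => S.dens (s, r)) (S.densT (t, r)) t :=
  hasDerivAt_partialFst S.contDiff_dens t r
lemma hasDerivAt_dens (t r : ℝ) : HasDerivAt (fun y => S.dens (t, y)) (S.densR (t, r)) r :=
  hasDerivAt_partialSnd S.contDiff_dens t r
lemma hasDerivAt_densR (t r : ℝ) : HasDerivAt (fun y => S.densR (t, y)) (S.densRR (t, r)) r :=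
  hasDerivAt_partialSnd S.contDiff_densR t r
lemma hasDerivAt_mom (t r : ℝ) : HasDerivAt (fun y => S.mom (t, y)) (S.momR (t, r)) r :=
  hasDerivAt_partialSnd S.contDiff_mom t r

lemma dens_pos {x : ℝ × ℝ} (hx : x ∈ rect T S.a S.b) : 0 < S.dens x :=
  S.hcε.trans_le (S.pos x.1 hx.1 x.2 hx.2)

lemma dens_ne {x : ℝ × ℝ} (hx : x ∈ rect T S.a S.b) : S.dens x ≠ 0 := (S.dens_pos hx).ne'

lemma radius_pos {x : ℝ × ℝ} (hx : x ∈ rect T S.a S.b) : 0 < x.2 := S.ha0.trans_le hx.2.1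

lemma hab : S.a ≤ S.b := (S.ha1.trans S.hb).le

lemma hasDerivAt_pow_succ (N : ℕ) (r : ℝ) :
    HasDerivAt (fun r : ℝ => r ^ (N + 1)) ((N + 1) * r ^ N) r := by
  simpa using hasDerivAt_pow (N + 1) r

/-- The continuity equation on the closed rectangle. -/
lemma continuity {x : ℝ × ℝ} (hx : x ∈ rect T S.a S.b) :
    x.2 ^ (N + 1) * S.densT x + (x.2 ^ (N + 1) * S.momR x + (N + 1) * x.2 ^ N * S.mom x)
      = S.ε * (x.2 ^ (N + 1) * S.densRR x + (N + 1) * x.2 ^ N * S.densR x) := by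
  have h1 : EqOn (fun x : ℝ × ℝ => x.2 ^ (N + 1) * S.densT x
      + (x.2 ^ (N + 1) * S.momR x + (N + 1) * x.2 ^ N * S.mom x))
      (fun x => S.ε * (x.2 ^ (N + 1) * S.densRR x + (N + 1) * x.2 ^ N * S.densR x))
      (Ioo 0 T ×ˢ Ioo S.a S.b) := by
    rintro ⟨t, r⟩ ⟨ht, hr⟩
    have h2 := S.continuity_eq t ht r hr
    have h3 : deriv (fun y => y ^ (N + 1) * S.m t y) r
        = (N + 1) * r ^ N * S.mom (t, r) + r ^ (N + 1) * S.momR (t, r) :=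
      ((hasDerivAt_pow_succ N r).mul (S.hasDerivAt_mom t r)).deriv
    have h4 : deriv (fun y => y ^ (N + 1) * deriv (fun z => S.ρ t z) y) r
        = (N + 1) * r ^ N * S.densR (t, r) + r ^ (N + 1) * S.densRR (t, r) :=
      ((hasDerivAt_pow_succ N r).mul (S.hasDerivAt_densR t r)).deriv
    have h5 : deriv (fun s => S.ρ s r) t = S.densT (t, r) := rfl
    simp only [Nat.add_succ_sub_one] at h2
    rw [h3, h4, h5] at h2
    simp only
    linarith
  have h2 := h1.closure (by fun_prop) (by fun_prop)
  rw [closure_prod_eq, closure_Ioo S.hT.ne, closure_Ioo (S.ha1.trans S.hb).ne] at h2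
  exact h2 hx

lemma densR_left {t : ℝ} (ht : t ∈ Icc 0 T) : S.densR (t, S.a) = 0 := S.bc_ρr t ht
lemma mom_left {t : ℝ} (ht : t ∈ Icc 0 T) : S.mom (t, S.a) = 0 := S.bc_ma t ht
lemma dens_right {t : ℝ} (ht : t ∈ Icc 0 T) : S.dens (t, S.b) = S.ρbar := S.bc_ρb t ht
lemma mom_right {t : ℝ} (ht : t ∈ Icc 0 T) : S.mom (t, S.b) = 0 := S.bc_mb t ht

lemma hasDerivAt_vel {t r : ℝ} (hx : (t, r) ∈ rect T S.a S.b) :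
    HasDerivAt (fun y => S.mom (t, y) / S.dens (t, y)) (S.velR (t, r)) r :=
  (S.hasDerivAt_mom t r).div (S.hasDerivAt_dens t r) (S.dens_ne hx)

/-- The relative internal energy density. -/
def relEnergy (x : ℝ × ℝ) : ℝ :=
  hBarDelta γ ((γ - 1) ^ (2:ℕ) / (4 * γ)) S.δ (S.dens x) S.ρbar

lemma relEnergy_nonneg {x : ℝ × ℝ} (hx : x ∈ rect T S.a S.b) : 0 ≤ S.relEnergy x :=
  hBarDelta_nonneg S.hγ S.hδ (S.dens_pos hx) S.hρbar

@[fun_prop] lemma continuousOn_dens_rpow (p : ℝ) :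
    ContinuousOn (fun x => S.dens x ^ p) (rect T S.a S.b) :=
  S.continuous_dens.continuousOn.rpow_const fun _ hx => Or.inl (S.dens_ne hx)

@[fun_prop] lemma continuousOn_mom_sq_div :
    ContinuousOn (fun x => S.mom x ^ 2 / S.dens x) (rect T S.a S.b) :=
  ContinuousOn.div (by fun_prop) (by fun_prop) fun _ hx => S.dens_ne hx

@[fun_prop] lemma continuousOn_velR : ContinuousOn S.velR (rect T S.a S.b) :=
  ContinuousOn.div (by fun_prop) (by fun_prop) fun _ hx => pow_ne_zero 2 (S.dens_ne hx)

@[fun_prop] lemma continuousOn_relEnergy : ContinuousOn S.relEnergy (rect T S.a S.b) := by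
  unfold relEnergy hBarDelta hDelta
  fun_prop

/-- The space-time integrand of the dissipation. -/
def dissipation (x : ℝ × ℝ) : ℝ :=
  ((γ - 1) ^ 2 / 4 * (S.dens x ^ (γ - 2) * S.densR x ^ 2) + 2 * S.δ * S.densR x ^ 2)
    + S.dens x * S.velR x ^ 2 + (N + 1) * (S.mom x ^ 2 / S.dens x) / x.2 ^ 2

lemma continuousOn_dissipation : ContinuousOn S.dissipation (rect T S.a S.b) := by
  refine ContinuousOn.add (by fun_prop) (ContinuousOn.div (by fun_prop) (by fun_prop) ?_)
  intro x hx
  exact pow_ne_zero 2 (S.radius_pos hx).ne'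

lemma dissipation_nonneg {x : ℝ × ℝ} (hx : x ∈ rect T S.a S.b) : 0 ≤ S.dissipation x := by
  have h1 := S.dens_pos hx
  have h2 := S.radius_pos hx
  have h3 := S.hδ
  unfold dissipation
  positivity

/-- The energy inequality in terms of the functions on the rectangle. -/
lemma energy_le {t : ℝ} (ht : t ∈ Icc 0 T) :
    (∫ r in S.a..S.b, r ^ (N + 1) * (1 / 2 * (S.mom (t, r) ^ 2 / S.dens (t, r))
        + S.relEnergy (t, r)))
      + S.ε * ∫ x in rect T S.a S.b, x.2 ^ (N + 1) * S.dissipation x ≤ E₀ := by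
  have h1 := S.energy t ht
  have hγ : 0 < γ := by linarith [S.hγ]
  rw [integral_rect (f := fun x => x.2 ^ (N + 1) * S.dissipation x)
    (ContinuousOn.mul (by fun_prop) S.continuousOn_dissipation) S.hT.le S.hab]
  rw [setIntegral_Ioo_eq S.hab, setIntegral_Ioo_eq S.hT.le] at h1
  refine le_trans (le_of_eq (congrArg₂ (· + ·) ?_ (congrArg (S.ε * ·) ?_))) h1
  · refine intervalIntegral.integral_congr fun r hr => ?_
    rw [uIcc_of_le S.hab] at hr
    have h2 := S.dens_ne (mem_rect ht hr)
    simp only [relEnergy, dens, mom, Nat.add_succ_sub_one] at h2 ⊢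
    field_simp
  · refine intervalIntegral.integral_congr fun s hs => ?_
    rw [uIcc_of_le S.hT.le] at hs
    simp only
    rw [setIntegral_Ioo_eq S.hab]
    refine intervalIntegral.integral_congr fun r hr => ?_
    rw [uIcc_of_le S.hab] at hr
    have h2 := S.dens_ne (mem_rect hs hr)
    have h3 : deriv (fun y => S.m s y / S.ρ s y) r = S.velR (s, r) :=
      (S.hasDerivAt_vel (mem_rect hs hr)).deriv
    have h4 : deriv (fun y => S.ρ s y) r = S.densR (s, r) := rfl
    simp only [h3, h4]
    simp only [dissipation, dens, mom, Nat.add_succ_sub_one, hDelta''] at h2 ⊢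
    push_cast
    field_simp
    ring

lemma energy_slice_nonneg {t : ℝ} (ht : t ∈ Icc 0 T) :
    0 ≤ ∫ r in S.a..S.b, r ^ (N + 1) * (1 / 2 * (S.mom (t, r) ^ 2 / S.dens (t, r))
        + S.relEnergy (t, r)) :=
  intervalIntegral.integral_nonneg S.hab fun r hr => by
    have h1 := S.dens_pos (mem_rect ht hr)
    have h2 := S.radius_pos (mem_rect ht hr)
    have h3 := S.relEnergy_nonneg (mem_rect ht hr)
    positivity

lemma dissipation_integral_nonneg : 0 ≤ ∫ x in rect T S.a S.b, x.2 ^ (N + 1) * S.dissipation x :=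
  rect_nonneg fun _ hx => mul_nonneg (pow_nonneg (S.radius_pos hx).le _) (S.dissipation_nonneg hx)

lemma dissipation_integral_le :
    S.ε * ∫ x in rect T S.a S.b, x.2 ^ (N + 1) * S.dissipation x ≤ E₀ := by
  have ht : (0 : ℝ) ∈ Icc 0 T := ⟨le_rfl, S.hT.le⟩
  linarith [S.energy_le ht, S.energy_slice_nonneg ht]

lemma slice_energy_le {t : ℝ} (ht : t ∈ Icc 0 T) :
    ∫ r in S.a..S.b, r ^ (N + 1) * (1 / 2 * (S.mom (t, r) ^ 2 / S.dens (t, r))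
        + S.relEnergy (t, r)) ≤ E₀ := by
  linarith [S.energy_le ht, mul_nonneg S.hε.le S.dissipation_integral_nonneg]

lemma slice_le_of_le {C : ℝ} {f : ℝ × ℝ → ℝ} (hf : ContinuousOn f (rect T S.a S.b)) {t : ℝ}
    (ht : t ∈ Icc 0 T) (hC : 0 ≤ C) (h : ∀ x ∈ rect T S.a S.b,
      f x ≤ C * (1 / 2 * (S.mom x ^ 2 / S.dens x) + S.relEnergy x)) :
    ∫ r in S.a..S.b, r ^ (N + 1) * f (t, r) ≤ C * E₀ := by
  refine le_trans ?_ (mul_le_mul_of_nonneg_left (S.slice_energy_le ht) hC)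
  rw [← intervalIntegral.integral_const_mul]
  refine intervalIntegral.integral_mono_on S.hab
    (intervalIntegrable_of_continuousOn_Icc S.hab (continuousOn_slice_right
      (f := fun x => x.2 ^ (N + 1) * f x) (by fun_prop) ht))
    (intervalIntegrable_of_continuousOn_Icc S.hab (continuousOn_slice_right
      (f := fun x => C * (x.2 ^ (N + 1) * (1 / 2 * (S.mom x ^ 2 / S.dens x) + S.relEnergy x)))
      (by fun_prop) ht)) fun r hr => ?_
  have h1 := mul_le_mul_of_nonneg_left (h _ (mem_rect ht hr))
    (pow_nonneg (S.radius_pos (mem_rect ht hr)).le (N + 1))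
  simp only at h1
  linarith

lemma slice_kinetic_le {t : ℝ} (ht : t ∈ Icc 0 T) :
    ∫ r in S.a..S.b, r ^ (N + 1) * (S.mom (t, r) ^ 2 / S.dens (t, r)) ≤ 2 * E₀ :=
  S.slice_le_of_le (f := fun x => S.mom x ^ 2 / S.dens x) (by fun_prop) ht (by norm_num)
    fun x hx => by linarith [S.relEnergy_nonneg hx]

lemma slice_relEnergy_le {t : ℝ} (ht : t ∈ Icc 0 T) :
    ∫ r in S.a..S.b, r ^ (N + 1) * S.relEnergy (t, r) ≤ E₀ := by
  have := S.slice_le_of_le (f := S.relEnergy) (by fun_prop) ht zero_le_one fun x hx => by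
    have := S.dens_pos hx
    have : 0 ≤ S.mom x ^ 2 / S.dens x := by positivity
    linarith
  linarith

lemma integral_le_of_le {C : ℝ} {f : ℝ × ℝ → ℝ} (hf : ContinuousOn f (rect T S.a S.b))
    (hC : 0 ≤ C) (h : ∀ x ∈ rect T S.a S.b, f x ≤ C * S.dissipation x) :
    S.ε * ∫ x in rect T S.a S.b, x.2 ^ (N + 1) * f x ≤ C * E₀ := by
  have h1 : ∫ x in rect T S.a S.b, x.2 ^ (N + 1) * f x
      ≤ ∫ x in rect T S.a S.b, C * (x.2 ^ (N + 1) * S.dissipation x) := by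
    have := S.continuousOn_dissipation
    refine rect_mono (by fun_prop) (by fun_prop) fun x hx => ?_
    have h1 := mul_le_mul_of_nonneg_left (h x hx) (pow_nonneg (S.radius_pos hx).le (N + 1))
    linarith
  rw [integral_const_mul] at h1
  have h2 := mul_le_mul_of_nonneg_left h1 S.hε.le
  have h3 := mul_le_mul_of_nonneg_left S.dissipation_integral_le hC
  linarith

lemma integral_densR_sq_le :
    S.ε * ∫ x in rect T S.a S.b, x.2 ^ (N + 1) * (S.dens x ^ (γ - 2) * S.densR x ^ 2)
      ≤ 4 / (γ - 1) ^ 2 * E₀ := by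
  refine S.integral_le_of_le (by fun_prop) (by positivity) fun x hx => ?_
  have h1 := S.dens_pos hx
  have h2 := S.radius_pos hx
  have h3 := S.hδ
  have h4 : γ - 1 ≠ 0 := by linarith [S.hγ]
  have h5 : (γ - 1) ^ 2 / 4 * (S.dens x ^ (γ - 2) * S.densR x ^ 2) ≤ S.dissipation x := by
    have : 0 ≤ 2 * S.δ * S.densR x ^ 2 + S.dens x * S.velR x ^ 2
      + (N + 1) * (S.mom x ^ 2 / S.dens x) / x.2 ^ 2 := by positivity
    unfold dissipation
    linarith
  have h6 := mul_le_mul_of_nonneg_left h5 (by positivity : 0 ≤ 4 / (γ - 1) ^ 2)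
  refine le_trans (le_of_eq ?_) h6
  field_simp

lemma integral_velR_sq_le :
    S.ε * ∫ x in rect T S.a S.b, x.2 ^ (N + 1) * (S.dens x * S.velR x ^ 2) ≤ E₀ := by
  have := S.integral_le_of_le (C := 1) (f := fun x => S.dens x * S.velR x ^ 2) (by fun_prop)
    zero_le_one fun x hx => by
    have h1 := S.dens_pos hx
    have h2 := S.radius_pos hx
    have h3 := S.hδ
    have : 0 ≤ (γ - 1) ^ 2 / 4 * (S.dens x ^ (γ - 2) * S.densR x ^ 2) + 2 * S.δ * S.densR x ^ 2
      + (N + 1) * (S.mom x ^ 2 / S.dens x) / x.2 ^ 2 := by positivity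
    unfold dissipation
    linarith
  linarith

lemma slice_dens_le (hρ : S.ρbar ≤ 1) (hb : 2 < S.b) {t : ℝ} (ht : t ∈ Icc 0 T) :
    ∫ r in S.a..2, r ^ (N + 1) * S.dens (t, r) ≤ 3 / 2 * 2 ^ (N + 2) + growthConst γ * E₀ := by
  have ha := S.ha0
  have ha2 : S.a ≤ 2 := by linarith [S.ha1]
  have hsub : Icc S.a 2 ⊆ Icc S.a S.b := Icc_subset_Icc_right hb.le
  have hc : ContinuousOn (fun r => r ^ (N + 1) * S.relEnergy (t, r)) (Icc S.a S.b) :=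
    continuousOn_slice_right (f := fun x => x.2 ^ (N + 1) * S.relEnergy x) (by fun_prop) ht
  have hc2 := hc.mono hsub
  have h1 : ∫ r in S.a..2, r ^ (N + 1) * S.dens (t, r) ≤ ∫ r in S.a..2,
      (3 / 2 * 2 ^ (N + 1) + growthConst γ * (r ^ (N + 1) * S.relEnergy (t, r))) := by
    refine intervalIntegral.integral_mono_on ha2
      (intervalIntegrable_of_continuousOn_Icc ha2 (by fun_prop))
      (intervalIntegrable_of_continuousOn_Icc ha2 (by fun_prop)) fun r hr => ?_
    have hr0 : 0 < r := ha.trans_le hr.1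
    have h2 := density_le_hBarDelta S.hγ S.hδ (S.dens_pos (mem_rect ht (hsub hr))) S.hρbar hρ
    have h3 := mul_le_mul_of_nonneg_left h2 (pow_nonneg hr0.le (N + 1))
    have h4 := pow_le_pow_left₀ hr0.le hr.2 (N + 1)
    change _ ≤ r ^ (N + 1) * (3 / 2 + growthConst γ * S.relEnergy (t, r)) at h3
    linarith
  rw [intervalIntegral.integral_add (by simp)
    ((intervalIntegrable_of_continuousOn_Icc ha2 hc2).const_mul _),
    intervalIntegral.integral_const_mul (growthConst γ), intervalIntegral.integral_const,
    smul_eq_mul] at h1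
  have h2 : ∫ r in S.a..2, r ^ (N + 1) * S.relEnergy (t, r) ≤ E₀ := by
    refine le_trans ?_ (S.slice_relEnergy_le ht)
    refine intervalIntegral.integral_mono_interval le_rfl ha2 hb.le ?_
      (intervalIntegrable_of_continuousOn_Icc S.hab hc)
    refine (ae_restrict_iff' measurableSet_Ioc).2 (Filter.Eventually.of_forall fun r hr => ?_)
    have hr' : r ∈ Icc S.a S.b := ⟨hr.1.le, hr.2⟩
    exact mul_nonneg (pow_nonneg (ha.trans hr.1).le _) (S.relEnergy_nonneg (mem_rect ht hr'))
  have h3 := mul_le_mul_of_nonneg_left h2 (growthConst_nonneg S.hγ)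
  have h4 : (2 - S.a) * (3 / 2 * 2 ^ (N + 1)) ≤ 3 / 2 * 2 ^ (N + 2) := by
    calc _ ≤ (2 : ℝ) * (3 / 2 * 2 ^ (N + 1)) := by gcongr; linarith
      _ = _ := by ring
  linarith

end ViscousSetup

/-- The derivative of the truncation `truncate k`. -/
def truncateDeriv (k : ℕ) (x : ℝ) : ℝ := 1 / (1 + x ^ (2 * k))

/-- The second derivative of the truncation `truncate k`. -/
def truncateDeriv₂ (k : ℕ) (x : ℝ) : ℝ := -(2 * k * x ^ (2 * k - 1)) / (1 + x ^ (2 * k)) ^ 2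

/-- A smooth bounded truncation, equal to the identity to first order at the origin. -/
def truncate (k : ℕ) (x : ℝ) : ℝ := ∫ s in (0)..x, truncateDeriv k s

section truncation

variable {k : ℕ}

lemma one_add_even_pow_pos (k : ℕ) (x : ℝ) : 0 < 1 + x ^ (2 * k) := by
  have := (even_two_mul k).pow_nonneg x
  linarith

@[fun_prop] lemma continuous_truncateDeriv (k : ℕ) : Continuous (truncateDeriv k) :=
  Continuous.div (by fun_prop) (by fun_prop) fun x => (one_add_even_pow_pos k x).ne'

@[fun_prop] lemma continuous_truncateDeriv₂ (k : ℕ) : Continuous (truncateDeriv₂ k) :=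
  Continuous.div (by fun_prop) (by fun_prop) fun x => pow_ne_zero 2 (one_add_even_pow_pos k x).ne'

lemma hasDerivAt_truncate (k : ℕ) (x : ℝ) : HasDerivAt (truncate k) (truncateDeriv k x) x :=
  have hc := continuous_truncateDeriv k
  intervalIntegral.integral_hasDerivAt_right (hc.intervalIntegrable 0 x)
    (hc.stronglyMeasurableAtFilter _ _) hc.continuousAt

@[fun_prop] lemma continuous_truncate (k : ℕ) : Continuous (truncate k) :=
  continuous_iff_continuousAt.2 fun x => (hasDerivAt_truncate k x).continuousAt

lemma hasDerivAt_truncateDeriv (k : ℕ) (x : ℝ) :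
    HasDerivAt (truncateDeriv k) (truncateDeriv₂ k x) x := by
  refine ((hasDerivAt_const x (1:ℝ)).div ((hasDerivAt_pow (2 * k) x).const_add 1)
    (one_add_even_pow_pos k x).ne').congr_deriv ?_
  unfold truncateDeriv₂
  push_cast
  ring

lemma truncateDeriv_pos (k : ℕ) (x : ℝ) : 0 < truncateDeriv k x :=
  one_div_pos.2 (one_add_even_pow_pos k x)

lemma truncateDeriv_le_one (k : ℕ) (x : ℝ) : truncateDeriv k x ≤ 1 := by
  refine div_le_one_of_le₀ ?_ (one_add_even_pow_pos k x).le
  linarith [(even_two_mul k).pow_nonneg x]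

lemma half_le_truncateDeriv {x : ℝ} (hx : 0 ≤ x) (hx1 : x ≤ 1) : 1 / 2 ≤ truncateDeriv k x := by
  unfold truncateDeriv
  have := pow_le_one₀ hx hx1 (n := 2 * k)
  exact one_div_le_one_div_of_le (one_add_even_pow_pos k x) (by linarith)

lemma truncateDeriv_le_arctan (hk : 1 ≤ k) (x : ℝ) : truncateDeriv k x ≤ 2 * (1 / (1 + x ^ 2)) := by
  unfold truncateDeriv
  rw [mul_one_div, div_le_div_iff₀ (one_add_even_pow_pos k x) (by positivity), pow_mul]
  rcases le_total (x ^ 2) 1 with h | h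
  · have := pow_nonneg (sq_nonneg x) k
    linarith
  · have := le_self_pow₀ h (show k ≠ 0 by omega)
    linarith

lemma monotone_truncate (k : ℕ) : Monotone (truncate k) :=
  monotone_of_hasDerivAt_nonneg (hasDerivAt_truncate k) fun x => (truncateDeriv_pos k x).le

lemma monotone_sub_truncate (k : ℕ) : Monotone fun x => x - truncate k x :=
  monotone_of_hasDerivAt_nonneg (fun x => (hasDerivAt_id x).sub (hasDerivAt_truncate k x))
    fun x => sub_nonneg.2 (truncateDeriv_le_one k x)

lemma monotone_arctan_sub_truncate (hk : 1 ≤ k) : Monotone fun x => 2 * arctan x - truncate k x :=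
  monotone_of_hasDerivAt_nonneg
    (fun x => ((hasDerivAt_arctan x).const_mul 2).sub (hasDerivAt_truncate k x))
    fun x => sub_nonneg.2 (truncateDeriv_le_arctan hk x)

lemma abs_truncate_sub_le (hk : 1 ≤ k) {x y : ℝ} (hx : 0 < x) (hy : 0 < y) :
    |truncate k x - truncate k y| ≤ 4 * min |x - y| 1 := by
  wlog h : y ≤ x generalizing x y with H
  · rw [abs_sub_comm, abs_sub_comm x y]
    exact H hy hx (le_of_not_ge h)
  have h1 := monotone_truncate k h
  have h2 := monotone_sub_truncate k h
  have h3 := monotone_arctan_sub_truncate hk h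
  simp only at h2 h3
  rw [abs_of_nonneg (sub_nonneg.2 h1), abs_of_nonneg (sub_nonneg.2 h)]
  have h4 := arctan_lt_pi_div_two x
  have h5 : 0 < arctan y := arctan_pos.2 hy
  rcases min_choice (x - y) 1 with h6 | h6 <;> rw [h6]
  · linarith
  · linarith [pi_le_four]

lemma abs_truncateDeriv₂ {x : ℝ} (hx : 0 < x) :
    |truncateDeriv₂ k x| = 2 * k * (x ^ (2 * k - 1) / (1 + x ^ (2 * k)) ^ 2) := by
  unfold truncateDeriv₂
  rw [neg_div, abs_neg, abs_of_nonneg (by positivity)]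
  ring

lemma abs_truncateDeriv₂_le_rpow {γ x : ℝ} (hγ : 1 < γ) (hk : γ ≤ k) (hx : 0 < x) :
    |truncateDeriv₂ k x| ≤ 2 * k * x ^ (γ - 2) := by
  have hk1 : 1 ≤ k := by
    have : (1 : ℝ) < k := hγ.trans_le hk
    exact_mod_cast this.le
  have hcast : ((2 * k - 1 : ℕ) : ℝ) = 2 * k - 1 := by
    rw [Nat.cast_sub (by omega)]
    push_cast
    ring
  rw [abs_truncateDeriv₂ hx]
  refine mul_le_mul_of_nonneg_left ?_ (by positivity)
  rcases le_total x 1 with h | h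
  · calc x ^ (2 * k - 1) / (1 + x ^ (2 * k)) ^ 2 ≤ x ^ (2 * k - 1) := by
          refine div_le_self (by positivity) (one_le_pow₀ ?_)
          linarith [pow_pos hx (2 * k)]
      _ = x ^ (2 * k - 1 : ℝ) := by rw [← rpow_natCast, hcast]
      _ ≤ x ^ (γ - 2) := rpow_le_rpow_of_exponent_ge hx h (by linarith)
  · calc x ^ (2 * k - 1) / (1 + x ^ (2 * k)) ^ 2 ≤ x ^ (2 * k - 1) / (x ^ (2 * k)) ^ 2 := by
          gcongr
          linarith
      _ = x ^ (-(2 * k + 1) : ℝ) := by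
          rw [← pow_mul, ← rpow_natCast, ← rpow_natCast, hcast, ← rpow_sub hx]
          congr 1
          push_cast
          ring
      _ ≤ x ^ (γ - 2) := rpow_le_rpow_of_exponent_le h (by linarith)

lemma abs_truncateDeriv₂_le_div (hk : 1 ≤ k) {x : ℝ} (hx : 0 < x) :
    |truncateDeriv₂ k x| ≤ 2 * k * (1 / x) := by
  rw [abs_truncateDeriv₂ hx]
  refine mul_le_mul_of_nonneg_left ?_ (by positivity)
  have hp := pow_pos hx (2 * k)
  rw [div_le_div_iff₀ (by positivity) hx, ← pow_succ, Nat.sub_add_cancel (by omega), one_mul]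
  nlinarith

lemma truncateDeriv_sq_mul_le (hk : 1 ≤ k) {x : ℝ} (hx : 0 < x) :
    truncateDeriv k x ^ 2 * x ≤ 1 := by
  have hp := pow_pos hx (2 * k)
  have h1 : x ≤ 1 + x ^ (2 * k) := by
    rcases le_total x 1 with h | h
    · linarith
    · linarith [le_self_pow₀ h (show 2 * k ≠ 0 by omega)]
  unfold truncateDeriv
  rw [div_pow, one_pow, one_div_mul_eq_div]
  refine div_le_one_of_le₀ ?_ (by positivity)
  nlinarith

end truncation

lemma mul_pow_le_add_pow {x z : ℝ} (hx : 0 ≤ x) (hz : 0 ≤ z) (l : ℕ) :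
    x * z ^ l ≤ x ^ (l + 1) + z ^ (l + 1) := by
  rcases le_total x z with h | h
  · calc x * z ^ l ≤ z * z ^ l := by gcongr
      _ = z ^ (l + 1) := by ring
      _ ≤ _ := le_add_of_nonneg_left (by positivity)
  · calc x * z ^ l ≤ x * x ^ l := by gcongr
      _ = x ^ (l + 1) := by ring
      _ ≤ _ := le_add_of_nonneg_right (by positivity)

/-- The weight integral appearing in the slice bound. -/
def tailIntegral (N l : ℕ) : ℝ := ∫ r : ℝ, (1 + ‖r‖ ^ 2) ^ (-(1 + (N + 2) / l : ℝ) / 2)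

lemma integrable_tail (N : ℕ) {l : ℕ} (hl : 1 ≤ l) :
    Integrable fun r : ℝ => (1 + ‖r‖ ^ 2) ^ (-(1 + (N + 2) / l : ℝ) / 2) := by
  refine integrable_rpow_neg_one_add_norm_sq ?_
  have : (0 : ℝ) < l := by exact_mod_cast hl
  have : (0 : ℝ) < (N + 2) / l := by positivity
  simp only [Module.finrank_self, Nat.cast_one]
  linarith

/-- The pointwise inequality behind the slice bound. -/
lemma weight_mul_sq_le (N : ℕ) {l : ℕ} (hl : 1 ≤ l) {r : ℝ} (hr : 0 ≤ r) (W : ℝ) :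
    r ^ (N + 1) * (1 + r ^ 2) ^ (-((N + 2) / 2 : ℝ)) * W ^ 2
      ≤ r ^ (N + 1) * W ^ (2 * l + 2) + (1 + ‖r‖ ^ 2) ^ (-(1 + (N + 2) / l : ℝ) / 2) := by
  have hl0 : (0 : ℝ) < l := by exact_mod_cast hl
  have hb : 0 < 1 + r ^ 2 := by positivity
  set z : ℝ := (1 + r ^ 2) ^ (-((N + 2) / (2 * l) : ℝ)) with hz
  have hz0 : 0 < z := rpow_pos_of_pos hb _
  have hzl : (1 + r ^ 2) ^ (-((N + 2) / 2 : ℝ)) = z ^ l := by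
    rw [hz, ← rpow_mul_natCast hb.le]
    congr 1
    field_simp
  have h1 := mul_pow_le_add_pow (sq_nonneg W) hz0.le l
  have h2 := mul_le_mul_of_nonneg_left h1 (pow_nonneg hr (N + 1))
  have h3 : r ^ (N + 1) ≤ (1 + r ^ 2) ^ ((N + 1) / 2 : ℝ) := by
    calc r ^ (N + 1) = (r ^ 2) ^ ((N + 1) / 2 : ℝ) := by
          rw [← rpow_natCast r 2, ← rpow_mul hr, ← rpow_natCast]
          congr 1
          push_cast
          ring
      _ ≤ _ := rpow_le_rpow (sq_nonneg r) (by linarith) (by positivity)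
  have h4 : r ^ (N + 1) * z ^ (l + 1) ≤ (1 + ‖r‖ ^ 2) ^ (-(1 + (N + 2) / l : ℝ) / 2) := by
    calc r ^ (N + 1) * z ^ (l + 1) ≤ (1 + r ^ 2) ^ ((N + 1) / 2 : ℝ) * z ^ (l + 1) := by gcongr
      _ = _ := by
        rw [norm_eq_abs, sq_abs, hz, ← rpow_mul_natCast hb.le, ← rpow_add hb]
        congr 1
        push_cast
        field_simp
        ring
  rw [hzl]
  have e1 : W ^ (2 * l + 2) = (W ^ 2) ^ (l + 1) := by rw [← pow_mul]; congr 1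
  rw [e1]
  linarith

/-- The bound for the source term of the truncated density equation. -/
def sourceConst (γ T E₀ : ℝ) : ℝ :=
  4 * ⌈γ⌉₊ * (4 / (γ - 1) ^ 2 * E₀) + 2 * ⌈γ⌉₊ * (T * (2 * E₀))

/-- The bound for the weighted norm of the truncated density on time slices. -/
def sliceConst (N : ℕ) (γ E₀ : ℝ) : ℝ :=
  4 ^ (2 * ⌈γ⌉₊ + 2) * coerciveConst γ (2 * ⌈γ⌉₊ + 1) * E₀ + tailIntegral N ⌈γ⌉₊

lemma intervalIntegral_tail_le (N : ℕ) {l : ℕ} (hl : 1 ≤ l) {a b : ℝ} (hab : a ≤ b) :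
    ∫ r in a..b, (1 + ‖r‖ ^ 2) ^ (-(1 + (N + 2) / l : ℝ) / 2) ≤ tailIntegral N l := by
  rw [intervalIntegral.integral_of_le hab]
  exact setIntegral_le_integral (integrable_tail N hl)
    (Filter.Eventually.of_forall fun r => by positivity)

lemma truncated_source_le {ε k c β₂ ρ q m z : ℝ} (hε : 1 ≤ ε)
    (h1 : |β₂| ≤ 2 * k * z) (h2 : |β₂| ≤ 2 * k * (1 / ρ))
    (hc : c = -(ε * β₂ * q ^ 2) + β₂ * q * m) :
    |c| ≤ 4 * k * ε * (z * q ^ 2) + 2 * k * (m ^ 2 / ρ) := by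
  have h3 : |c| ≤ |β₂| * (2 * ε * q ^ 2 + m ^ 2) := by
    have h4 : c = β₂ * (-(ε * q ^ 2) + q * m) := by rw [hc]; ring
    rw [h4, abs_mul]
    refine mul_le_mul_of_nonneg_left ?_ (abs_nonneg _)
    rw [abs_le]
    have h5 : q ^ 2 ≤ ε * q ^ 2 := le_mul_of_one_le_left (sq_nonneg q) hε
    constructor <;> nlinarith [sq_nonneg (q - m), sq_nonneg (q + m), sq_nonneg q, sq_nonneg m]
  have h5 := mul_le_mul_of_nonneg_right h1 (by positivity : 0 ≤ 2 * ε * q ^ 2)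
  have h6 := mul_le_mul_of_nonneg_right h2 (sq_nonneg m)
  calc |c| ≤ |β₂| * (2 * ε * q ^ 2 + m ^ 2) := h3
    _ = |β₂| * (2 * ε * q ^ 2) + |β₂| * m ^ 2 := by ring
    _ ≤ 2 * k * z * (2 * ε * q ^ 2) + 2 * k * (1 / ρ) * m ^ 2 := add_le_add h5 h6
    _ = _ := by ring

namespace ViscousSetup

variable {N : ℕ} {γ T E₀ : ℝ} (S : ViscousSetup (N + 2) γ T E₀)

lemma one_le_ceil (S : ViscousSetup (N + 2) γ T E₀) : 1 ≤ ⌈γ⌉₊ :=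
  Nat.one_le_iff_ne_zero.2 (Nat.ceil_pos.2 (by linarith [S.hγ])).ne'

lemma slice_truncate_le (hρ : S.ρbar ≤ 1) {t : ℝ} (ht : t ∈ Icc 0 T) :
    ∫ r in S.a..S.b, r ^ (N + 1) * (1 + r ^ 2) ^ (-((N + 2) / 2 : ℝ))
      * (truncate ⌈γ⌉₊ (S.dens (t, r)) - truncate ⌈γ⌉₊ S.ρbar) ^ 2 ≤ sliceConst N γ E₀ := by
  have hl := S.one_le_ceil
  set l := ⌈γ⌉₊ with hl_def
  set C : ℝ := 4 ^ (2 * l + 2) * coerciveConst γ (2 * l + 1) with hC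
  have hC0 : 0 ≤ C := mul_nonneg (by positivity) (coerciveConst_nonneg S.hγ _)
  have hc : ContinuousOn (fun r => r ^ (N + 1) * S.relEnergy (t, r)) (Icc S.a S.b) :=
    continuousOn_slice_right (f := fun x => x.2 ^ (N + 1) * S.relEnergy x) (by fun_prop) ht
  have hct : Continuous fun r : ℝ => (1 + ‖r‖ ^ 2) ^ (-(1 + (N + 2) / l : ℝ) / 2) :=
    Continuous.rpow_const (by fun_prop) fun r => Or.inl (by positivity)
  have hcw : Continuous fun r : ℝ => (1 + r ^ 2) ^ (-((N + 2) / 2 : ℝ)) :=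
    Continuous.rpow_const (by fun_prop) fun r => Or.inl (by positivity)
  have h1 : ∫ r in S.a..S.b, r ^ (N + 1) * (1 + r ^ 2) ^ (-((N + 2) / 2 : ℝ))
      * (truncate l (S.dens (t, r)) - truncate l S.ρbar) ^ 2
      ≤ ∫ r in S.a..S.b, (C * (r ^ (N + 1) * S.relEnergy (t, r))
        + (1 + ‖r‖ ^ 2) ^ (-(1 + (N + 2) / l : ℝ) / 2)) := by
    refine intervalIntegral.integral_mono_on S.hab
      (intervalIntegrable_of_continuousOn_Icc S.hab (by fun_prop))
      (intervalIntegrable_of_continuousOn_Icc S.hab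
        ((continuousOn_const.mul hc).add hct.continuousOn)) fun r hr => ?_
    have hx := mem_rect ht hr
    have hr0 : 0 < r := S.radius_pos hx
    refine (weight_mul_sq_le N hl hr0.le _).trans ?_
    gcongr ?_ + _
    have h2 := abs_truncate_sub_le hl (S.dens_pos hx) S.hρbar
    have h3 := min_pow_le_hBarDelta S.hγ S.hδ (S.dens_pos hx) S.hρbar hρ (k := 2 * l + 1)
      (by have := Nat.le_ceil γ; push_cast; rw [← hl_def] at this; linarith) (by omega)
    change _ ≤ _ * S.relEnergy (t, r) at h3
    have h4 : (truncate l (S.dens (t, r)) - truncate l S.ρbar) ^ (2 * l + 2)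
        ≤ C * S.relEnergy (t, r) := by
      calc _ = |truncate l (S.dens (t, r)) - truncate l S.ρbar| ^ (2 * l + 2) := by
            rw [Even.pow_abs ⟨l + 1, by ring⟩]
        _ ≤ (4 * min |S.dens (t, r) - S.ρbar| 1) ^ (2 * l + 2) := by gcongr
        _ = 4 ^ (2 * l + 2) * (min |S.dens (t, r) - S.ρbar| 1) ^ (2 * l + 1 + 1) := by
            rw [mul_pow]
        _ ≤ 4 ^ (2 * l + 2) * (coerciveConst γ (2 * l + 1) * S.relEnergy (t, r)) := by gcongr
        _ = _ := by rw [hC]; ring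
    calc _ ≤ r ^ (N + 1) * (C * S.relEnergy (t, r)) := by gcongr
      _ = _ := by ring
  rw [intervalIntegral.integral_add ((intervalIntegrable_of_continuousOn_Icc S.hab hc).const_mul C)
    (hct.intervalIntegrable _ _), intervalIntegral.integral_const_mul] at h1
  have h2 := mul_le_mul_of_nonneg_left (S.slice_relEnergy_le ht) hC0
  have h3 := intervalIntegral_tail_le N hl S.hab
  unfold sliceConst
  linarith

/-- The truncated density satisfies a heat equation with controlled data. -/
def heatData (hb : 2 < S.b) (hρ : S.ρbar ≤ 1) (hε : 1 ≤ S.ε) :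
    HeatData N T S.a S.b (S.ε ^ (1 / 4 : ℝ)) (T * (2 * E₀)) (sourceConst γ T E₀)
      (sliceConst N γ E₀) where
  W x := truncate ⌈γ⌉₊ (S.dens x) - truncate ⌈γ⌉₊ S.ρbar
  Wt x := truncateDeriv ⌈γ⌉₊ (S.dens x) * S.densT x
  Wr x := truncateDeriv ⌈γ⌉₊ (S.dens x) * S.densR x
  Wrr x := truncateDeriv₂ ⌈γ⌉₊ (S.dens x) * S.densR x * S.densR x
    + truncateDeriv ⌈γ⌉₊ (S.dens x) * S.densRR x
  F x := truncateDeriv ⌈γ⌉₊ (S.dens x) * S.mom x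
  Fr x := truncateDeriv₂ ⌈γ⌉₊ (S.dens x) * S.densR x * S.mom x
    + truncateDeriv ⌈γ⌉₊ (S.dens x) * S.momR x
  σ x := -(S.ε * truncateDeriv₂ ⌈γ⌉₊ (S.dens x) * S.densR x ^ 2)
    + truncateDeriv₂ ⌈γ⌉₊ (S.dens x) * S.densR x * S.mom x
  hT := S.hT
  ha := S.ha0
  ha1 := S.ha1
  hb := hb
  he := one_le_rpow hε (by norm_num)
  cW := by fun_prop
  cWt := by fun_prop
  cWr := by fun_prop
  cWrr := by fun_prop
  cF := by fun_prop
  cFr := by fun_prop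
  cσ := by fun_prop
  dWt t r := ((hasDerivAt_truncate _ _).comp t (S.hasDerivAt_dens_time t r)).sub_const _
  dWr t r := ((hasDerivAt_truncate _ _).comp r (S.hasDerivAt_dens t r)).sub_const _
  dWrr t r := ((hasDerivAt_truncateDeriv _ _).comp r (S.hasDerivAt_dens t r)).mul
    (S.hasDerivAt_densR t r)
  dFr t r := ((hasDerivAt_truncateDeriv _ _).comp r (S.hasDerivAt_dens t r)).mul
    (S.hasDerivAt_mom t r)
  pde t ht r hr := by
    have he : (S.ε ^ (1 / 4 : ℝ)) ^ 4 = S.ε := by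
      rw [← rpow_natCast, ← rpow_mul S.hε.le]
      norm_num
    have h1 := S.continuity (mem_rect ht hr)
    simp only at h1
    rw [he]
    linear_combination truncateDeriv ⌈γ⌉₊ (S.dens (t, r)) * h1
  bW t ht := by rw [S.dens_right ht, sub_self]
  bWr t ht := by rw [S.densR_left ht, mul_zero]
  bFa t ht := by rw [S.mom_left ht, mul_zero]
  bFb t ht := by rw [S.mom_right ht, mul_zero]
  bound_W t ht r hr := (abs_truncate_sub_le S.one_le_ceil (S.dens_pos (mem_rect ht hr))
    S.hρbar).trans (by linarith [min_le_right |S.dens (t, r) - S.ρbar| 1])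
  bound_F := by
    refine le_trans ?_ (rect_le_of_slice (f := fun x => x.2 ^ (N + 1) * (S.mom x ^ 2 / S.dens x))
      (by fun_prop) S.hT.le S.hab fun t ht => S.slice_kinetic_le ht)
    refine rect_mono (by fun_prop) (by fun_prop) fun x hx => ?_
    have h1 := truncateDeriv_sq_mul_le S.one_le_ceil (S.dens_pos hx)
    refine mul_le_mul_of_nonneg_left ?_ (pow_nonneg (S.radius_pos hx).le _)
    rw [le_div_iff₀ (S.dens_pos hx)]
    have := mul_le_mul_of_nonneg_right h1 (sq_nonneg (S.mom x))
    linarith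
  bound_σ := by
    have h1 : ∀ x ∈ rect T S.a S.b, x.2 ^ (N + 1)
        * |-(S.ε * truncateDeriv₂ ⌈γ⌉₊ (S.dens x) * S.densR x ^ 2)
          + truncateDeriv₂ ⌈γ⌉₊ (S.dens x) * S.densR x * S.mom x|
        ≤ 4 * ⌈γ⌉₊ * S.ε * (x.2 ^ (N + 1) * (S.dens x ^ (γ - 2) * S.densR x ^ 2))
          + 2 * ⌈γ⌉₊ * (x.2 ^ (N + 1) * (S.mom x ^ 2 / S.dens x)) := fun x hx => by
      have h2 := truncated_source_le hε
        (abs_truncateDeriv₂_le_rpow S.hγ (Nat.le_ceil γ) (S.dens_pos hx))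
        (abs_truncateDeriv₂_le_div S.one_le_ceil (S.dens_pos hx)) rfl (q := S.densR x)
        (m := S.mom x)
      have h3 := mul_le_mul_of_nonneg_left h2 (pow_nonneg (S.radius_pos hx).le (N + 1))
      linarith
    have h2 := rect_mono (by fun_prop) (by fun_prop) h1
    rw [rect_add (by fun_prop) (by fun_prop), integral_const_mul, integral_const_mul] at h2
    have h3 := mul_le_mul_of_nonneg_left S.integral_densR_sq_le
      (by positivity : (0:ℝ) ≤ 4 * ⌈γ⌉₊)
    have h4 := mul_le_mul_of_nonneg_left (rect_le_of_slice
      (f := fun x => x.2 ^ (N + 1) * (S.mom x ^ 2 / S.dens x))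
      (by fun_prop) S.hT.le S.hab fun t ht => S.slice_kinetic_le ht)
      (by positivity : (0:ℝ) ≤ 2 * ⌈γ⌉₊)
    unfold sourceConst
    linarith
  bound_slice t ht := S.slice_truncate_le hρ ht

/-- The constant in the large viscosity estimate. -/
def largeConst (N : ℕ) (γ T E₀ : ℝ) : ℝ :=
  4 * HeatData.dissipationConst N T (T * (2 * E₀)) (sourceConst γ T E₀) (sliceConst N γ E₀)

/-- The estimate for the truncated density when the viscosity is at least one. -/
lemma truncated_gradient_le (hb : 2 < S.b) (hρ : S.ρbar ≤ 1) (hε : 1 ≤ S.ε) :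
    S.ε * ∫ x in rect T S.a 2, x.2 ^ (N + 1)
        * (4 * (truncateDeriv ⌈γ⌉₊ (S.dens x) * S.densR x) ^ 2)
      ≤ largeConst N γ T E₀ * √S.ε := by
  have h1 := (S.heatData hb hρ hε).dissipation_le
  have h4 : (S.ε ^ (1 / 4 : ℝ)) ^ 4 = S.ε := by
    rw [← rpow_natCast, ← rpow_mul S.hε.le]
    norm_num
  have h2 : (S.ε ^ (1 / 4 : ℝ)) ^ 2 = √S.ε := by
    rw [← rpow_natCast, ← rpow_mul S.hε.le, sqrt_eq_rpow]
    norm_num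
  rw [h4, h2] at h1
  have h5 : ∫ x in rect T S.a 2, x.2 ^ (N + 1)
        * (4 * (truncateDeriv ⌈γ⌉₊ (S.dens x) * S.densR x) ^ 2)
      = 4 * ∫ x in rect T S.a 2, x.2 ^ (N + 1) * (S.heatData hb hρ hε).Wr x ^ 2 := by
    rw [← integral_const_mul]
    exact rect_congr fun x _ => by simp only [heatData]; ring
  rw [h5]
  unfold largeConst
  linarith

end ViscousSetup

/-- A convex function of linear growth whose second derivative is at least one on `[0, Δ]`. -/
def lowPotential (Δ x : ℝ) : ℝ := 4 * Δ * (x ^ 2 / (Δ + x))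
/-- The derivative of `lowPotential`. -/
def lowPotentialDeriv (Δ x : ℝ) : ℝ := 4 * Δ * ((x ^ 2 + 2 * Δ * x) / (Δ + x) ^ 2)
/-- The second derivative of `lowPotential`. -/
def lowPotentialDeriv₂ (Δ x : ℝ) : ℝ := 8 * Δ ^ 3 / (Δ + x) ^ 3
/-- The primitive of `x * lowPotentialDeriv₂ Δ x` vanishing at the origin. -/
def lowFlux (Δ x : ℝ) : ℝ := 4 * Δ ^ 2 * (x ^ 2 / (Δ + x) ^ 2)

section lowPotential

variable {Δ x : ℝ}

lemma hasDerivAt_lowPotential (hΔ : 0 < Δ) (hx : 0 < x) :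
    HasDerivAt (lowPotential Δ) (lowPotentialDeriv Δ x) x := by
  have h : Δ + x ≠ 0 := by positivity
  refine (((hasDerivAt_pow 2 x).div ((hasDerivAt_id' x).const_add Δ) h).const_mul
    (4 * Δ)).congr_deriv ?_
  unfold lowPotentialDeriv
  push_cast
  ring

lemma hasDerivAt_lowPotentialDeriv (hΔ : 0 < Δ) (hx : 0 < x) :
    HasDerivAt (lowPotentialDeriv Δ) (lowPotentialDeriv₂ Δ x) x := by
  have h : Δ + x ≠ 0 := by positivity
  refine ((((hasDerivAt_pow 2 x).add ((hasDerivAt_id' x).const_mul (2 * Δ))).div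
    (((hasDerivAt_id' x).const_add Δ).pow 2) (pow_ne_zero 2 h)).const_mul (4 * Δ)).congr_deriv ?_
  unfold lowPotentialDeriv₂
  simp only [Pi.pow_apply, Pi.add_apply]
  push_cast
  field_simp
  ring

lemma hasDerivAt_lowFlux (hΔ : 0 < Δ) (hx : 0 < x) :
    HasDerivAt (lowFlux Δ) (x * lowPotentialDeriv₂ Δ x) x := by
  have h : Δ + x ≠ 0 := by positivity
  refine (((hasDerivAt_pow 2 x).div (((hasDerivAt_id' x).const_add Δ).pow 2)
    (pow_ne_zero 2 h)).const_mul (4 * Δ ^ 2)).congr_deriv ?_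
  unfold lowPotentialDeriv₂
  simp only [Pi.pow_apply]
  push_cast
  field_simp
  ring

lemma lowPotential_nonneg (hΔ : 0 < Δ) (hx : 0 < x) : 0 ≤ lowPotential Δ x := by
  unfold lowPotential
  positivity

lemma lowPotential_le (hΔ : 0 < Δ) (hx : 0 < x) : lowPotential Δ x ≤ 4 * Δ * x := by
  unfold lowPotential
  refine mul_le_mul_of_nonneg_left ?_ (by positivity)
  rw [div_le_iff₀ (by positivity)]
  linarith [mul_pos hΔ hx]

lemma lowPotentialDeriv_nonneg (hΔ : 0 < Δ) (hx : 0 < x) : 0 ≤ lowPotentialDeriv Δ x := by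
  unfold lowPotentialDeriv
  positivity

lemma lowPotentialDeriv_le (hΔ : 0 < Δ) (hx : 0 < x) : lowPotentialDeriv Δ x ≤ 4 * Δ := by
  unfold lowPotentialDeriv
  refine mul_le_of_le_one_right (by positivity) ?_
  rw [div_le_one (by positivity)]
  linarith [sq_nonneg Δ]

lemma lowPotentialDeriv₂_nonneg (hΔ : 0 < Δ) (hx : 0 < x) : 0 ≤ lowPotentialDeriv₂ Δ x := by
  unfold lowPotentialDeriv₂
  positivity

lemma one_le_lowPotentialDeriv₂ (hΔ : 0 < Δ) (hx : 0 < x) (h : x ≤ Δ) :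
    1 ≤ lowPotentialDeriv₂ Δ x := by
  unfold lowPotentialDeriv₂
  rw [le_div_iff₀ (by positivity), one_mul]
  calc (Δ + x) ^ 3 ≤ (Δ + Δ) ^ 3 := by gcongr
    _ = _ := by ring

lemma lowFlux_nonneg (hΔ : 0 < Δ) (hx : 0 < x) : 0 ≤ lowFlux Δ x := by
  unfold lowFlux
  positivity

lemma lowFlux_le (hΔ : 0 < Δ) (hx : 0 < x) : lowFlux Δ x ≤ 4 * Δ * x := by
  unfold lowFlux
  rw [← mul_div_assoc, div_le_iff₀ (by positivity)]
  have : 0 < Δ ^ 3 * x + Δ * x ^ 3 + Δ ^ 2 * x ^ 2 := by positivity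
  linarith

lemma lowFlux_sq_div_le (hΔ : 0 < Δ) (hx : 0 < x) : lowFlux Δ x ^ 2 / x ≤ 16 * Δ ^ 3 := by
  have h1 : lowFlux Δ x ≤ 4 * Δ ^ 2 := by
    unfold lowFlux
    refine mul_le_of_le_one_right (by positivity) ?_
    rw [div_le_one (by positivity)]
    gcongr
    linarith
  rw [div_le_iff₀ hx]
  calc lowFlux Δ x ^ 2 = lowFlux Δ x * lowFlux Δ x := by ring
    _ ≤ 4 * Δ ^ 2 * (4 * Δ * x) :=
      mul_le_mul h1 (lowFlux_le hΔ hx) (lowFlux_nonneg hΔ hx) (by positivity)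
    _ = _ := by ring

end lowPotential

/-- The square of a cutoff function, together with its derivatives and a bound for them. -/
structure Cutoff (K : ℝ) where
  η : ℝ → ℝ
  η₁ : ℝ → ℝ
  η₂ : ℝ → ℝ
  cη : Continuous η
  cη₁ : Continuous η₁
  cη₂ : Continuous η₂
  dη : ∀ r, HasDerivAt η (η₁ r) r
  dη₁ : ∀ r, HasDerivAt η₁ (η₂ r) r
  nonneg : ∀ r, 0 ≤ η r
  le : ∀ r, η r ≤ K
  abs_le₁ : ∀ r, |η₁ r| ≤ K
  abs_le₂ : ∀ r, |η₂ r| ≤ K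
  zero₁ : ∀ r ∈ Ioo (0 : ℝ) 1, η₁ r = 0
  zero₂ : ∀ r ∈ Ioo (0 : ℝ) 1, η₂ r = 0
  right : η 2 = 0
  right₁ : η₁ 2 = 0

namespace Cutoff

variable {K : ℝ} (c : Cutoff K)

@[fun_prop] lemma continuous_η : Continuous c.η := c.cη
@[fun_prop] lemma continuous_η₁ : Continuous c.η₁ := c.cη₁
@[fun_prop] lemma continuous_η₂ : Continuous c.η₂ := c.cη₂

lemma K_nonneg (c : Cutoff K) : 0 ≤ K := (c.nonneg 0).trans (c.le 0)

lemma weighted_deriv₂_le (N : ℕ) {r : ℝ} (hr : 0 < r) :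
    r ^ (N + 1) * c.η₂ r + (N + 1) * r ^ N * c.η₁ r ≤ K * (N + 2) * r ^ (N + 1) := by
  have hK := c.K_nonneg
  rcases lt_or_ge r 1 with h | h
  · rw [c.zero₁ r ⟨hr, h⟩, c.zero₂ r ⟨hr, h⟩]
    simp only [mul_zero, add_zero]
    positivity
  · have h1 : r ^ N ≤ r ^ (N + 1) := pow_le_pow_right₀ h (Nat.le_succ N)
    have h2 := (abs_le.1 (c.abs_le₁ r)).2
    have h3 := (abs_le.1 (c.abs_le₂ r)).2
    calc r ^ (N + 1) * c.η₂ r + (N + 1) * r ^ N * c.η₁ r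
        ≤ r ^ (N + 1) * K + (N + 1) * r ^ N * K := by gcongr
      _ ≤ r ^ (N + 1) * K + (N + 1) * r ^ (N + 1) * K := by gcongr
      _ = _ := by ring

lemma abs_weighted_deriv_le (N : ℕ) {a r : ℝ} (ha : 0 < a) (ha1 : a < 1) (har : a ≤ r) :
    |r ^ (N + 1) * c.η₁ r + (N + 1) * r ^ N * c.η r| ≤ K * (N + 2) * r ^ (N + 1) / a := by
  have hK := c.K_nonneg
  have hr : 0 < r := ha.trans_le har
  have h1 : r ^ N ≤ r ^ (N + 1) / a := by
    rw [le_div_iff₀ ha, pow_succ]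
    gcongr
  have h2 : r ^ (N + 1) ≤ r ^ (N + 1) / a := le_div_self (by positivity) ha ha1.le
  calc _ ≤ |r ^ (N + 1) * c.η₁ r| + |(N + 1) * r ^ N * c.η r| := abs_add_le _ _
    _ = r ^ (N + 1) * |c.η₁ r| + (N + 1) * r ^ N * c.η r := by
      rw [abs_mul, abs_of_pos (pow_pos hr _), abs_of_nonneg
        (mul_nonneg (by positivity) (c.nonneg r))]
    _ ≤ r ^ (N + 1) * K + (N + 1) * r ^ N * K := by
      gcongr
      · exact c.abs_le₁ r
      · exact c.le r
    _ ≤ r ^ (N + 1) / a * K + (N + 1) * (r ^ (N + 1) / a) * K := by gcongr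
    _ = _ := by ring

end Cutoff

/-- The pointwise bound for the remainder in the low density estimate. -/
lemma low_remainder_le {ε K P w a Δ s ρ m v φ φ₁ ψ g₁ g₂ η η₁ : ℝ} (hε : 0 ≤ ε) (hε1 : ε ≤ 1)
    (hK : 0 ≤ K) (hP : 1 ≤ P) (hw : 0 ≤ w) (ha : 0 < a) (ha1 : a < 1) (hΔ : 0 < Δ) (hs : 0 < s)
    (hρ : 0 < ρ) (hφ : 0 ≤ φ) (hφ' : φ ≤ 4 * Δ * ρ) (hφ₁ : 0 ≤ φ₁) (hφ₁' : φ₁ ≤ 4 * Δ)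
    (hψ : 0 ≤ ψ) (hψ' : ψ ≤ 4 * Δ * ρ) (hψ2 : ψ ^ 2 / ρ ≤ 16 * Δ ^ 3)
    (hη : 0 ≤ η) (hη' : η ≤ K) (hη₁ : |η₁| ≤ K)
    (hg₂ : g₂ ≤ K * P * w) (hg₁ : |g₁| ≤ K * P * w / a) :
    ε * (φ * g₂) + w * m * φ₁ * η₁ - ψ * (v * η * w + m / ρ * g₁)
      ≤ 8 * K * P * (Δ / a) * (w * ρ) + 8 * K * P * (Δ / a) * (w * (m ^ 2 / ρ))
        + 8 * K * (s * Δ ^ 3) * w + K / 2 * s⁻¹ * (w * (ρ * v ^ 2)) := by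
  have hΔa : Δ ≤ Δ / a := le_div_self hΔ.le ha ha1.le
  have hKP : K ≤ K * P := le_mul_of_one_le_right hK hP
  have hm : |m| ≤ 1 / 2 * (ρ + m ^ 2 / ρ) := by
    have h1 : 0 ≤ (|m| - ρ) ^ 2 / ρ := by positivity
    have h2 : (|m| - ρ) ^ 2 / ρ = m ^ 2 / ρ - 2 * |m| + ρ := by
      rw [sub_sq, sq_abs]
      field_simp
    linarith
  have e1 : ε * (φ * g₂) ≤ 4 * K * P * (Δ / a) * (w * ρ) := by
    calc ε * (φ * g₂) ≤ ε * (φ * (K * P * w)) := by gcongr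
      _ ≤ 1 * (4 * Δ * ρ * (K * P * w)) := by gcongr
      _ ≤ 1 * (4 * (Δ / a) * ρ * (K * P * w)) := by gcongr
      _ = _ := by ring
  have e2 : w * m * φ₁ * η₁ ≤ 4 * K * P * (Δ / a) * (w * |m|) := by
    calc w * m * φ₁ * η₁ ≤ |w * m * φ₁ * η₁| := le_abs_self _
      _ = w * |m| * φ₁ * |η₁| := by
        rw [abs_mul, abs_mul, abs_mul, abs_of_nonneg hw, abs_of_nonneg hφ₁]
      _ ≤ w * |m| * (4 * (Δ / a)) * (K * P) := by
        gcongr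
        · exact hφ₁'.trans (by linarith)
        · exact hη₁.trans hKP
      _ = _ := by ring
  have e3 : -(ψ * (m / ρ * g₁)) ≤ 4 * K * P * (Δ / a) * (w * |m|) := by
    calc -(ψ * (m / ρ * g₁)) ≤ |ψ * (m / ρ * g₁)| := neg_le_abs _
      _ = ψ * (|m| / ρ * |g₁|) := by
        rw [abs_mul, abs_mul, abs_div, abs_of_nonneg hψ, abs_of_pos hρ]
      _ ≤ 4 * Δ * ρ * (|m| / ρ * (K * P * w / a)) := by gcongr
      _ = _ := by field_simp
  have e4 : -(ψ * (v * η * w)) ≤ 8 * K * (s * Δ ^ 3) * w + K / 2 * s⁻¹ * (w * (ρ * v ^ 2)) := by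
    have h1 : ψ * |v| ≤ s / 2 * (ψ ^ 2 / ρ) + s⁻¹ / 2 * (ρ * v ^ 2) := by
      have h2 : 0 ≤ (s * ψ - ρ * |v|) ^ 2 / (2 * s * ρ) := by positivity
      have h3 : (s * ψ - ρ * |v|) ^ 2 / (2 * s * ρ)
          = s / 2 * (ψ ^ 2 / ρ) + s⁻¹ / 2 * (ρ * v ^ 2) - ψ * |v| := by
        rw [sub_sq, mul_pow ρ, sq_abs]
        field_simp
        ring
      linarith
    calc -(ψ * (v * η * w)) ≤ |ψ * (v * η * w)| := neg_le_abs _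
      _ = ψ * |v| * (η * w) := by
        rw [abs_mul, abs_mul, abs_mul, abs_of_nonneg hψ, abs_of_nonneg hη, abs_of_nonneg hw]
        ring
      _ ≤ (s / 2 * (ψ ^ 2 / ρ) + s⁻¹ / 2 * (ρ * v ^ 2)) * (K * w) := by gcongr
      _ ≤ (s / 2 * (16 * Δ ^ 3) + s⁻¹ / 2 * (ρ * v ^ 2)) * (K * w) := by gcongr
      _ = _ := by ring
  have e5 := mul_le_mul_of_nonneg_left hm (by positivity : 0 ≤ 8 * K * P * (Δ / a) * w)
  have e6 : 0 ≤ 4 * K * P * (Δ / a) * (w * (m ^ 2 / ρ)) := by positivity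
  linarith

namespace ViscousSetup

variable {N : ℕ} {γ T E₀ : ℝ} (S : ViscousSetup (N + 2) γ T E₀) {K Δ : ℝ} (c : Cutoff K)

/-- The remainder in the low density identity. -/
def lowRemainder (Δ : ℝ) (x : ℝ × ℝ) : ℝ :=
  S.ε * (lowPotential Δ (S.dens x) * (x.2 ^ (N + 1) * c.η₂ x.2 + (N + 1) * x.2 ^ N * c.η₁ x.2))
    + x.2 ^ (N + 1) * S.mom x * lowPotentialDeriv Δ (S.dens x) * c.η₁ x.2
    - lowFlux Δ (S.dens x) * (S.velR x * c.η x.2 * x.2 ^ (N + 1)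
      + S.mom x / S.dens x * (x.2 ^ (N + 1) * c.η₁ x.2 + (N + 1) * x.2 ^ N * c.η x.2))

/-- The dissipation in the low density identity. -/
def lowDissipation (Δ : ℝ) (x : ℝ × ℝ) : ℝ :=
  x.2 ^ (N + 1) * (lowPotentialDeriv₂ Δ (S.dens x) * S.densR x ^ 2 * c.η x.2)

lemma rect_two_subset (hb : 2 < S.b) : rect T S.a 2 ⊆ rect T S.a S.b :=
  prod_mono_right (Icc_subset_Icc_right hb.le)

lemma continuousOn_comp_dens {f f' : ℝ → ℝ} (hf : ∀ x, 0 < x → HasDerivAt f (f' x) x) :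
    ContinuousOn (fun x => f (S.dens x)) (rect T S.a S.b) := fun _ hx =>
  ((hf _ (S.dens_pos hx)).continuousAt.comp S.continuous_dens.continuousAt).continuousWithinAt

lemma continuousOn_lowPotentialDeriv₂ (hΔ : 0 < Δ) :
    ContinuousOn (fun x => lowPotentialDeriv₂ Δ (S.dens x)) (rect T S.a S.b) :=
  ContinuousOn.div (by fun_prop) (by fun_prop) fun x hx => by
    have := S.dens_pos hx
    positivity

lemma continuousOn_vel : ContinuousOn (fun x => S.mom x / S.dens x) (rect T S.a S.b) :=
  ContinuousOn.div (by fun_prop) (by fun_prop) fun _ hx => S.dens_ne hx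

lemma continuousOn_lowRemainder (hΔ : 0 < Δ) :
    ContinuousOn (S.lowRemainder c Δ) (rect T S.a S.b) := by
  have h1 := S.continuousOn_comp_dens fun x hx => hasDerivAt_lowPotential hΔ hx
  have h2 := S.continuousOn_comp_dens fun x hx => hasDerivAt_lowPotentialDeriv hΔ hx
  have h3 := S.continuousOn_comp_dens fun x hx => hasDerivAt_lowFlux hΔ hx
  have h4 := S.continuousOn_vel
  unfold lowRemainder
  fun_prop

lemma continuousOn_lowDissipation (hΔ : 0 < Δ) :
    ContinuousOn (S.lowDissipation c Δ) (rect T S.a S.b) := by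
  have h1 := S.continuousOn_lowPotentialDeriv₂ hΔ
  unfold lowDissipation
  fun_prop

/-- The localised balance law for the low density potential. -/
lemma low_identity (hb : 2 < S.b) (hΔ : 0 < Δ) :
    ∫ x in rect T S.a 2, (S.lowRemainder c Δ x - S.ε * S.lowDissipation c Δ x)
      = ∫ r in S.a..2, (r ^ (N + 1) * (lowPotential Δ (S.dens (T, r)) * c.η r)
        - r ^ (N + 1) * (lowPotential Δ (S.dens (0, r)) * c.η r)) := by
  have ha2 : S.a ≤ 2 := by linarith [S.ha1]
  have hsub := S.rect_two_subset hb
  have k1 := S.continuousOn_comp_dens fun x hx => hasDerivAt_lowPotential hΔ hx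
  have k2 := S.continuousOn_comp_dens fun x hx => hasDerivAt_lowPotentialDeriv hΔ hx
  have k3 := S.continuousOn_comp_dens fun x hx => hasDerivAt_lowFlux hΔ hx
  have k4 := S.continuousOn_vel
  have k5 := S.continuousOn_lowPotentialDeriv₂ hΔ
  have hA : ∀ t ∈ Icc 0 T, ∀ r ∈ Icc S.a 2,
      HasDerivAt (fun s => r ^ (N + 1) * (lowPotential Δ (S.dens (s, r)) * c.η r))
        (r ^ (N + 1) * (lowPotentialDeriv Δ (S.dens (t, r)) * S.densT (t, r) * c.η r)) t :=
    fun t ht r hr => (((hasDerivAt_lowPotential hΔ (S.dens_pos (hsub (mem_rect ht hr)))).comp t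
      (S.hasDerivAt_dens_time t r)).mul_const _).const_mul _
  have hB : ∀ t ∈ Icc 0 T, ∀ r ∈ Icc S.a 2,
      HasDerivAt (fun y => lowPotentialDeriv Δ (S.dens (t, y))
          * ((S.mom (t, y) - S.ε * S.densR (t, y)) * (y ^ (N + 1) * c.η y))
          - lowFlux Δ (S.dens (t, y)) * (S.mom (t, y) / S.dens (t, y) * (y ^ (N + 1) * c.η y))
          + S.ε * (lowPotential Δ (S.dens (t, y)) * (y ^ (N + 1) * c.η₁ y)))
        (lowPotentialDeriv₂ Δ (S.dens (t, r)) * S.densR (t, r)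
            * ((S.mom (t, r) - S.ε * S.densR (t, r)) * (r ^ (N + 1) * c.η r))
          + lowPotentialDeriv Δ (S.dens (t, r))
            * ((S.momR (t, r) - S.ε * S.densRR (t, r)) * (r ^ (N + 1) * c.η r)
              + (S.mom (t, r) - S.ε * S.densR (t, r))
                * ((N + 1) * r ^ N * c.η r + r ^ (N + 1) * c.η₁ r))
          - (S.dens (t, r) * lowPotentialDeriv₂ Δ (S.dens (t, r)) * S.densR (t, r)
              * (S.mom (t, r) / S.dens (t, r) * (r ^ (N + 1) * c.η r))
            + lowFlux Δ (S.dens (t, r)) * (S.velR (t, r) * (r ^ (N + 1) * c.η r)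
              + S.mom (t, r) / S.dens (t, r)
                * ((N + 1) * r ^ N * c.η r + r ^ (N + 1) * c.η₁ r)))
          + S.ε * (lowPotentialDeriv Δ (S.dens (t, r)) * S.densR (t, r) * (r ^ (N + 1) * c.η₁ r)
            + lowPotential Δ (S.dens (t, r))
              * ((N + 1) * r ^ N * c.η₁ r + r ^ (N + 1) * c.η₂ r))) r := by
    intro t ht r hr
    have hx := hsub (mem_rect ht hr)
    have d0 := S.hasDerivAt_dens t r
    have d1 := (hasDerivAt_lowPotential hΔ (S.dens_pos hx)).comp r d0
    have d2 := (hasDerivAt_lowPotentialDeriv hΔ (S.dens_pos hx)).comp r d0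
    have d3 := (hasDerivAt_lowFlux hΔ (S.dens_pos hx)).comp r d0
    have d4 := (hasDerivAt_pow_succ N r).mul (c.dη r)
    have d5 := (hasDerivAt_pow_succ N r).mul (c.dη₁ r)
    exact ((d2.mul (((S.hasDerivAt_mom t r).sub ((S.hasDerivAt_densR t r).const_mul S.ε)).mul
      d4)).sub (d3.mul ((S.hasDerivAt_vel hx).mul d4))).add ((d1.mul d5).const_mul S.ε)
  rw [rect_div
    (A := fun x => x.2 ^ (N + 1) * (lowPotential Δ (S.dens x) * c.η x.2))
    (At := fun x => x.2 ^ (N + 1) * (lowPotentialDeriv Δ (S.dens x) * S.densT x * c.η x.2))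
    (B := fun x => lowPotentialDeriv Δ (S.dens x)
          * ((S.mom x - S.ε * S.densR x) * (x.2 ^ (N + 1) * c.η x.2))
          - lowFlux Δ (S.dens x) * (S.mom x / S.dens x * (x.2 ^ (N + 1) * c.η x.2))
          + S.ε * (lowPotential Δ (S.dens x) * (x.2 ^ (N + 1) * c.η₁ x.2)))
    (Br := fun x => lowPotentialDeriv₂ Δ (S.dens x) * S.densR x
            * ((S.mom x - S.ε * S.densR x) * (x.2 ^ (N + 1) * c.η x.2))
          + lowPotentialDeriv Δ (S.dens x)
            * ((S.momR x - S.ε * S.densRR x) * (x.2 ^ (N + 1) * c.η x.2)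
              + (S.mom x - S.ε * S.densR x)
                * ((N + 1) * x.2 ^ N * c.η x.2 + x.2 ^ (N + 1) * c.η₁ x.2))
          - (S.dens x * lowPotentialDeriv₂ Δ (S.dens x) * S.densR x
              * (S.mom x / S.dens x * (x.2 ^ (N + 1) * c.η x.2))
            + lowFlux Δ (S.dens x) * (S.velR x * (x.2 ^ (N + 1) * c.η x.2)
              + S.mom x / S.dens x
                * ((N + 1) * x.2 ^ N * c.η x.2 + x.2 ^ (N + 1) * c.η₁ x.2)))
          + S.ε * (lowPotentialDeriv Δ (S.dens x) * S.densR x * (x.2 ^ (N + 1) * c.η₁ x.2)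
            + lowPotential Δ (S.dens x)
              * ((N + 1) * x.2 ^ N * c.η₁ x.2 + x.2 ^ (N + 1) * c.η₂ x.2)))
    (ContinuousOn.mono (by fun_prop) hsub) (ContinuousOn.mono (by fun_prop) hsub)
    S.hT.le ha2 hA hB]
  · simp only
    rw [add_eq_left]
    refine (intervalIntegral.integral_congr (g := fun _ => 0) fun t ht => ?_).trans (by simp)
    rw [uIcc_of_le S.hT.le] at ht
    simp only [c.right, c.right₁, c.zero₁ S.a ⟨S.ha0, S.ha1⟩, S.densR_left ht, S.mom_left ht]
    ring
  · intro t ht r hr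
    have hx := hsub (mem_rect ht hr)
    have h1 := S.continuity hx
    have h2 : S.dens (t, r) * (S.mom (t, r) / S.dens (t, r)) = S.mom (t, r) :=
      mul_div_cancel₀ _ (S.dens_ne hx)
    simp only [lowRemainder, lowDissipation] at h1 ⊢
    linear_combination -(lowPotentialDeriv Δ (S.dens (t, r)) * c.η r) * h1
      + lowPotentialDeriv₂ Δ (S.dens (t, r)) * S.densR (t, r) * r ^ (N + 1) * c.η r * h2

end ViscousSetup

/-- The bound for the mass on time slices in the region `r ≤ 2`. -/
def massConst (N : ℕ) (γ E₀ : ℝ) : ℝ := 3 / 2 * 2 ^ (N + 2) + growthConst γ * E₀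

/-- The coefficient of `Δ / a` in the small viscosity estimate. -/
def geometricConst (N : ℕ) (γ T E₀ K : ℝ) : ℝ :=
  4 * K * massConst N γ E₀ + 8 * K * (N + 2) * (T * massConst N γ E₀)
    + 8 * K * (N + 2) * (T * (2 * E₀))

/-- The coefficient of `Δ ^ (3 / 2) / √ε` in the small viscosity estimate. -/
def shearConst (N : ℕ) (T E₀ K : ℝ) : ℝ := 8 * K * (T * 2 ^ (N + 2)) + K / 2 * E₀

namespace ViscousSetup

variable {N : ℕ} {γ T E₀ : ℝ} (S : ViscousSetup (N + 2) γ T E₀) {K Δ : ℝ} (c : Cutoff K)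

lemma integral_lowRemainder_le (hb : 2 < S.b) (hρ : S.ρbar ≤ 1) (hε : S.ε ≤ 1) (hΔ : 0 < Δ) {s : ℝ}
    (hs : 0 < s) :
    ∫ x in rect T S.a 2, S.lowRemainder c Δ x
      ≤ 8 * K * (N + 2) * (Δ / S.a) * (T * massConst N γ E₀)
        + 8 * K * (N + 2) * (Δ / S.a) * (T * (2 * E₀))
        + 8 * K * (s * Δ ^ 3) * (T * 2 ^ (N + 2)) + K / 2 * s⁻¹ * (E₀ / S.ε) := by
  have ha := S.ha0
  have ha2 : S.a ≤ 2 := by linarith [S.ha1]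
  have hK := c.K_nonneg
  have hsub := S.rect_two_subset hb
  have k1 : ContinuousOn (fun x => S.mom x ^ 2 / S.dens x) (rect T S.a 2) :=
    S.continuousOn_mom_sq_div.mono hsub
  have k2 : ContinuousOn S.velR (rect T S.a 2) := S.continuousOn_velR.mono hsub
  have h1 : ∫ x in rect T S.a 2, S.lowRemainder c Δ x
      ≤ ∫ x in rect T S.a 2, (8 * K * (N + 2) * (Δ / S.a) * (x.2 ^ (N + 1) * S.dens x)
        + 8 * K * (N + 2) * (Δ / S.a) * (x.2 ^ (N + 1) * (S.mom x ^ 2 / S.dens x))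
        + 8 * K * (s * Δ ^ 3) * x.2 ^ (N + 1)
        + K / 2 * s⁻¹ * (x.2 ^ (N + 1) * (S.dens x * S.velR x ^ 2))) := by
    refine rect_mono ((S.continuousOn_lowRemainder c hΔ).mono hsub) (by fun_prop) fun x hx => ?_
    have hd := S.dens_pos (hsub hx)
    have hr := S.radius_pos (hsub hx)
    exact low_remainder_le S.hε.le hε hK (by linarith [(Nat.cast_nonneg N : (0:ℝ) ≤ N)])
      (pow_nonneg hr.le _) ha S.ha1 hΔ hs hd (lowPotential_nonneg hΔ hd) (lowPotential_le hΔ hd)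
      (lowPotentialDeriv_nonneg hΔ hd) (lowPotentialDeriv_le hΔ hd) (lowFlux_nonneg hΔ hd)
      (lowFlux_le hΔ hd) (lowFlux_sq_div_le hΔ hd) (c.nonneg _) (c.le _) (c.abs_le₁ _)
      (c.weighted_deriv₂_le N hr) (c.abs_weighted_deriv_le N ha S.ha1 hx.2.1)
  rw [rect_add (by fun_prop) (by fun_prop), rect_add (by fun_prop) (by fun_prop),
    rect_add (by fun_prop) (by fun_prop), integral_const_mul, integral_const_mul,
    integral_const_mul, integral_const_mul] at h1
  have h2 : ∫ x in rect T S.a 2, x.2 ^ (N + 1) * S.dens x ≤ T * massConst N γ E₀ :=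
    rect_le_of_slice (f := fun x => x.2 ^ (N + 1) * S.dens x) (by fun_prop) S.hT.le ha2
      fun t ht => S.slice_dens_le hρ hb ht
  have h3 : ∫ x in rect T S.a 2, x.2 ^ (N + 1) * (S.mom x ^ 2 / S.dens x) ≤ T * (2 * E₀) := by
    refine (rect_subset_mono (b := S.b) (by fun_prop) (fun x hx => ?_) hb.le).trans
      (rect_le_of_slice (f := fun x => x.2 ^ (N + 1) * (S.mom x ^ 2 / S.dens x))
        (by fun_prop) S.hT.le S.hab fun t ht => S.slice_kinetic_le ht)
    have hd := S.dens_pos hx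
    have hr := S.radius_pos hx
    positivity
  have h4 : ∫ x in rect T S.a 2, x.2 ^ (N + 1) ≤ T * 2 ^ (N + 2) := by
    refine rect_le_of_slice (f := fun x => x.2 ^ (N + 1)) (by fun_prop) S.hT.le ha2 fun t _ => ?_
    calc ∫ r in S.a..2, r ^ (N + 1) ≤ ∫ r in S.a..2, (2 : ℝ) ^ (N + 1) :=
          intervalIntegral.integral_mono_on ha2
            (Continuous.intervalIntegrable (by fun_prop) _ _) (by simp)
            fun r hr => pow_le_pow_left₀ (ha.trans_le hr.1).le hr.2 _
      _ = (2 - S.a) * 2 ^ (N + 1) := by simp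
      _ ≤ 2 * 2 ^ (N + 1) := by gcongr; linarith
      _ = 2 ^ (N + 2) := by ring
  have h5 : ∫ x in rect T S.a 2, x.2 ^ (N + 1) * (S.dens x * S.velR x ^ 2) ≤ E₀ / S.ε := by
    rw [le_div_iff₀' S.hε]
    refine le_trans (mul_le_mul_of_nonneg_left (rect_subset_mono (b := S.b) (by fun_prop)
      (fun x hx => ?_) hb.le) S.hε.le) S.integral_velR_sq_le
    have hd := S.dens_pos hx
    have hr := S.radius_pos hx
    positivity
  refine h1.trans ?_
  gcongr

/-- The low density estimate when the viscosity is at most one. -/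
lemma integral_lowDissipation_le (hb : 2 < S.b) (hρ : S.ρbar ≤ 1) (hε : S.ε ≤ 1) (hΔ : 0 < Δ) :
    S.ε * ∫ x in rect T S.a 2, S.lowDissipation c Δ x
      ≤ geometricConst N γ T E₀ K * (Δ / S.a)
        + shearConst N T E₀ K * (Δ ^ ((3:ℝ) / 2) / √S.ε) := by
  have ha := S.ha0
  have ha2 : S.a ≤ 2 := by linarith [S.ha1]
  have hK := c.K_nonneg
  have hsub := S.rect_two_subset hb
  have hT0 : (0 : ℝ) ∈ Icc 0 T := ⟨le_rfl, S.hT.le⟩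
  have hTT : T ∈ Icc 0 T := ⟨S.hT.le, le_rfl⟩
  have h1 := S.low_identity c hb hΔ
  rw [rect_sub (g := fun x => S.ε * S.lowDissipation c Δ x)
    ((S.continuousOn_lowRemainder c hΔ).mono hsub) (continuousOn_const.mul ((S.continuousOn_lowDissipation c hΔ).mono hsub)),
    integral_const_mul] at h1
  have hs : 0 < Δ ^ ((3:ℝ) / 2) := rpow_pos_of_pos hΔ _
  have hq : 0 < √S.ε := sqrt_pos.2 S.hε
  have h2 := S.integral_lowRemainder_le c hb hρ hε hΔ (s := 1 / (Δ ^ ((3:ℝ) / 2) * √S.ε))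
    (by positivity)
  have hs3 : Δ ^ 3 = (Δ ^ ((3:ℝ) / 2)) ^ 2 := by
    rw [← rpow_natCast (Δ ^ _), ← rpow_mul hΔ.le, ← rpow_natCast Δ]
    norm_num
  have e1 : 1 / (Δ ^ ((3:ℝ) / 2) * √S.ε) * Δ ^ 3 = Δ ^ ((3:ℝ) / 2) / √S.ε := by
    rw [hs3]
    field_simp
  have e2 : (1 / (Δ ^ ((3:ℝ) / 2) * √S.ε))⁻¹ * (E₀ / S.ε) = E₀ * (Δ ^ ((3:ℝ) / 2) / √S.ε) := by
    nth_rewrite 2 [← sq_sqrt S.hε.le]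
    field_simp
  rw [e1, mul_assoc (K / 2), e2] at h2
  have hc : ∀ t ∈ Icc 0 T, ContinuousOn (fun r => r ^ (N + 1)
      * (lowPotential Δ (S.dens (t, r)) * c.η r)) (Icc S.a 2) := fun t ht =>
    continuousOn_slice_right (f := fun x => x.2 ^ (N + 1)
      * (lowPotential Δ (S.dens x) * c.η x.2)) (by
        have := (S.continuousOn_comp_dens fun _ hx => hasDerivAt_lowPotential hΔ hx).mono hsub
        fun_prop) ht
  have h3 : ∫ r in S.a..2, (r ^ (N + 1) * (lowPotential Δ (S.dens (0, r)) * c.η r)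
      - r ^ (N + 1) * (lowPotential Δ (S.dens (T, r)) * c.η r))
      ≤ ∫ r in S.a..2, 4 * K * (Δ / S.a) * (r ^ (N + 1) * S.dens (0, r)) := by
    refine intervalIntegral.integral_mono_on ha2
      (intervalIntegrable_of_continuousOn_Icc ha2 ((hc 0 hT0).sub (hc T hTT)))
      (Continuous.intervalIntegrable (by fun_prop) _ _) fun r hr => ?_
    have hr0 : 0 < r := ha.trans_le hr.1
    have d0 := S.dens_pos (hsub (mem_rect hT0 hr))
    have d1 := S.dens_pos (hsub (mem_rect hTT hr))
    have h4 : 0 ≤ r ^ (N + 1) * (lowPotential Δ (S.dens (T, r)) * c.η r) :=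
      mul_nonneg (by positivity) (mul_nonneg (lowPotential_nonneg hΔ d1) (c.nonneg r))
    have hΔa : Δ ≤ Δ / S.a := le_div_self hΔ.le ha S.ha1.le
    calc _ ≤ r ^ (N + 1) * (lowPotential Δ (S.dens (0, r)) * c.η r) := by linarith
      _ ≤ r ^ (N + 1) * (4 * Δ * S.dens (0, r) * K) := by
        gcongr
        · exact c.nonneg r
        · exact lowPotential_le hΔ d0
        · exact c.le r
      _ ≤ r ^ (N + 1) * (4 * (Δ / S.a) * S.dens (0, r) * K) := by gcongr
      _ = _ := by ring
  have h4 : ∫ r in S.a..2, (r ^ (N + 1) * (lowPotential Δ (S.dens (T, r)) * c.η r)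
      - r ^ (N + 1) * (lowPotential Δ (S.dens (0, r)) * c.η r))
      = -∫ r in S.a..2, (r ^ (N + 1) * (lowPotential Δ (S.dens (0, r)) * c.η r)
      - r ^ (N + 1) * (lowPotential Δ (S.dens (T, r)) * c.η r)) := by
    rw [← intervalIntegral.integral_neg]
    exact intervalIntegral.integral_congr fun r _ => (neg_sub _ _).symm
  rw [intervalIntegral.integral_const_mul] at h3
  have h5 := mul_le_mul_of_nonneg_left (S.slice_dens_le hρ hb hT0)
    (by positivity : 0 ≤ 4 * K * (Δ / S.a))
  change _ ≤ _ * massConst N γ E₀ at h5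
  unfold geometricConst shearConst
  linarith

/-- An estimate of the low density integral by a continuous majorant. -/
lemma low_integral_le (hb : 2 < S.b) {ω : ℝ → ℝ} (hω : ∀ r, 2 ≤ r → ω r = 0)
    {g : ℝ × ℝ → ℝ} (hg : ContinuousOn g (rect T S.a 2))
    (h0 : ∀ x ∈ rect T S.a 2, 0 ≤ g x)
    (h : ∀ x ∈ rect T S.a 2, S.dens x < Δ → S.densR x ^ 2 * ω x.2 ^ 2 * x.2 ^ (N + 1) ≤ g x) :
    ∫ t in Ioo 0 T, ∫ r in Ioo S.a S.b,
        (if S.ρ t r < Δ then (deriv (fun y => S.ρ t y) r) ^ (2:ℕ) else 0)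
          * (ω r) ^ (2:ℕ) * r ^ (N + 1)
      ≤ ∫ x in rect T S.a 2, g x := by
  have ha2 : S.a ≤ 2 := by linarith [S.ha1]
  have hf0 : ∀ t r, r ∈ Ioo S.a S.b → 0 ≤
      (if S.ρ t r < Δ then (deriv (fun y => S.ρ t y) r) ^ (2:ℕ) else 0)
          * (ω r) ^ (2:ℕ) * r ^ (N + 1) := fun t r hr => by
    have hr0 : 0 < r := S.ha0.trans hr.1
    split_ifs <;> positivity
  have hin : ∀ t ∈ Icc 0 T, ∫ r in Ioo S.a S.b,
        (if S.ρ t r < Δ then (deriv (fun y => S.ρ t y) r) ^ (2:ℕ) else 0)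
          * (ω r) ^ (2:ℕ) * r ^ (N + 1) ≤ ∫ r in S.a..2, g (t, r) := fun t ht => by
    have hgi : IntegrableOn (fun r => g (t, r)) (Ioc S.a 2) :=
      (intervalIntegrable_iff_integrableOn_Ioc_of_le ha2).1
        (intervalIntegrable_of_continuousOn_Icc ha2 (continuousOn_slice_right hg ht))
    have hsplit : ∫ r in Ioo S.a S.b,
        (if S.ρ t r < Δ then (deriv (fun y => S.ρ t y) r) ^ (2:ℕ) else 0)
          * (ω r) ^ (2:ℕ) * r ^ (N + 1) = ∫ r in Ioc S.a 2,
        (if S.ρ t r < Δ then (deriv (fun y => S.ρ t y) r) ^ (2:ℕ) else 0)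
          * (ω r) ^ (2:ℕ) * r ^ (N + 1) := by
      refine setIntegral_eq_of_subset_of_forall_sdiff_eq_zero measurableSet_Ioo
        (fun r hr => ⟨hr.1, hr.2.trans_lt hb⟩) fun r hr => ?_
      have : 2 ≤ r := by
        by_contra! hlt
        exact hr.2 ⟨hr.1.1, hlt.le⟩
      rw [hω r this]
      simp
    rw [hsplit, intervalIntegral.integral_of_le ha2]
    refine integral_mono_of_nonneg ?_ hgi ?_
    · exact (ae_restrict_iff' measurableSet_Ioc).2 (Filter.Eventually.of_forall
        fun r hr => hf0 t r ⟨hr.1, hr.2.trans_lt hb⟩)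
    · refine (ae_restrict_iff' measurableSet_Ioc).2 (Filter.Eventually.of_forall fun r hr => ?_)
      have hx : (t, r) ∈ rect T S.a 2 := mem_rect ht ⟨hr.1.le, hr.2⟩
      simp only
      split_ifs with hlt
      · exact h (t, r) hx hlt
      · simpa using h0 (t, r) hx
  rw [integral_rect hg S.hT.le ha2, ← setIntegral_Ioo_eq S.hT.le]
  refine integral_mono_of_nonneg ?_ ?_ ?_
  · exact Filter.Eventually.of_forall fun t => setIntegral_nonneg measurableSet_Ioo (hf0 t)
  · have hi := integrableOn_rect hg
    rw [rect, IntegrableOn, Measure.volume_eq_prod, ← Measure.prod_restrict] at hi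
    have h1 := hi.integral_prod_left
    have h2 : IntegrableOn (fun t => ∫ r in S.a..2, g (t, r)) (Icc 0 T) := by
      refine Integrable.congr h1 (Filter.Eventually.of_forall fun t => ?_)
      simp only
      rw [intervalIntegral.integral_of_le ha2, integral_Icc_eq_integral_Ioc]
    exact h2.mono_set Ioo_subset_Icc_self
  · exact (ae_restrict_iff' measurableSet_Ioo).2 (Filter.Eventually.of_forall
      fun t ht => hin t (Ioo_subset_Icc_self ht))

end ViscousSetup

lemma exists_cutoff {ω : ℝ → ℝ} (hω_smooth : ContDiff ℝ (⊤ : ℕ∞) ω) (hω_supp : HasCompactSupport ω)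
    (hω_one : ∀ r ∈ Icc (0:ℝ) 1, ω r = 1) (hω_zero : ∀ r : ℝ, 2 ≤ r → ω r = 0) :
    ∃ (K : ℝ) (c : Cutoff K), ∀ r, c.η r = ω r ^ 2 := by
  set η : ℝ → ℝ := fun r => ω r ^ 2 with hη
  have s0 : ContDiff ℝ (⊤ : ℕ∞) η := hω_smooth.pow 2
  have s1 : ContDiff ℝ (⊤ : ℕ∞) (deriv η) := (contDiff_infty_iff_deriv.1 s0).2
  have s2 : ContDiff ℝ (⊤ : ℕ∞) (deriv (deriv η)) := (contDiff_infty_iff_deriv.1 s1).2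
  have c0 : HasCompactSupport η := hω_supp.comp_left (g := fun y => y ^ 2) (by simp)
  obtain ⟨K₀, hK₀⟩ := s0.continuous.bounded_above_of_compact_support c0
  obtain ⟨K₁, hK₁⟩ := s1.continuous.bounded_above_of_compact_support c0.deriv
  obtain ⟨K₂, hK₂⟩ := s2.continuous.bounded_above_of_compact_support c0.deriv.deriv
  have z1 : ∀ r ∈ Ioo (0 : ℝ) 1, deriv η r = 0 := fun r hr => by
    have : η =ᶠ[nhds r] fun _ => 1 := by
      filter_upwards [Ioo_mem_nhds hr.1 hr.2] with y hy
      simp [hη, hω_one y ⟨hy.1.le, hy.2.le⟩]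
    rw [this.deriv_eq, deriv_const]
  have z2 : ∀ r ∈ Ioo (0 : ℝ) 1, deriv (deriv η) r = 0 := fun r hr => by
    have : deriv η =ᶠ[nhds r] fun _ => 0 := by
      filter_upwards [Ioo_mem_nhds hr.1 hr.2] with y hy using z1 y hy
    rw [this.deriv_eq, deriv_const]
  have w2 : ω 2 = 0 := hω_zero 2 le_rfl
  have dη2 : deriv η 2 = 0 := by
    have h1 := ((hω_smooth.differentiable (by simp) 2).hasDerivAt.pow 2).deriv
    rw [w2] at h1
    exact h1.trans (by simp)
  exact ⟨max K₀ (max K₁ K₂),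
    { η := η
      η₁ := deriv η
      η₂ := deriv (deriv η)
      cη := s0.continuous
      cη₁ := s1.continuous
      cη₂ := s2.continuous
      dη := fun r => (s0.differentiable (by simp) r).hasDerivAt
      dη₁ := fun r => (s1.differentiable (by simp) r).hasDerivAt
      nonneg := fun r => sq_nonneg _
      le := fun r => (le_abs_self _).trans ((hK₀ r).trans (le_max_left _ _))
      abs_le₁ := fun r => (hK₁ r).trans ((le_max_left _ _).trans (le_max_right _ _))
      abs_le₂ := fun r => (hK₂ r).trans ((le_max_right _ _).trans (le_max_right _ _))
      zero₁ := z1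
      zero₂ := z2
      right := by simp [hη, w2]
      right₁ := dη2 }, fun _ => rfl⟩

/-- under the Viscous Setup with `b > 2` and `ρ̄ ≤ 1`, for a cutoff
`ω ∈ C_c^∞(ℝ)` with `ω = 1` on `[0,1]` and `ω = 0` on `[2,∞)`, there is `M > 0`
depending only on `n, γ, T, E₀, ω` (independent of `Δ` and `ε`) such that for any
`Δ ∈ (0,½)`,
`ε∫₀^T∫_a^b ρ_r² 𝟙_{ρ<Δ} ω² r^{n−1} dr dt ≤ M(√ε(1 + Δ^{4−γ}) + Δ/a + Δ^{3/2}/√ε)`. -/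
theorem viscous_density_derivative_bound (n : ℕ) (γ T E₀ : ℝ)
    (ω : ℝ → ℝ) (hω_smooth : ContDiff ℝ (⊤ : ℕ∞) ω) (hω_supp : HasCompactSupport ω)
    (hω_one : ∀ r ∈ Set.Icc (0:ℝ) 1, ω r = 1) (hω_zero : ∀ r : ℝ, 2 ≤ r → ω r = 0) :
    ∃ M : ℝ, 0 < M ∧ ∀ Δ ∈ Set.Ioo (0:ℝ) (1/2), ∀ S : ViscousSetup n γ T E₀,
      2 < S.b → S.ρbar ≤ 1 →
      S.ε * ∫ t in Set.Ioo 0 T, ∫ r in Set.Ioo S.a S.b,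
          (if S.ρ t r < Δ then (deriv (fun y => S.ρ t y) r) ^ (2:ℕ) else 0)
            * (ω r) ^ (2:ℕ) * r ^ (n - 1)
        ≤ M * (Real.sqrt S.ε * (1 + Δ ^ (4 - γ)) + Δ / S.a
            + Δ ^ ((3:ℝ)/2) / Real.sqrt S.ε) := by
  rcases lt_or_ge n 2 with hn | hn
  · exact ⟨1, one_pos, fun Δ _ S => absurd S.hn (not_le.2 hn)⟩
  obtain ⟨N, rfl⟩ := Nat.exists_eq_add_of_le' hn
  obtain ⟨K, c, hc⟩ := exists_cutoff hω_smooth hω_supp hω_one hω_zero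
  refine ⟨1 + |K * ViscousSetup.largeConst N γ T E₀| + |geometricConst N γ T E₀ K|
    + |shearConst N T E₀ K|, by positivity, fun Δ hΔ S hb hρ => ?_⟩
  have hΔ0 : 0 < Δ := hΔ.1
  have hsub := S.rect_two_subset hb
  have ha := S.ha0
  have hΔp : 0 < Δ ^ (4 - γ) := rpow_pos_of_pos hΔ0 _
  have x1 : √S.ε ≤ √S.ε * (1 + Δ ^ (4 - γ)) :=
    le_mul_of_one_le_right (sqrt_nonneg _) (by linarith)
  have x0 : 0 ≤ √S.ε := sqrt_nonneg _
  have x2 : 0 ≤ Δ / S.a := by positivity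
  have x3 : 0 ≤ Δ ^ ((3:ℝ)/2) / √S.ε := by positivity
  rcases le_total 1 S.ε with hε | hε
  · have h1 := S.low_integral_le (Δ := Δ) hb hω_zero
      (g := fun x => K * (x.2 ^ (N + 1)
        * (4 * (truncateDeriv ⌈γ⌉₊ (S.dens x) * S.densR x) ^ 2))) (by fun_prop)
      (fun x hx => by
        have := S.radius_pos (hsub hx)
        have := c.K_nonneg
        positivity)
      fun x hx hlt => by
        have hr := S.radius_pos (hsub hx)
        have h2 := half_le_truncateDeriv (k := ⌈γ⌉₊) (S.dens_pos (hsub hx)).le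
          (by linarith [hΔ.2])
        have h3 : ω x.2 ^ 2 ≤ K := hc x.2 ▸ c.le x.2
        have h4 : S.densR x ^ 2 ≤ 4 * (truncateDeriv ⌈γ⌉₊ (S.dens x) * S.densR x) ^ 2 := by
          have h5 : 1 ≤ (2 * truncateDeriv ⌈γ⌉₊ (S.dens x)) ^ 2 :=
            one_le_pow₀ (by linarith)
          have h6 := mul_le_mul_of_nonneg_right h5 (sq_nonneg (S.densR x))
          linarith
        calc S.densR x ^ 2 * ω x.2 ^ 2 * x.2 ^ (N + 1)
            ≤ 4 * (truncateDeriv ⌈γ⌉₊ (S.dens x) * S.densR x) ^ 2 * K * x.2 ^ (N + 1) := by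
              gcongr
          _ = _ := by ring
    rw [integral_const_mul] at h1
    have h2 := mul_le_mul_of_nonneg_left (S.truncated_gradient_le hb hρ hε) c.K_nonneg
    refine (mul_le_mul_of_nonneg_left h1 S.hε.le).trans ?_
    calc S.ε * (K * ∫ x in rect T S.a 2, x.2 ^ (N + 1)
          * (4 * (truncateDeriv ⌈γ⌉₊ (S.dens x) * S.densR x) ^ 2))
        ≤ K * ViscousSetup.largeConst N γ T E₀ * √S.ε := by linarith
      _ ≤ (1 + |K * ViscousSetup.largeConst N γ T E₀| + |geometricConst N γ T E₀ K|
            + |shearConst N T E₀ K|) * √S.ε := by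
        gcongr
        linarith [le_abs_self (K * ViscousSetup.largeConst N γ T E₀),
          abs_nonneg (geometricConst N γ T E₀ K), abs_nonneg (shearConst N T E₀ K)]
      _ ≤ _ := by
        gcongr
        linarith
  · have h1 := S.low_integral_le (Δ := Δ) hb hω_zero (g := S.lowDissipation c Δ)
      ((S.continuousOn_lowDissipation c hΔ0).mono hsub)
      (fun x hx => mul_nonneg (pow_nonneg (S.radius_pos (hsub hx)).le _)
        (mul_nonneg (mul_nonneg (lowPotentialDeriv₂_nonneg hΔ0 (S.dens_pos (hsub hx)))
          (sq_nonneg _)) (c.nonneg _)))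
      fun x hx hlt => by
        have hr := S.radius_pos (hsub hx)
        have h2 := one_le_lowPotentialDeriv₂ hΔ0 (S.dens_pos (hsub hx)) hlt.le
        unfold ViscousSetup.lowDissipation
        rw [hc, mul_comm, mul_assoc (lowPotentialDeriv₂ Δ _)]
        exact mul_le_mul_of_nonneg_left (le_mul_of_one_le_left (by positivity) h2) (by positivity)
    refine (mul_le_mul_of_nonneg_left h1 S.hε.le).trans
      ((S.integral_lowDissipation_le c hb hρ hε hΔ0).trans ?_)
    have y1 := le_abs_self (geometricConst N γ T E₀ K)
    have y2 := le_abs_self (shearConst N T E₀ K)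
    have y3 := abs_nonneg (geometricConst N γ T E₀ K)
    have y4 := abs_nonneg (shearConst N T E₀ K)
    have y5 := abs_nonneg (K * ViscousSetup.largeConst N γ T E₀)
    rw [add_assoc (√S.ε * _), mul_add _ (√S.ε * _)]
    refine le_trans ?_ (le_add_of_nonneg_left (mul_nonneg (by positivity) (by linarith)))
    rw [mul_add]
    gcongr <;> linarith
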